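/- Let M : ℝ² → ℝ be smooth with all partial derivatives up to order 9 square-integrable on ℝ², let Ω := {x∈ℝ³ : x₁ > M(x₂,x₃)}, let ρ̄, μ̂, p̂ > 0 be constants, and let k ∈ {0,1,2,3,4}. Then there exists a constant C₀ > 0 (depending on Ω) such that the following holds: whenever u : closure(Ω) → ℝ³ is of class C^{k+2} and p : closure(Ω) → ℝ is of class C^{k+1}, with ∫_Ω|∇^j u|² dx < ∞ for 0 ≤ j ≤ k+2 and ∫_Ω|∇^j p|² dx < ∞ for 0 ≤ j ≤ k+1, and h := ρ̄ div u satisfies ‖h‖_{H^{k+1}(Ω)} < ∞, and g := −μ̂Δu + p̂∇p satisfies ‖g‖_{H^{k}(Ω)} < ∞, and u = 0 on ∂Ω and u(x) → 0 as |x| → ∞, then ∫_Ω |∇^{k+2}u|² dx + ∫_Ω |∇^{k+1}p|² dx ≤ C₀ ( ‖h‖²_{H^{k+1}(Ω)} + ‖g‖²_{H^{k}(Ω)} + ∫_Ω |∇u|² dx ). -/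

import Mathlib

/- STATEMENT 9: Cattabriga-type estimate for the Stokes system
ρ̄ div u = h, −μ̂Δu + p̂∇p = g in the perturbed half-space Ω, with no-slip
boundary condition and decay at infinity. -/

noncomputable section

open MeasureTheory Real Set Filter

abbrev E3 : Type := EuclideanSpace ℝ (Fin 3)
abbrev E2 : Type := EuclideanSpace ℝ (Fin 2)

/-- Projection on the tangential variables `x' = (x₂, x₃)`. -/
def proj2 (x : E3) : E2 := (WithLp.equiv 2 (Fin 2 → ℝ)).symm ![x 1, x 2]

/-- The perturbed half-space `Ω = {x : x₁ > M(x₂,x₃)}`. -/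
def Omg (M : E2 → ℝ) : Set E3 := {x : E3 | M (proj2 x) < x 0}

/-- The boundary point `(M(x'), x')` of `∂Ω` over `x' ∈ ℝ²`. -/
def gph (M : E2 → ℝ) (x' : E2) : E3 := (WithLp.equiv 2 (Fin 3 → ℝ)).symm ![M x', x' 0, x' 1]

/-- The vector in `ℝ³` with the given coordinates. -/
def vecE3 (v : Fin 3 → ℝ) : E3 := (WithLp.equiv 2 (Fin 3 → ℝ)).symm v

/-- Partial derivative `∂ᵢf`. -/
def pd (i : Fin 3) (f : E3 → ℝ) (x : E3) : ℝ := fderiv ℝ f x (EuclideanSpace.single i 1)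

/-- Divergence `div u = ∑ᵢ ∂ᵢuᵢ`. -/
def vdiv (u : E3 → E3) (x : E3) : ℝ := ∑ i, pd i (fun y => u y i) x

/-- Gradient `∇f`. -/
def grad (f : E3 → ℝ) (x : E3) : E3 := vecE3 fun i => pd i f x

/-- Componentwise Laplacian `Δu`. -/
def vlap (u : E3 → E3) (x : E3) : E3 := vecE3 fun i => ∑ j, pd j (pd j fun y => u y i) x

section

/-! ## Flat half-space calculus -/

/-- closed half space -/
def Hc : Set E3 := {y : E3 | 0 ≤ y 0}

/-- basis vectors -/
def ee (i : Fin 3) : E3 := EuclideanSpace.single i 1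

/-- partial derivative on the closed half space, extended by zero -/
def dd (i : Fin 3) (f : E3 → ℝ) : E3 → ℝ := Hc.indicator fun y => fderivWithin ℝ f Hc y (ee i)

lemma cont_coord (i : Fin 3) : Continuous fun y : E3 => y i := by fun_prop

lemma isClosed_Hc : IsClosed Hc := isClosed_le continuous_const (cont_coord 0)

lemma isOpen_H : IsOpen {y : E3 | 0 < y 0} := isOpen_lt continuous_const (cont_coord 0)

lemma H_subset_Hc : {y : E3 | 0 < y 0} ⊆ Hc := fun y (hy : 0 < y 0) => hy.le

lemma Hc_mem_nhds {y : E3} (hy : 0 < y 0) : Hc ∈ nhds y :=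
  mem_of_superset (isOpen_H.mem_nhds hy) H_subset_Hc

lemma convex_Hc : Convex ℝ Hc := by
  intro x hx y hy a b ha hb hab
  have hx' : 0 ≤ x 0 := hx
  have hy' : 0 ≤ y 0 := hy
  change 0 ≤ (a • x + b • y) 0
  simp only [PiLp.add_apply, PiLp.smul_apply, smul_eq_mul]
  positivity

lemma ee_zero_zero : (ee 0) 0 = 1 := by simp [ee]
lemma ee_zero_of_ne {j : Fin 3} (hj : j ≠ 0) : (ee j) 0 = 0 := by simp [ee, hj.symm]

lemma H_subset_interior : {y : E3 | 0 < y 0} ⊆ interior Hc :=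
  interior_maximal H_subset_Hc isOpen_H

lemma uniq_Hc : UniqueDiffOn ℝ Hc :=
  uniqueDiffOn_convex convex_Hc ⟨ee 0, H_subset_interior (by simp [ee])⟩

lemma Hc_subset_closure : Hc ⊆ closure {y : E3 | 0 < y 0} := by
  intro y hy
  have h0 : 0 ≤ y 0 := hy
  have : Tendsto (fun t : ℝ => y + t • ee 0) (nhdsWithin 0 (Ioi 0)) (nhds (y + (0:ℝ) • ee 0)) := by
    apply Tendsto.mono_left _ nhdsWithin_le_nhds
    exact (by fun_prop : Continuous fun t : ℝ => y + t • ee 0).tendsto 0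
  rw [zero_smul, add_zero] at this
  refine mem_closure_of_tendsto this ?_
  filter_upwards [self_mem_nhdsWithin] with t ht
  have ht' : 0 < t := ht
  simp [ee]
  linarith

lemma Hc_subset_closure_interior : Hc ⊆ closure (interior Hc) :=
  Hc_subset_closure.trans (closure_mono H_subset_interior)

/-- vanishing outside -/
def ZO (f : E3 → ℝ) : Prop := ∀ y, y ∉ Hc → f y = 0

lemma dd_apply {i : Fin 3} {f : E3 → ℝ} {y : E3} (hy : y ∈ Hc) :
    dd i f y = fderivWithin ℝ f Hc y (ee i) := by simp [dd, hy]

lemma dd_out {i : Fin 3} {f : E3 → ℝ} : ZO (dd i f) := fun y hy => by simp [dd, hy]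

lemma ZO.ext {f g : E3 → ℝ} (hf : ZO f) (hg : ZO g) (h : ∀ y ∈ Hc, f y = g y) : f = g := by
  funext y
  by_cases hy : y ∈ Hc
  · exact h y hy
  · rw [hf y hy, hg y hy]

lemma dd_interior {i : Fin 3} {f : E3 → ℝ} {y : E3} (hy : 0 < y 0) :
    dd i f y = fderiv ℝ f y (ee i) := by
  rw [dd_apply hy.le, fderivWithin_of_mem_nhds (Hc_mem_nhds hy)]

lemma ContDiffOn.dd {m : ℕ} {f : E3 → ℝ} (hf : ContDiffOn ℝ (m + 1 : ℕ) f Hc) (i : Fin 3) :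
    ContDiffOn ℝ m (dd i f) Hc := by
  have h1 : ContDiffOn ℝ m (fun y => fderivWithin ℝ f Hc y (ee i)) Hc := by
    have := hf.fderivWithin uniq_Hc (m := m) (by norm_cast)
    exact this.clm_apply contDiffOn_const
  exact h1.congr fun y hy => dd_apply hy

lemma dd_add {i : Fin 3} {f g : E3 → ℝ} (hf : DifferentiableOn ℝ f Hc)
    (hg : DifferentiableOn ℝ g Hc) : dd i (f + g) = dd i f + dd i g := by
  funext y
  by_cases hy : y ∈ Hc
  · simp only [Pi.add_apply, dd_apply hy]
    rw [fderivWithin_add (uniq_Hc y hy) (hf y hy) (hg y hy)]; rfl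
  · simp [dd, hy]

lemma dd_smul {i : Fin 3} {f : E3 → ℝ} (a : ℝ) (hf : DifferentiableOn ℝ f Hc) :
    dd i (a • f) = a • dd i f := by
  funext y
  by_cases hy : y ∈ Hc
  · simp only [Pi.smul_apply, dd_apply hy]
    rw [fderivWithin_const_smul (uniq_Hc y hy) (hf y hy)]; rfl
  · simp [dd, hy]

lemma pd_def (i : Fin 3) (c : E3 → ℝ) (y : E3) : pd i c y = fderiv ℝ c y (ee i) := rfl

lemma dd_mul {i : Fin 3} {c f : E3 → ℝ} (hc : Differentiable ℝ c)
    (hf : DifferentiableOn ℝ f Hc) (h0 : ZO f) : dd i (c * f) = pd i c * f + c * dd i f := by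
  funext y
  by_cases hy : y ∈ Hc
  · simp only [Pi.add_apply, Pi.mul_apply, dd_apply hy, pd_def]
    rw [fderivWithin_mul (uniq_Hc y hy) (hc y).differentiableWithinAt (hf y hy),
      fderivWithin_eq_fderiv (uniq_Hc y hy) (hc y)]
    simp; ring
  · simp [dd, hy, h0 y hy]

lemma dd_comm {f : E3 → ℝ} (hf : ContDiffOn ℝ (2 : ℕ) f Hc) (i j : Fin 3) :
    dd i (dd j f) = dd j (dd i f) := by
  have key : ∀ i j : Fin 3, ∀ y ∈ Hc, dd i (dd j f) y =
      fderivWithin ℝ (fderivWithin ℝ f Hc) Hc y (ee i) (ee j) := by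
    intro i j y hy
    rw [dd_apply hy]
    have h1 : fderivWithin ℝ (dd j f) Hc y =
        fderivWithin ℝ (fun z => fderivWithin ℝ f Hc z (ee j)) Hc y :=
      fderivWithin_congr (fun z hz => dd_apply hz) (dd_apply hy)
    have h2 : DifferentiableWithinAt ℝ (fderivWithin ℝ f Hc) Hc y :=
      ((hf.fderivWithin uniq_Hc (m := 1) (by norm_num)).differentiableOn (by norm_num)) y hy
    rw [h1, fderivWithin_clm_apply (uniq_Hc y hy) h2 (differentiableWithinAt_const _)]
    simp
  refine ZO.ext dd_out dd_out fun y hy => ?_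
  rw [key i j y hy, key j i y hy]
  have := (hf y hy).isSymmSndFDerivWithinAt (by simp) uniq_Hc
    (Hc_subset_closure_interior hy) hy
  exact this.eq _ _

/-! ### Coefficients -/

def Bd : ℕ → (E3 → ℝ) → Prop
  | 0, c => ∃ K, ∀ y, |c y| ≤ K
  | m + 1, c => (∃ K, ∀ y, |c y| ≤ K) ∧ ∀ i, Bd m (pd i c)

/-- smooth coefficient with bounded derivatives up to order `m` -/
def BC (m : ℕ) (c : E3 → ℝ) : Prop := ContDiff ℝ (⊤ : ℕ∞) c ∧ Bd m c

lemma smooth_pd {c : E3 → ℝ} (hc : ContDiff ℝ (⊤ : ℕ∞) c) (i : Fin 3) :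
    ContDiff ℝ (⊤ : ℕ∞) (pd i c) := by
  have := hc.fderiv_right (m := (⊤ : ℕ∞)) (by norm_cast)
  exact this.clm_apply contDiff_const

lemma smooth_diff {c : E3 → ℝ} (hc : ContDiff ℝ (⊤ : ℕ∞) c) : Differentiable ℝ c :=
  hc.differentiable (by norm_num)

lemma Bd.bound {m : ℕ} {c : E3 → ℝ} (h : Bd m c) : ∃ K, 0 ≤ K ∧ ∀ y, |c y| ≤ K := by
  have : ∃ K, ∀ y, |c y| ≤ K := by cases m with
    | zero => exact h
    | succ m => exact h.1
  obtain ⟨K, hK⟩ := this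
  exact ⟨K, (abs_nonneg _).trans (hK 0), hK⟩

lemma BC.bound {m : ℕ} {c : E3 → ℝ} (h : BC m c) : ∃ K, 0 ≤ K ∧ ∀ y, |c y| ≤ K := h.2.bound

lemma BC.diff {m : ℕ} {c : E3 → ℝ} (h : BC m c) : Differentiable ℝ c := smooth_diff h.1

lemma BC.pd {m : ℕ} {c : E3 → ℝ} (h : BC (m + 1) c) (i : Fin 3) : BC m (pd i c) :=
  ⟨smooth_pd h.1 i, h.2.2 i⟩

lemma bc_succ {m : ℕ} {c : E3 → ℝ} (hc : ContDiff ℝ (⊤ : ℕ∞) c) {K : ℝ}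
    (h0 : ∀ y, |c y| ≤ K) (h : ∀ i, BC m (_root_.pd i c)) : BC (m + 1) c :=
  ⟨hc, ⟨K, h0⟩, fun i => (h i).2⟩

lemma BC.pred {m : ℕ} : ∀ {c : E3 → ℝ}, BC (m + 1) c → BC m c := by
  induction m with
  | zero => intro c h; exact ⟨h.1, h.2.1⟩
  | succ m ih =>
    intro c h
    obtain ⟨K, -, hK⟩ := h.bound
    exact bc_succ h.1 hK fun i => ih (h.pd i)

lemma BC.mono {m n : ℕ} (hmn : m ≤ n) {c : E3 → ℝ} (h : BC n c) : BC m c := by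
  induction n, hmn using Nat.le_induction with
  | base => exact h
  | succ n _ ih => exact ih h.pred

lemma pd_add {i : Fin 3} {f g : E3 → ℝ} (hf : Differentiable ℝ f) (hg : Differentiable ℝ g) :
    pd i (f + g) = pd i f + pd i g := by
  funext y; simp only [pd_def, Pi.add_apply, fderiv_add (hf y) (hg y)]; rfl

lemma pd_smul {i : Fin 3} {f : E3 → ℝ} (a : ℝ) (hf : Differentiable ℝ f) :
    pd i (a • f) = a • pd i f := by
  funext y; simp only [pd_def, Pi.smul_apply, fderiv_const_smul (hf y)]; rfl

lemma pd_mul {i : Fin 3} {f g : E3 → ℝ} (hf : Differentiable ℝ f) (hg : Differentiable ℝ g) :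
    pd i (f * g) = pd i f * g + f * pd i g := by
  funext y; simp only [pd_def, Pi.add_apply, Pi.mul_apply, fderiv_mul (hf y) (hg y)]
  simp; ring

lemma pd_const {i : Fin 3} (a : ℝ) : pd i (fun _ => a) = fun _ => 0 := by
  funext y; simp [pd_def]

lemma BC.const {m : ℕ} : ∀ (a : ℝ), BC m (fun _ => a) := by
  induction m with
  | zero => intro a; exact ⟨contDiff_const, |a|, fun _ => le_rfl⟩
  | succ m ih =>
    intro a
    refine bc_succ contDiff_const (K := |a|) (fun _ => le_rfl) fun i => ?_
    rw [pd_const]; exact ih 0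

lemma BC.add {m : ℕ} : ∀ {c d : E3 → ℝ}, BC m c → BC m d → BC m (c + d) := by
  induction m with
  | zero =>
    intro c d hc hd
    obtain ⟨K, -, hK⟩ := hc.bound
    obtain ⟨L, -, hL⟩ := hd.bound
    exact ⟨hc.1.add hd.1, K + L, fun y => (abs_add_le _ _).trans (add_le_add (hK y) (hL y))⟩
  | succ m ih =>
    intro c d hc hd
    obtain ⟨K, -, hK⟩ := hc.bound
    obtain ⟨L, -, hL⟩ := hd.bound
    refine bc_succ (hc.1.add hd.1) (K := K + L)
      (fun y => (abs_add_le _ _).trans (add_le_add (hK y) (hL y))) fun i => ?_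
    rw [pd_add hc.diff hd.diff]
    exact ih (hc.pd i) (hd.pd i)

lemma BC.mul {m : ℕ} : ∀ {c d : E3 → ℝ}, BC m c → BC m d → BC m (c * d) := by
  have hb : ∀ {m} {c d : E3 → ℝ}, BC m c → BC m d → ∃ K, ∀ y, |(c * d) y| ≤ K := by
    intro m c d hc hd
    obtain ⟨K, hK0, hK⟩ := hc.bound
    obtain ⟨L, -, hL⟩ := hd.bound
    refine ⟨K * L, fun y => ?_⟩
    rw [Pi.mul_apply, abs_mul]
    exact mul_le_mul (hK y) (hL y) (abs_nonneg _) hK0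
  induction m with
  | zero =>
    intro c d hc hd
    exact ⟨hc.1.mul hd.1, hb hc hd⟩
  | succ m ih =>
    intro c d hc hd
    obtain ⟨K, hK⟩ := hb hc hd
    refine bc_succ (hc.1.mul hd.1) hK fun i => ?_
    rw [pd_mul hc.diff hd.diff]
    exact (ih (hc.pd i) hd.pred).add (ih hc.pred (hd.pd i))

lemma BC.smul {m : ℕ} {c : E3 → ℝ} (a : ℝ) (h : BC m c) : BC m (a • c) := by
  have := (BC.const (m := m) a).mul h
  exact this

lemma BC.neg {m : ℕ} {c : E3 → ℝ} (h : BC m c) : BC m (-c) := by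
  have := h.smul (-1)
  rwa [neg_one_smul] at this

lemma BC.inv {m : ℕ} {c : E3 → ℝ} (hc : BC m c) (h1 : ∀ y, 1 ≤ c y) : BC m (fun y => (c y)⁻¹) := by
  have hne : ∀ y, c y ≠ 0 := fun y => by linarith [h1 y]
  have hb : ∀ y, |(c y)⁻¹| ≤ 1 := fun y => by
    rw [abs_inv, abs_of_nonneg (by linarith [h1 y])]
    exact inv_le_one_of_one_le₀ (h1 y)
  have hs : ContDiff ℝ (⊤ : ℕ∞) (fun y => (c y)⁻¹) := hc.1.inv hne
  induction m with
  | zero => exact ⟨hs, 1, hb⟩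
  | succ m ih =>
    refine bc_succ hs hb fun i => ?_
    have h2 : _root_.pd i (fun y => (c y)⁻¹) =
        -(_root_.pd i c * ((fun y => (c y)⁻¹) * (fun y => (c y)⁻¹))) := by
      funext y
      have hd : DifferentiableAt ℝ (fun y => (c y)⁻¹) y := smooth_diff hs y
      have h3 : _root_.pd i ((fun y => (c y)⁻¹) * c) y = 0 := by
        have : ((fun y => (c y)⁻¹) * c) = fun _ => 1 := by
          funext y; simp [hne y]
        rw [this, pd_const]
      rw [pd_mul (smooth_diff hs) hc.diff] at h3
      simp only [Pi.add_apply, Pi.mul_apply, Pi.neg_apply] at h3 ⊢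
      have := hne y
      field_simp at h3 ⊢
      linarith
    rw [h2]
    exact ((hc.pd i).mul ((ih hc.pred).mul (ih hc.pred))).neg

end

section

/-! ### The classes `HS m` and the norms `S m` -/

def L2r : ℕ → (E3 → ℝ) → Prop
  | 0, f => MemLp f 2 volume
  | m + 1, f => MemLp f 2 volume ∧ ∀ i, L2r m (dd i f)

structure HS (m : ℕ) (f : E3 → ℝ) : Prop where
  cd : ContDiffOn ℝ m f Hc
  zo : ZO f
  l2r : L2r m f

def SS : ℕ → (E3 → ℝ) → ℝ
  | 0, f => ∫ y, f y ^ 2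
  | m + 1, f => (∫ y, f y ^ 2) + ∑ i, SS m (dd i f)

lemma SS_zero (f : E3 → ℝ) : SS 0 f = ∫ y, f y ^ 2 := rfl
lemma SS_succ (m : ℕ) (f : E3 → ℝ) : SS (m + 1) f = SS 0 f + ∑ i, SS m (dd i f) := rfl

lemma SS_nonneg (m : ℕ) : ∀ f, 0 ≤ SS m f := by
  induction m with
  | zero => intro f; exact integral_nonneg fun y => sq_nonneg _
  | succ m ih =>
    intro f
    rw [SS_succ]
    exact add_nonneg (integral_nonneg fun y => sq_nonneg _) (Finset.sum_nonneg fun i _ => ih _)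

lemma SS_dd_le (m : ℕ) (f : E3 → ℝ) (i : Fin 3) : SS m (dd i f) ≤ SS (m + 1) f := by
  rw [SS_succ]
  have h1 := Finset.single_le_sum (f := fun i => SS m (dd i f)) (fun i _ => SS_nonneg m _)
    (Finset.mem_univ i)
  have h2 := SS_nonneg 0 f
  linarith

lemma SS_succ_mono (m : ℕ) : ∀ f, SS m f ≤ SS (m + 1) f := by
  induction m with
  | zero =>
    intro f
    rw [SS_succ]
    linarith [Finset.sum_nonneg (s := Finset.univ) fun i (_ : i ∈ Finset.univ) => SS_nonneg 0 (dd i f)]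
  | succ m ih =>
    intro f
    rw [SS_succ, SS_succ (m + 1)]
    have := Finset.sum_le_sum fun i (_ : i ∈ Finset.univ) => ih (dd i f)
    linarith

lemma SS_mono {m n : ℕ} (h : m ≤ n) (f : E3 → ℝ) : SS m f ≤ SS n f := by
  induction n, h using Nat.le_induction with
  | base => exact le_rfl
  | succ n _ ih => exact ih.trans (SS_succ_mono n f)

lemma L2r.mem {m : ℕ} {f : E3 → ℝ} (h : L2r m f) : MemLp f 2 volume := by
  cases m with
  | zero => exact h
  | succ m => exact h.1

lemma L2r.pred {m : ℕ} : ∀ {f : E3 → ℝ}, L2r (m + 1) f → L2r m f := by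
  induction m with
  | zero => intro f h; exact h.1
  | succ m ih => intro f h; exact ⟨h.1, fun i => ih (h.2 i)⟩

namespace HS

variable {m : ℕ} {f g : E3 → ℝ}

lemma mem (h : HS m f) : MemLp f 2 volume := h.l2r.mem

lemma diff (h : HS (m + 1) f) : DifferentiableOn ℝ f Hc :=
  h.cd.differentiableOn (by norm_cast)

lemma cont (h : HS m f) : ContinuousOn f Hc := h.cd.continuousOn

lemma ddd (h : HS (m + 1) f) (i : Fin 3) : HS m (dd i f) := ⟨h.cd.dd i, dd_out, h.l2r.2 i⟩

lemma pred (h : HS (m + 1) f) : HS m f := ⟨h.cd.of_le (by norm_cast; omega), h.zo, h.l2r.pred⟩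

lemma mono {n : ℕ} (hmn : m ≤ n) (h : HS n f) : HS m f := by
  induction n, hmn using Nat.le_induction with
  | base => exact h
  | succ n _ ih => exact ih h.pred

lemma mk_succ (h1 : ContDiffOn ℝ (m + 1 : ℕ) f Hc) (h2 : ZO f) (h3 : MemLp f 2 volume)
    (h4 : ∀ i, HS m (dd i f)) : HS (m + 1) f := ⟨h1, h2, h3, fun i => (h4 i).l2r⟩

lemma comm (h : HS (m + 2) f) (i j : Fin 3) : dd i (dd j f) = dd j (dd i f) :=
  dd_comm (h.cd.of_le (by norm_cast; omega)) i j

end HS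

lemma ZO.add {f g : E3 → ℝ} (hf : ZO f) (hg : ZO g) : ZO (f + g) := fun y hy => by
  simp [hf y hy, hg y hy]

lemma ZO.mul {f : E3 → ℝ} (c : E3 → ℝ) (hf : ZO f) : ZO (c * f) := fun y hy => by
  simp [hf y hy]

lemma HS.add {m : ℕ} : ∀ {f g : E3 → ℝ}, HS m f → HS m g → HS m (f + g) := by
  induction m with
  | zero => intro f g hf hg; exact ⟨hf.cd.add hg.cd, hf.zo.add hg.zo, hf.mem.add hg.mem⟩
  | succ m ih =>
    intro f g hf hg
    refine HS.mk_succ (hf.cd.add hg.cd) (hf.zo.add hg.zo) (hf.mem.add hg.mem) fun i => ?_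
    rw [dd_add hf.diff hg.diff]
    exact ih (hf.ddd i) (hg.ddd i)

lemma memLp_coef_mul {c f : E3 → ℝ} {m : ℕ} (hc : BC m c) (hf : MemLp f 2 volume) :
    MemLp (c * f) 2 volume := by
  obtain ⟨K, hK0, hK⟩ := hc.bound
  refine MemLp.of_le_mul (c := K) hf (hc.1.continuous.aestronglyMeasurable.mul hf.1) ?_
  refine Eventually.of_forall fun y => ?_
  rw [Pi.mul_apply, norm_mul]
  exact mul_le_mul_of_nonneg_right (hK y) (norm_nonneg _)

lemma HS.coef {m : ℕ} : ∀ {c f : E3 → ℝ}, BC m c → HS m f → HS m (c * f) := by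
  induction m with
  | zero =>
    intro c f hc hf
    exact ⟨(hc.1.of_le (by norm_cast)).contDiffOn.mul hf.cd, hf.zo.mul c,
      memLp_coef_mul hc hf.mem⟩
  | succ m ih =>
    intro c f hc hf
    refine HS.mk_succ ((hc.1.of_le (by norm_cast; exact le_top)).contDiffOn.mul hf.cd)
      (hf.zo.mul c) (memLp_coef_mul hc hf.mem) fun i => ?_
    rw [dd_mul hc.diff hf.diff hf.zo]
    exact (ih (hc.pd i) hf.pred).add (ih hc.pred (hf.ddd i))

lemma HS.smul {m : ℕ} {f : E3 → ℝ} (a : ℝ) (hf : HS m f) : HS m (a • f) :=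
  HS.coef (BC.const a) hf

lemma HS.sqint {m : ℕ} {f : E3 → ℝ} (hf : HS m f) : Integrable (fun y => f y ^ 2) volume :=
  hf.mem.integrable_sq

lemma SS_add_le {m : ℕ} : ∀ {f g : E3 → ℝ}, HS m f → HS m g →
    SS m (f + g) ≤ 2 * (SS m f + SS m g) := by
  have h0 : ∀ {m} {f g : E3 → ℝ}, HS m f → HS m g → SS 0 (f + g) ≤ 2 * (SS 0 f + SS 0 g) := by
    intro m f g hf hg
    simp only [SS_zero]
    rw [← integral_add hf.sqint hg.sqint, ← integral_const_mul]
    refine integral_mono (hf.add hg).sqint ((hf.sqint.add hg.sqint).const_mul 2) fun y => ?_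
    simp only [Pi.add_apply]
    nlinarith [sq_nonneg (f y - g y)]
  induction m with
  | zero => intro f g hf hg; exact h0 hf hg
  | succ m ih =>
    intro f g hf hg
    simp only [SS_succ]
    have h1 := h0 hf hg
    have h2 : ∑ i, SS m (dd i (f + g)) ≤ ∑ i, 2 * (SS m (dd i f) + SS m (dd i g)) := by
      refine Finset.sum_le_sum fun i _ => ?_
      rw [dd_add hf.diff hg.diff]
      exact ih (hf.ddd i) (hg.ddd i)
    rw [← Finset.mul_sum, Finset.sum_add_distrib] at h2
    linarith

lemma SS_coef_le {m : ℕ} : ∀ {c : E3 → ℝ}, BC m c → ∃ C, 0 ≤ C ∧ ∀ f, HS m f →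
    SS m (c * f) ≤ C * SS m f := by
  have h0 : ∀ {m} {c : E3 → ℝ}, BC m c → ∃ C, 0 ≤ C ∧ ∀ f, HS m f →
      SS 0 (c * f) ≤ C * SS 0 f := by
    intro m c hc
    obtain ⟨K, hK0, hK⟩ := hc.bound
    refine ⟨K ^ 2, sq_nonneg _, fun f hf => ?_⟩
    simp only [SS_zero]
    rw [← integral_const_mul]
    refine integral_mono (HS.coef hc hf).sqint (hf.sqint.const_mul _) fun y => ?_
    simp only [Pi.mul_apply, mul_pow]
    refine mul_le_mul_of_nonneg_right ?_ (sq_nonneg _)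
    rw [← sq_abs]
    exact pow_le_pow_left₀ (abs_nonneg _) (hK y) 2
  induction m with
  | zero => intro c hc; exact h0 hc
  | succ m ih =>
    intro c hc
    obtain ⟨C0, hC0, h0⟩ := h0 hc
    obtain ⟨C1, hC1, h1⟩ := ih hc.pred
    choose C2 hC2 h2 using fun i => ih (hc.pd i)
    refine ⟨C0 + 2 * C1 + 2 * ∑ i, C2 i, by
      have := Finset.sum_nonneg fun i (_ : i ∈ Finset.univ) => hC2 i
      positivity, fun f hf => ?_⟩
    rw [SS_succ]
    have e1 := h0 f hf
    have e2 : ∑ i, SS m (dd i (c * f)) ≤ ∑ i, (2 * (C2 i * SS m f) + 2 * C1 * SS m (dd i f)) := by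
      refine Finset.sum_le_sum fun i _ => ?_
      rw [dd_mul hc.diff hf.diff hf.zo]
      have := SS_add_le (HS.coef (hc.pd i) hf.pred) (HS.coef hc.pred (hf.ddd i))
      have h3 := h2 i f hf.pred
      have h4 := h1 _ (hf.ddd i)
      linarith
    rw [Finset.sum_add_distrib, ← Finset.mul_sum, ← Finset.mul_sum, ← Finset.sum_mul] at e2
    have e3 : SS m f ≤ SS (m + 1) f := SS_succ_mono m f
    have e4 : SS 0 f ≤ SS (m + 1) f := SS_mono (Nat.zero_le _) f
    have e5 : ∑ i, SS m (dd i f) ≤ SS (m + 1) f := by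
      rw [SS_succ]; linarith [SS_nonneg 0 f]
    have e6 := Finset.sum_nonneg fun i (_ : i ∈ Finset.univ) => hC2 i
    have e7 := mul_le_mul_of_nonneg_left e3 e6
    have e8 := mul_le_mul_of_nonneg_left e4 hC0
    have e9 := mul_le_mul_of_nonneg_left e5 hC1
    have e10 := SS_nonneg (m + 1) f
    nlinarith

/-! ### Uniform bounds for families -/

def BD {α : Type*} (P : α → Prop) (R : α → ℝ) (m : ℕ) (F : α → E3 → ℝ) : Prop :=
  ∃ C, 0 ≤ C ∧ ∀ d, P d → HS m (F d) ∧ SS m (F d) ≤ C * R d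

namespace BD

variable {α : Type*} {P : α → Prop} {R : α → ℝ} {m : ℕ} {F G : α → E3 → ℝ}

lemma add (hF : BD P R m F) (hG : BD P R m G) : BD P R m (fun d => F d + G d) := by
  obtain ⟨C, hC, h⟩ := hF
  obtain ⟨D, hD, k⟩ := hG
  refine ⟨2 * (C + D), by positivity, fun d hd => ⟨(h d hd).1.add (k d hd).1, ?_⟩⟩
  have := SS_add_le (h d hd).1 (k d hd).1
  have h1 := (h d hd).2
  have h2 := (k d hd).2
  linarith

lemma coef {c : E3 → ℝ} (hc : BC m c) (hF : BD P R m F) : BD P R m (fun d => c * F d) := by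
  obtain ⟨C, hC, h⟩ := hF
  obtain ⟨D, hD, k⟩ := SS_coef_le hc
  refine ⟨D * C, by positivity, fun d hd => ⟨HS.coef hc (h d hd).1, ?_⟩⟩
  have h1 := k _ (h d hd).1
  have h2 := mul_le_mul_of_nonneg_left (h d hd).2 hD
  linarith

lemma smul (a : ℝ) (hF : BD P R m F) : BD P R m (fun d => a • F d) :=
  coef (BC.const a) hF

lemma neg (hF : BD P R m F) : BD P R m (fun d => - F d) := by
  have := hF.smul (-1)
  simpa using this

lemma sub (hF : BD P R m F) (hG : BD P R m G) : BD P R m (fun d => F d - G d) := by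
  simpa [sub_eq_add_neg] using hF.add hG.neg

lemma sum3 {F : Fin 3 → α → E3 → ℝ} (h : ∀ i, BD P R m (F i)) :
    BD P R m (fun d => ∑ i, F i d) := by
  have := ((h 0).add (h 1)).add (h 2)
  simpa [Fin.sum_univ_three] using this

lemma congr (hF : BD P R m F) (h : ∀ d, P d → G d = F d) : BD P R m G := by
  obtain ⟨C, hC, k⟩ := hF
  exact ⟨C, hC, fun d hd => by rw [h d hd]; exact k d hd⟩

lemma trans {R' : α → ℝ} (hF : BD P R m F) (h : ∃ C, 0 ≤ C ∧ ∀ d, P d → R d ≤ C * R' d) :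
    BD P R' m F := by
  obtain ⟨C, hC, k⟩ := hF
  obtain ⟨D, hD, l⟩ := h
  refine ⟨C * D, by positivity, fun d hd => ⟨(k d hd).1, (k d hd).2.trans ?_⟩⟩
  have := mul_le_mul_of_nonneg_left (l d hd) hC
  linarith

lemma ddd {i : Fin 3} (hF : BD P R (m + 1) F) : BD P R m (fun d => dd i (F d)) := by
  obtain ⟨C, hC, k⟩ := hF
  exact ⟨C, hC, fun d hd => ⟨(k d hd).1.ddd i, (SS_dd_le _ _ _).trans (k d hd).2⟩⟩

lemma mono {n : ℕ} (hmn : m ≤ n) (hF : BD P R n F) : BD P R m F := by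
  obtain ⟨C, hC, k⟩ := hF
  exact ⟨C, hC, fun d hd => ⟨(k d hd).1.mono hmn, (SS_mono hmn _).trans (k d hd).2⟩⟩

/-- building the next level -/
lemma succ (h0 : BD P R 0 F) (h1 : ∀ i, BD P R m (fun d => dd i (F d)))
    (hHS : ∀ d, P d → HS (m + 1) (F d)) : BD P R (m + 1) F := by
  obtain ⟨C, hC, k⟩ := h0
  choose D hD l using h1
  have hs := Finset.sum_nonneg fun i (_ : i ∈ Finset.univ) => hD i
  refine ⟨C + ∑ i, D i, by positivity, fun d hd => ⟨hHS d hd, ?_⟩⟩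
  rw [SS_succ, add_mul, Finset.sum_mul]
  exact add_le_add (k d hd).2 (Finset.sum_le_sum fun i _ => (l i d hd).2)

lemma of_le (h : ∀ d, P d → HS m (F d)) (h' : ∀ d, P d → SS m (F d) ≤ R d) : BD P R m F :=
  ⟨1, zero_le_one, fun d hd => ⟨h d hd, by rw [one_mul]; exact h' d hd⟩⟩

end BD

end

section

/-! ### The flattened Stokes operators -/

structure Co (m : Fin 3 → E3 → ℝ) : Prop where
  zero : m 0 = 0
  bc : ∀ i, BC 6 (m i)
  ind : ∀ i, pd 0 (m i) = 0

def DD (m : Fin 3 → E3 → ℝ) (i : Fin 3) (f : E3 → ℝ) : E3 → ℝ := dd i f - m i * dd 0 f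

abbrev Dat : Type := (Fin 3 → E3 → ℝ) × (E3 → ℝ)

def hhF (m : Fin 3 → E3 → ℝ) (d : Dat) : E3 → ℝ := ∑ i, DD m i (d.1 i)

def GF (μ ph : ℝ) (m : Fin 3 → E3 → ℝ) (i : Fin 3) (d : Dat) : E3 → ℝ :=
  -(μ • ∑ l, DD m l (DD m l (d.1 i))) + ph • DD m i d.2

def PP (k : ℕ) (d : Dat) : Prop :=
  (∀ i, HS (k + 2) (d.1 i)) ∧ HS (k + 1) d.2 ∧ ∀ i (y : E3), y 0 = 0 → d.1 i y = 0

def RR (μ ph : ℝ) (m : Fin 3 → E3 → ℝ) (k : ℕ) (d : Dat) : ℝ :=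
  SS (k + 1) (hhF m d) + (∑ i, SS k (GF μ ph m i d)) + ∑ i, ∑ a, SS 0 (dd a (d.1 i))

variable {m : Fin 3 → E3 → ℝ} {μ ph : ℝ}

lemma Co.bcn (hm : Co m) (i : Fin 3) {n : ℕ} (hn : n ≤ 6) : BC n (m i) := (hm.bc i).mono hn

lemma HS.neg {n : ℕ} {f : E3 → ℝ} (hf : HS n f) : HS n (-f) := by
  have := hf.smul (-1); rwa [neg_one_smul] at this

lemma HS.sub {n : ℕ} {f g : E3 → ℝ} (hf : HS n f) (hg : HS n g) : HS n (f - g) := by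
  rw [sub_eq_add_neg]; exact hf.add hg.neg

lemma HS.sum3 {n : ℕ} {f : Fin 3 → E3 → ℝ} (hf : ∀ i, HS n (f i)) : HS n (∑ i, f i) := by
  rw [Fin.sum_univ_three]; exact ((hf 0).add (hf 1)).add (hf 2)

lemma dd_sub {i : Fin 3} {f g : E3 → ℝ} (hf : DifferentiableOn ℝ f Hc)
    (hg : DifferentiableOn ℝ g Hc) : dd i (f - g) = dd i f - dd i g := by
  have h : f - g = f + (-1 : ℝ) • g := by rw [neg_one_smul, sub_eq_add_neg]
  rw [h, dd_add hf (hg.const_smul _), dd_smul _ hg, neg_one_smul, sub_eq_add_neg]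

lemma dd_neg {i : Fin 3} {f : E3 → ℝ} (hf : DifferentiableOn ℝ f Hc) : dd i (-f) = - dd i f := by
  rw [← neg_one_smul ℝ f, dd_smul _ hf, neg_one_smul]

lemma dd_sum3 {i : Fin 3} {f : Fin 3 → E3 → ℝ} (hf : ∀ l, DifferentiableOn ℝ (f l) Hc) :
    dd i (∑ l, f l) = ∑ l, dd i (f l) := by
  simp only [Fin.sum_univ_three]
  rw [dd_add ((hf 0).add (hf 1)) (hf 2), dd_add (hf 0) (hf 1)]

lemma HS.DD (hm : Co m) (i : Fin 3) {n : ℕ} (hn : n ≤ 6) {f : E3 → ℝ} (hf : HS (n + 1) f) :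
    HS n (DD m i f) := (hf.ddd i).sub (HS.coef (hm.bcn i hn) (hf.ddd 0))

lemma BD.DD {α : Type*} {P : α → Prop} {R : α → ℝ} {n : ℕ} {F : α → E3 → ℝ} (hm : Co m)
    (i : Fin 3) (hn : n ≤ 6) (h : BD P R (n + 1) F) : BD P R n (fun d => _root_.DD m i (F d)) :=
  h.ddd.sub (h.ddd.coef (hm.bcn i hn))

lemma PP.succ {k : ℕ} {d : Dat} (h : PP (k + 1) d) : PP k d :=
  ⟨fun i => (h.1 i).pred, h.2.1.pred, h.2.2⟩

lemma HS_hh (hm : Co m) {k : ℕ} (hk : k ≤ 4) {d : Dat} (h : PP k d) : HS (k + 1) (hhF m d) :=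
  HS.sum3 fun i => HS.DD hm i (by omega) (h.1 i)

lemma HS_G (hm : Co m) (i : Fin 3) {k : ℕ} (hk : k ≤ 4) {d : Dat} (h : PP k d) :
    HS k (GF μ ph m i d) :=
  ((HS.sum3 fun l => HS.DD hm l (by omega) (HS.DD hm l (by omega) (h.1 i))).smul μ).neg.add
    ((HS.DD hm i (by omega) h.2.1).smul ph)

lemma RR_terms (k : ℕ) (d : Dat) : 0 ≤ RR μ ph m k d ∧ SS (k + 1) (hhF m d) ≤ RR μ ph m k d ∧
    (∀ i, SS k (GF μ ph m i d) ≤ RR μ ph m k d) ∧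
    ∀ i a, SS 0 (dd a (d.1 i)) ≤ RR μ ph m k d := by
  have h1 := SS_nonneg (k + 1) (hhF m d)
  have h2 : 0 ≤ ∑ i, SS k (GF μ ph m i d) := Finset.sum_nonneg fun i _ => SS_nonneg _ _
  have h3' : ∀ i, 0 ≤ ∑ a, SS 0 (dd a (d.1 i)) := fun i => Finset.sum_nonneg fun a _ => SS_nonneg _ _
  have h3 : 0 ≤ ∑ i, ∑ a, SS 0 (dd a (d.1 i)) := Finset.sum_nonneg fun i _ => h3' i
  unfold RR
  refine ⟨by linarith, by linarith, fun i => ?_, fun i a => ?_⟩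
  · have := Finset.single_le_sum (f := fun i => SS k (GF μ ph m i d)) (fun i _ => SS_nonneg _ _)
      (Finset.mem_univ i)
    linarith
  · have e1 := Finset.single_le_sum (f := fun i => ∑ a, SS 0 (dd a (d.1 i))) (fun i _ => h3' i)
      (Finset.mem_univ i)
    have e2 := Finset.single_le_sum (f := fun a => SS 0 (dd a (d.1 i))) (fun i _ => SS_nonneg _ _)
      (Finset.mem_univ a)
    beta_reduce at e1 e2
    linarith

lemma RR_succ (k : ℕ) (d : Dat) : RR μ ph m k d ≤ RR μ ph m (k + 1) d := by
  unfold RR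
  have h1 := SS_succ_mono (k + 1) (hhF m d)
  have h2 := Finset.sum_le_sum fun i (_ : i ∈ Finset.univ) => SS_succ_mono k (GF μ ph m i d)
  linarith

lemma BD.hh (hm : Co m) {k : ℕ} (hk : k ≤ 4) :
    BD (PP k) (RR μ ph m k) (k + 1) (fun d => hhF m d) :=
  BD.of_le (fun _ h => HS_hh hm hk h) fun d _ => (RR_terms k d).2.1

lemma BD.G (hm : Co m) (i : Fin 3) {k : ℕ} (hk : k ≤ 4) :
    BD (PP k) (RR μ ph m k) k (fun d => GF μ ph m i d) :=
  BD.of_le (fun _ h => HS_G hm i hk h) fun d _ => (RR_terms k d).2.2.1 i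

lemma BD.v0 (i a : Fin 3) {k : ℕ} :
    BD (PP k) (RR μ ph m k) 0 (fun d => dd a (d.1 i)) :=
  BD.of_le (fun _ h => ((h.1 i).ddd a).mono (Nat.zero_le _)) fun d _ => (RR_terms k d).2.2.2 i a

/-! ### Algebra -/

lemma DD_DD (hm : Co m) {k : ℕ} {f : E3 → ℝ} (hf : HS (k + 2) f) (l : Fin 3) :
    DD m l (DD m l f) = dd l (dd l f) - pd l (m l) * dd 0 f - (2 : ℝ) • (m l * dd l (dd 0 f))
      + m l * (m l * dd 0 (dd 0 f)) := by
  have h1 := (hf.ddd l)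
  have h0 := (hf.ddd 0)
  have hc := (hm.bc l)
  have hD : ∀ i, dd i (DD m l f) = dd i (dd l f) - (pd i (m l) * dd 0 f + m l * dd i (dd 0 f)) := by
    intro i
    unfold DD
    rw [dd_sub h1.diff (hc.diff.differentiableOn.mul h0.diff), dd_mul hc.diff h0.diff h0.zo]
  rw [DD, hD, hD, hm.ind, hf.comm 0 l]
  funext y
  simp only [Pi.sub_apply, Pi.add_apply, Pi.mul_apply, Pi.smul_apply, Pi.zero_apply, smul_eq_mul]
  ring

lemma DD_add {l : Fin 3} {f g : E3 → ℝ} (hf : DifferentiableOn ℝ f Hc)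
    (hg : DifferentiableOn ℝ g Hc) : DD m l (f + g) = DD m l f + DD m l g := by
  unfold DD
  rw [dd_add hf hg, dd_add hf hg]; ring

lemma dd_DD (hm : Co m) {k : ℕ} {f : E3 → ℝ} (hf : HS (k + 2) f) (j l : Fin 3) :
    dd j (DD m l f) = DD m l (dd j f) - pd j (m l) * dd 0 f := by
  have h1 := (hf.ddd l)
  have h0 := (hf.ddd 0)
  have hc := (hm.bc l)
  unfold DD
  rw [dd_sub h1.diff (hc.diff.differentiableOn.mul h0.diff), dd_mul hc.diff h0.diff h0.zo,
    hf.comm j l, hf.comm j 0]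
  ring

lemma alg_lemma (hm : Co m) (hμ : 0 < μ) (hp : 0 < ph) {k : ℕ} (hk : k ≤ 4) {P : Dat → Prop}
    {R : Dat → ℝ} (hP : ∀ d, P d → PP k d)
    (hG : ∀ i, BD P R k (fun d => GF μ ph m i d))
    (hh : BD P R k (fun d => dd 0 (hhF m d)))
    (hv2 : ∀ j ≠ 0, ∀ a i, BD P R k (fun d => dd j (dd a (d.1 i))))
    (hq : ∀ j ≠ 0, BD P R k (fun d => dd j d.2))
    (hv1 : ∀ a i, BD P R k (fun d => dd a (d.1 i))) :
    (∀ i, BD P R k (fun d => dd 0 (dd 0 (d.1 i)))) ∧ BD P R k (fun d => dd 0 d.2) := by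
  have hbc : ∀ i, BC k (m i) := fun i => hm.bcn i (by omega)
  have hbc' : ∀ i j, BC k (pd j (m i)) := fun i j => ((hm.bc i).mono (by omega : k + 1 ≤ 6)).pd j
  set n : E3 → ℝ := (fun _ => 1) + (m 1 * m 1 + m 2 * m 2) with hn
  have hnbc : BC k n := (BC.const 1).add (((hbc 1).mul (hbc 1)).add ((hbc 2).mul (hbc 2)))
  have hn1 : ∀ y, 1 ≤ n y := fun y => by
    simp only [hn, Pi.add_apply, Pi.mul_apply]
    nlinarith [mul_self_nonneg (m 1 y), mul_self_nonneg (m 2 y)]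
  have hinv : BC k (fun y => (n y)⁻¹) := hnbc.inv hn1
  -- remainder terms
  let Rm : Fin 3 → Dat → E3 → ℝ := fun i d =>
    (dd 1 (dd 1 (d.1 i)) - pd 1 (m 1) * dd 0 (d.1 i) - (2 : ℝ) • (m 1 * dd 1 (dd 0 (d.1 i)))) +
    (dd 2 (dd 2 (d.1 i)) - pd 2 (m 2) * dd 0 (d.1 i) - (2 : ℝ) • (m 2 * dd 2 (dd 0 (d.1 i))))
  have hR : ∀ i, BD P R k (Rm i) := fun i =>
    (((hv2 1 (by decide) 1 i).sub ((hv1 0 i).coef (hbc' 1 1))).sub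
      (((hv2 1 (by decide) 0 i).coef (hbc 1)).smul 2)).add
    (((hv2 2 (by decide) 2 i).sub ((hv1 0 i).coef (hbc' 2 2))).sub
      (((hv2 2 (by decide) 0 i).coef (hbc 2)).smul 2))
  have hGeq : ∀ i d, P d → ∀ y, GF μ ph m i d y =
      -(μ * (n y * dd 0 (dd 0 (d.1 i)) y + Rm i d y)) +
        ph * (dd i d.2 y - m i y * dd 0 d.2 y) := by
    intro i d hd y
    have hf := (hP d hd).1 i
    have this := hm.ind 0
    rw [hm.zero] at this
    simp only [GF, Fin.sum_univ_three]
    rw [DD_DD hm hf, DD_DD hm hf, DD_DD hm hf, hm.zero]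
    unfold DD
    simp only [this, Pi.sub_apply, Pi.add_apply, Pi.mul_apply, Pi.smul_apply, Pi.zero_apply,
      Pi.neg_apply, smul_eq_mul, hn, Rm]
    ring
  have hheq : ∀ d, P d → ∀ y, dd 0 (hhF m d) y = dd 0 (dd 0 (d.1 0)) y
      - m 1 y * dd 0 (dd 0 (d.1 1)) y - m 2 y * dd 0 (dd 0 (d.1 2)) y +
      dd 1 (dd 0 (d.1 1)) y + dd 2 (dd 0 (d.1 2)) y := by
    intro d hd y
    have hf := (hP d hd).1
    unfold hhF
    rw [dd_sum3 fun l => (HS.DD hm l (by omega) (hf l)).diff]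
    rw [Fin.sum_univ_three, dd_DD hm (hf 0), dd_DD hm (hf 1), dd_DD hm (hf 2), hm.ind, hm.ind,
      hm.ind]
    unfold DD
    rw [hm.zero]
    simp only [Pi.sub_apply, Pi.add_apply, Pi.mul_apply, Pi.zero_apply]
    ring
  let X : Dat → E3 → ℝ := fun d => (fun y => (n y)⁻¹) *
    ((1 / ph) • (GF μ ph m 0 d - m 1 * GF μ ph m 1 d - m 2 * GF μ ph m 2 d
      + μ • (n * (dd 0 (hhF m d) - dd 1 (dd 0 (d.1 1)) - dd 2 (dd 0 (d.1 2))))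
      + μ • (Rm 0 d - m 1 * Rm 1 d - m 2 * Rm 2 d)) + (m 1 * dd 1 d.2 + m 2 * dd 2 d.2))
  have hX : BD P R k X := by
    refine BD.coef hinv (BD.add (BD.smul _ (BD.add (BD.add ?_ ?_) ?_)) ?_)
    · exact ((hG 0).sub ((hG 1).coef (hbc 1))).sub ((hG 2).coef (hbc 2))
    · exact BD.smul _ (BD.coef hnbc ((hh.sub (hv2 1 (by decide) 0 1)).sub (hv2 2 (by decide) 0 2)))
    · exact BD.smul _ (((hR 0).sub ((hR 1).coef (hbc 1))).sub ((hR 2).coef (hbc 2)))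
    · exact ((hq 1 (by decide)).coef (hbc 1)).add ((hq 2 (by decide)).coef (hbc 2))
  have hx : BD P R k (fun d => dd 0 d.2) := by
    refine hX.congr fun d hd => ?_
    funext y
    have e0 := hGeq 0 d hd y
    have e1 := hGeq 1 d hd y
    have e2 := hGeq 2 d hd y
    have e3 := hheq d hd y
    have hny : n y ≠ 0 := by linarith [hn1 y]
    simp only [X, Pi.sub_apply, Pi.add_apply, Pi.mul_apply, Pi.smul_apply, smul_eq_mul]
    have hn' : n y = 1 + (m 1 y * m 1 y + m 2 y * m 2 y) := rfl
    rw [e0, e1, e2, e3, hm.zero]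
    simp only [Pi.zero_apply]
    field_simp
    rw [hn']
    ring
  refine ⟨fun i => ?_, hx⟩
  have hdi : ∀ i, BD P R k (fun d => dd i d.2) := by
    intro i
    by_cases hi : i = 0
    · subst hi; exact hx
    · exact hq i hi
  have hA : BD P R k (fun d => (1 / μ) • ((fun y => (n y)⁻¹) *
      (ph • (dd i d.2 - m i * dd 0 d.2) - GF μ ph m i d - μ • Rm i d))) :=
    BD.smul _ (BD.coef hinv (((BD.smul _ ((hdi i).sub (hx.coef (hbc i)))).sub (hG i)).sub
      ((hR i).smul _)))
  refine hA.congr fun d hd => ?_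
  funext y
  have e0 := hGeq i d hd y
  have hny : n y ≠ 0 := by linarith [hn1 y]
  simp only [Pi.sub_apply, Pi.mul_apply, Pi.smul_apply, smul_eq_mul]
  rw [e0]
  field_simp
  ring

/-! ### Induction on the order -/

lemma dd_bdry {f : E3 → ℝ} (hf : DifferentiableOn ℝ f Hc) (h0 : ∀ y : E3, y 0 = 0 → f y = 0)
    {j : Fin 3} (hj : j ≠ 0) (y : E3) (hy : y 0 = 0) : dd j f y = 0 := by
  have hyH : y ∈ Hc := hy.ge
  rw [dd_apply hyH]
  have h1 := (hf y hyH).hasFDerivWithinAt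
  have hl : HasDerivAt (fun t : ℝ => y + t • ee j) (ee j) 0 := by
    simpa using ((hasDerivAt_id (0:ℝ)).smul_const (ee j)).const_add y
  have hc : ∀ t : ℝ, (y + t • ee j) 0 = 0 := fun t => by
    simp [hy, ee_zero_of_ne hj]
  have h2 : HasDerivWithinAt (f ∘ fun t : ℝ => y + t • ee j)
      (fderivWithin ℝ f Hc y (ee j)) univ 0 := by
    refine HasFDerivWithinAt.comp_hasDerivWithinAt (t := Hc) 0 ?_ hl.hasDerivWithinAt ?_
    · simpa using h1
    · intro t _; exact (hc t).ge
  have h3 : (f ∘ fun t : ℝ => y + t • ee j) = fun _ => 0 := by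
    funext t; exact h0 _ (hc t)
  rw [h3, hasDerivWithinAt_univ] at h2
  exact (h2.unique (hasDerivAt_const _ _))

def Tm (j : Fin 3) (d : Dat) : Dat := (fun i => dd j (d.1 i), dd j d.2)

lemma PP.Tm {k : ℕ} {d : Dat} (h : PP (k + 1) d) {j : Fin 3} (hj : j ≠ 0) : PP k (Tm j d) :=
  ⟨fun i => (h.1 i).ddd j, h.2.1.ddd j, fun i y hy => dd_bdry (h.1 i).diff (h.2.2 i) hj y hy⟩

def Main (μ ph : ℝ) (m : Fin 3 → E3 → ℝ) (k : ℕ) : Prop :=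
  (∀ i a, BD (PP k) (RR μ ph m k) (k + 1) (fun d => dd a (d.1 i))) ∧
  ∀ a, BD (PP k) (RR μ ph m k) k (fun d => dd a d.2)

lemma BD.lift {k n : ℕ} {F : Dat → E3 → ℝ} (h : BD (PP k) (RR μ ph m k) n F) :
    BD (PP (k + 1)) (RR μ ph m (k + 1)) n F := by
  obtain ⟨C, hC, h⟩ := h
  refine ⟨C, hC, fun d hd => ⟨(h d hd.succ).1, (h d hd.succ).2.trans ?_⟩⟩
  exact mul_le_mul_of_nonneg_left (RR_succ k d) hC

lemma hh_Tm (hm : Co m) {k : ℕ} (hk : k + 1 ≤ 4) {d : Dat} (hd : PP (k + 1) d) (j : Fin 3) :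
    hhF m (Tm j d) = dd j (hhF m d) + ∑ i, pd j (m i) * dd 0 (d.1 i) := by
  unfold hhF Tm
  rw [dd_sum3 fun l => (HS.DD hm l (by omega) (hd.1 l)).diff]
  simp only [dd_DD hm (hd.1 _), Fin.sum_univ_three]
  ring

lemma G_Tm (hm : Co m) {k : ℕ} (hk : k + 1 ≤ 4) {d : Dat} (hd : PP (k + 1) d) (i j : Fin 3) :
    GF μ ph m i (Tm j d) = dd j (GF μ ph m i d) -
      μ • (∑ l, (pd j (m l) * dd 0 (DD m l (d.1 i)) + DD m l (pd j (m l) * dd 0 (d.1 i))))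
      + ph • (pd j (m i) * dd 0 d.2) := by
  have h1 : ∀ l, HS (k + 2) (DD m l (d.1 i)) := fun l => HS.DD hm l (by omega) (hd.1 i)
  have h2 : ∀ l, HS (k + 1) (DD m l (DD m l (d.1 i))) := fun l => HS.DD hm l (by omega) (h1 l)
  have hq : HS (k + 1) (DD m i d.2) := HS.DD hm i (by omega) hd.2.1
  have hdj := (hd.1 i).ddd j
  have hd0 := (hd.1 i).ddd 0
  have hb : ∀ l, BC (k + 2) (pd j (m l)) := fun l => ((hm.bc l).mono (by omega : k + 2 + 1 ≤ 6)).pd j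
  have key : ∀ l, DD m l (DD m l (dd j (d.1 i))) = dd j (DD m l (DD m l (d.1 i))) +
      (pd j (m l) * dd 0 (DD m l (d.1 i)) + DD m l (pd j (m l) * dd 0 (d.1 i))) := by
    intro l
    have e1 : DD m l (dd j (d.1 i)) = dd j (DD m l (d.1 i)) + pd j (m l) * dd 0 (d.1 i) := by
      rw [dd_DD hm (hd.1 i)]; ring
    have e2 : DD m l (DD m l (dd j (d.1 i))) =
        DD m l (dd j (DD m l (d.1 i))) + DD m l (pd j (m l) * dd 0 (d.1 i)) := by
      rw [e1]
      have a1 := (h1 l).ddd j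
      have a2 : HS (k + 2) (pd j (m l) * dd 0 (d.1 i)) := HS.coef (hb l) hd0
      rw [DD_add a1.diff a2.diff]
    rw [e2, dd_DD hm (h1 l)]; ring
  unfold GF
  rw [dd_add ((HS.sum3 h2).smul μ).neg.diff (hq.smul ph).diff, dd_neg ((HS.sum3 h2).smul μ).diff,
    dd_smul _ (HS.sum3 h2).diff, dd_sum3 fun l => (h2 l).diff, dd_smul _ hq.diff,
    dd_DD hm hd.2.1]
  simp only [Tm, key, Fin.sum_univ_three]
  funext y
  simp only [Pi.sub_apply, Pi.add_apply, Pi.mul_apply, Pi.smul_apply, Pi.neg_apply, smul_eq_mul]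
  ring

lemma BD.le {α : Type*} {P : α → Prop} {R : α → ℝ} {n : ℕ} {F : α → E3 → ℝ} (h : BD P R n F) :
    ∃ C, 0 ≤ C ∧ ∀ d, P d → SS n (F d) ≤ C * R d := by
  obtain ⟨C, hC, h⟩ := h
  exact ⟨C, hC, fun d hd => (h d hd).2⟩

lemma RR_Tm (hm : Co m) {k : ℕ} (hk : k + 1 ≤ 4) (IH : Main μ ph m k) {j : Fin 3} :
    ∃ C, 0 ≤ C ∧ ∀ d, PP (k + 1) d → RR μ ph m k (Tm j d) ≤ C * RR μ ph m (k + 1) d := by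
  have hb : ∀ l, BC (k + 1) (pd j (m l)) := fun l => ((hm.bc l).mono (by omega : k + 1 + 1 ≤ 6)).pd j
  have IHv := fun i a => (IH.1 i a).lift
  have IHq := fun a => (IH.2 a).lift
  have h1 : BD (PP (k + 1)) (RR μ ph m (k + 1)) (k + 1) (fun d => hhF m (Tm j d)) := by
    refine BD.congr ?_ fun d hd => hh_Tm hm hk hd j
    exact (BD.ddd (BD.hh hm hk)).add (BD.sum3 fun i => (IHv i 0).coef (hb i))
  have h2 : ∀ i, BD (PP (k + 1)) (RR μ ph m (k + 1)) k (fun d => GF μ ph m i (Tm j d)) := by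
    intro i
    refine BD.congr ?_ fun d hd => G_Tm hm hk hd i j
    refine (BD.ddd (BD.G hm i hk)).sub (BD.smul _ (BD.sum3 fun l => ?_)) |>.add
      (BD.smul _ ((IHq 0).coef ((hb i).mono (by omega))))
    refine BD.add (BD.coef ((hb l).mono (by omega)) ?_)
      (BD.DD hm l (by omega) ((IHv i 0).coef (hb l)))
    have e : BD (PP (k + 1)) (RR μ ph m (k + 1)) k
        (fun d => dd l (dd 0 (d.1 i)) - m l * dd 0 (dd 0 (d.1 i))) :=
      (IHv i 0).ddd.sub ((IHv i 0).ddd.coef (hm.bcn l (by omega)))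
    refine e.congr fun d hd => ?_
    rw [dd_DD hm (hd.1 i), hm.ind]
    simp [DD]
  have h3 : ∀ i a, BD (PP (k + 1)) (RR μ ph m (k + 1)) 0 (fun d => dd a ((Tm j d).1 i)) := by
    intro i a
    refine (BD.mono (Nat.zero_le k) (BD.ddd (i := j) (IHv i a))).congr fun d hd => ?_
    exact (hd.1 i).comm a j
  obtain ⟨C1, hC1, k1⟩ := h1.le
  choose C2 hC2 k2 using fun i => (h2 i).le
  choose C3 hC3 k3 using fun i a => (h3 i a).le
  refine ⟨C1 + ∑ i, C2 i + ∑ i, ∑ a, C3 i a, ?_, fun d hd => ?_⟩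
  · have e2 := Finset.sum_nonneg fun i (_ : i ∈ Finset.univ) => hC2 i
    have e3 := Finset.sum_nonneg fun i (_ : i ∈ Finset.univ) =>
      Finset.sum_nonneg fun a (_ : a ∈ Finset.univ) => hC3 i a
    linarith
  · unfold RR at k1 k2 k3 ⊢
    simp only [add_mul _ _ (SS (k + 1 + 1) _ + _ + _), Finset.sum_mul]
    exact add_le_add (add_le_add (k1 d hd) (Finset.sum_le_sum fun i _ => k2 i d hd))
      (Finset.sum_le_sum fun i _ => Finset.sum_le_sum fun a _ => k3 i a d hd)

lemma main_step (hm : Co m) (hμ : 0 < μ) (hp : 0 < ph) {k : ℕ} (hk : k + 1 ≤ 4)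
    (IH : Main μ ph m k) : Main μ ph m (k + 1) := by
  have IHv := fun i a => (IH.1 i a).lift
  have IHq := fun a => (IH.2 a).lift
  have comp : ∀ {j : Fin 3}, j ≠ 0 → ∀ {n : ℕ} {F : Dat → E3 → ℝ},
      BD (PP k) (RR μ ph m k) n F →
      BD (PP (k + 1)) (RR μ ph m (k + 1)) n (fun d => F (Tm j d)) := by
    intro j hj n F ⟨C, hC, h⟩
    obtain ⟨D, hD, h'⟩ := RR_Tm hm hk IH (j := j)
    refine ⟨C * D, by positivity, fun d hd => ⟨(h _ (hd.Tm hj)).1, (h _ (hd.Tm hj)).2.trans ?_⟩⟩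
    have := mul_le_mul_of_nonneg_left (h' d hd) hC
    linarith
  have hv2 : ∀ j ≠ 0, ∀ a i, BD (PP (k + 1)) (RR μ ph m (k + 1)) (k + 1)
      (fun d => dd j (dd a (d.1 i))) := by
    intro j hj a i
    refine (comp hj (IH.1 i a)).congr fun d hd => ?_
    exact (hd.1 i).comm j a
  have hq : ∀ j ≠ 0, BD (PP (k + 1)) (RR μ ph m (k + 1)) (k + 1) (fun d => dd j d.2) := by
    intro j hj
    refine BD.succ ((IHq j).mono (Nat.zero_le _)) (fun i => comp hj (IH.2 i)) ?_
    exact fun d hd => hd.2.1.ddd j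
  obtain ⟨hA, hB⟩ := alg_lemma hm hμ hp hk (P := PP (k + 1)) (R := RR μ ph m (k + 1))
    (fun d hd => hd) (fun i => BD.G hm i hk) (BD.ddd (BD.hh hm hk)) hv2 hq (fun a i => IHv i a)
  refine ⟨fun i a => ?_, fun a => ?_⟩
  · refine BD.succ ((IHv i a).mono (Nat.zero_le _)) (fun b => ?_) fun d hd => (hd.1 i).ddd a
    by_cases hb : b = 0
    · by_cases ha : a = 0
      · subst hb ha; exact hA i
      · refine (hv2 a ha b i).congr fun d hd => (hd.1 i).comm b a
    · exact hv2 b hb a i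
  · by_cases ha : a = 0
    · subst ha; exact hB
    · exact hq a ha

end

section

/-! ### Integration by parts on the half space -/

def ZB (f : E3 → ℝ) : Prop := ∀ y : E3, y 0 = 0 → f y = 0

lemma ZB.continuous {f : E3 → ℝ} (hf : ContinuousOn f Hc) (hz : ZO f) (hb : ZB f) :
    Continuous f := by
  have h : f = Hc.indicator f := by
    funext y
    by_cases hy : y ∈ Hc
    · simp [hy]
    · simp [hy, hz y hy]
  rw [h]
  refine continuous_indicator (fun y hy => hb y ?_) (by rwa [isClosed_Hc.closure_eq])
  rw [frontier, isClosed_Hc.closure_eq] at hy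
  have h1 : 0 ≤ y 0 := hy.1
  by_contra h2
  exact hy.2 (H_subset_interior (lt_of_le_of_ne h1 (Ne.symm h2)))

lemma hasDerivAt_line {f : E3 → ℝ} {a : Fin 3} {y : E3} {s : ℝ}
    (hf : DifferentiableOn ℝ f Hc)
    (hn : ∀ᶠ t in nhds s, y + t • ee a ∈ Hc) :
    HasDerivAt (fun t : ℝ => f (y + t • ee a)) (dd a f (y + s • ee a)) s := by
  have hs : y + s • ee a ∈ Hc := hn.self_of_nhds
  rw [dd_apply hs]
  have h1 := (hf _ hs).hasFDerivWithinAt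
  have hl : HasDerivAt (fun t : ℝ => y + t • ee a) (ee a) s := by
    simpa using ((hasDerivAt_id s).smul_const (ee a)).const_add y
  have h2 : HasDerivWithinAt (f ∘ fun t : ℝ => y + t • ee a)
      (fderivWithin ℝ f Hc (y + s • ee a) (ee a)) {t | y + t • ee a ∈ Hc} s := by
    refine HasFDerivWithinAt.comp_hasDerivWithinAt (t := Hc) s h1 hl.hasDerivWithinAt ?_
    intro t ht; exact ht
  exact h2.hasDerivAt hn

lemma ftc_line {f : E3 → ℝ} {a : Fin 3} (hf : ContDiffOn ℝ (0 + 1 : ℕ) f Hc)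
    (hzo : ZO f) (hb : a ≠ 0 ∨ ZB f) (y : E3) (t : ℝ) :
    ∫ s in (0:ℝ)..t, dd a f (y + s • ee a) = f (y + t • ee a) - f y := by
  have hline : Continuous fun s : ℝ => y + s • ee a := by fun_prop
  have hcd := (hf.dd a).continuousOn
  have hdiff : DifferentiableOn ℝ f Hc := hf.differentiableOn (by norm_num)
  by_cases ha : a = 0
  · subst ha
    have hb' : ZB f := hb.resolve_left (by simp)
    have hfc : Continuous f := ZB.continuous hf.continuousOn hzo hb'
    have h := MeasureTheory.integral_eq_of_hasDerivAt_off_countable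
      (fun s : ℝ => f (y + s • ee 0)) (fun s : ℝ => dd 0 f (y + s • ee 0)) (a := 0) (b := t)
      (s := {-(y 0)}) (countable_singleton _) (hfc.comp hline).continuousOn ?_ ?_
    · simpa using h
    · intro s hs
      have hc : ∀ r : ℝ, (y + r • ee 0) 0 = y 0 + r := fun r => by simp [ee_zero_zero]
      have hne : s ≠ -(y 0) := hs.2
      rcases lt_or_gt_of_ne hne with h1 | h1
      · have hev : ∀ᶠ r in nhds s, f (y + r • ee 0) = 0 := by
          filter_upwards [Iio_mem_nhds h1] with r hr
          apply hzo
          intro hr'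
          have : 0 ≤ (y + r • ee 0) 0 := hr'
          rw [hc] at this
          have : r < -(y 0) := hr
          linarith
        have : dd 0 f (y + s • ee 0) = 0 := by
          apply dd_out
          intro hr'
          have : 0 ≤ (y + s • ee 0) 0 := hr'
          rw [hc] at this
          linarith
        rw [this]
        exact (hasDerivAt_const s (0:ℝ)).congr_of_eventuallyEq hev
      · apply hasDerivAt_line hdiff
        filter_upwards [Ioi_mem_nhds h1] with r hr
        change 0 ≤ (y + r • ee 0) 0
        rw [hc]
        have : -(y 0) < r := hr
        linarith
    · have hind : (fun s : ℝ => dd 0 f (y + s • ee 0)) =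
          ((fun s : ℝ => y + s • ee 0) ⁻¹' Hc).indicator (fun s : ℝ => dd 0 f (y + s • ee 0)) := by
        funext s
        by_cases hs : y + s • ee 0 ∈ Hc
        · rw [indicator_of_mem (s := (fun s : ℝ => y + s • ee 0) ⁻¹' Hc) hs]
        · rw [indicator_of_notMem (s := (fun s : ℝ => y + s • ee 0) ⁻¹' Hc) hs]; exact dd_out _ hs
      rw [intervalIntegrable_iff', hind]
      have hcl : IsClosed ((fun s : ℝ => y + s • ee 0) ⁻¹' Hc) := isClosed_Hc.preimage hline
      rw [integrableOn_indicator_iff hcl.measurableSet]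
      refine ContinuousOn.integrableOn_compact (isCompact_uIcc.inter_left hcl) ?_
      exact hcd.comp hline.continuousOn (fun s hs => hs.1)
  · have hc : ∀ r : ℝ, (y + r • ee a) 0 = y 0 := fun r => by simp [ee_zero_of_ne ha]
    by_cases hy : y ∈ Hc
    · have hmem : ∀ r : ℝ, y + r • ee a ∈ Hc := fun r => by
        change 0 ≤ (y + r • ee a) 0
        rw [hc]; exact hy
      have h := intervalIntegral.integral_eq_sub_of_hasDerivAt (a := 0) (b := t)
        (f := fun s : ℝ => f (y + s • ee a)) (f' := fun s : ℝ => dd a f (y + s • ee a))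
        (fun s _ => hasDerivAt_line hdiff (Eventually.of_forall hmem))
        ((hcd.comp_continuous hline hmem).intervalIntegrable _ _)
      simpa using h
    · have hmem : ∀ r : ℝ, y + r • ee a ∉ Hc := fun r => by
        change ¬ 0 ≤ (y + r • ee a) 0
        rw [hc]; exact hy
      have e1 : ∀ s : ℝ, dd a f (y + s • ee a) = 0 := fun s => dd_out _ (hmem s)
      simp [e1, hzo _ (hmem t), hzo _ hy]

lemma mp_shift (t : ℝ) (a : Fin 3) :
    MeasurePreserving (fun y : E3 => y + t • ee a) volume volume :=
  measurePreserving_add_right volume (t • ee a)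

lemma mp_skew (ν : Measure ℝ) [SFinite ν] (a : Fin 3) :
    MeasurePreserving (fun q : ℝ × E3 => (q.1, q.2 + q.1 • ee a)) (ν.prod volume)
      (ν.prod volume) := by
  refine MeasurePreserving.skew_product (g := fun s y => y + s • ee a) (MeasurePreserving.id ν) ?_ ?_
  · fun_prop
  · exact Eventually.of_forall fun s => (mp_shift s a).map_eq

instance finite_uIoc (a b : ℝ) : IsFiniteMeasure (volume.restrict (uIoc a b)) := by
  rw [uIoc]; infer_instance

/-- Fubini form of the translation formula -/
lemma shift_formula {z g F : E3 → ℝ} {a : Fin 3}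
    (hz : ∀ y t, ∫ s in (0:ℝ)..t, g (y + s • ee a) = z (y + t • ee a) - z y) {t : ℝ}
    (hi : Integrable (fun q : ℝ × E3 => F q.2 * g (q.2 + q.1 • ee a))
      ((volume.restrict (uIoc 0 t)).prod volume)) :
    ∫ y, F y * (z (y + t • ee a) - z y) =
      ∫ s in (0:ℝ)..t, ∫ y, F y * g (y + s • ee a) := by
  rw [intervalIntegral.intervalIntegral_eq_integral_uIoc]
  rw [integral_integral_swap (f := fun s y => F y * g (y + s • ee a)) hi, smul_eq_mul,
    ← integral_const_mul]
  congr 1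
  funext y
  rw [← hz y t, intervalIntegral.intervalIntegral_eq_integral_uIoc, integral_const_mul, smul_eq_mul]
  ring

lemma int_dd {z : E3 → ℝ} {a : Fin 3}
    (hz : ∀ y t, ∫ s in (0:ℝ)..t, dd a z (y + s • ee a) = z (y + t • ee a) - z y)
    (h1 : Integrable z) (h2 : Integrable (dd a z)) : ∫ y, dd a z y = 0 := by
  have h := shift_formula (F := fun _ => 1) hz (t := 1) ?_
  · simp only [one_mul] at h
    have e : ∀ s : ℝ, ∫ y, dd a z (y + s • ee a) = ∫ y, dd a z y := fun s =>
      integral_add_right_eq_self (dd a z) (s • ee a)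
    simp only [e] at h
    rw [integral_sub (h1.comp_add_right _) h1, integral_add_right_eq_self] at h
    simpa using h.symm
  · simp only [one_mul]
    have := (mp_skew (volume.restrict (uIoc (0:ℝ) 1)) a).integrable_comp_of_integrable
      (h2.comp_snd (volume.restrict (uIoc (0:ℝ) 1)))
    exact this

lemma dd_mul' {i : Fin 3} {f g : E3 → ℝ} (hf : DifferentiableOn ℝ f Hc)
    (hg : DifferentiableOn ℝ g Hc) : dd i (f * g) = dd i f * g + f * dd i g := by
  funext y
  by_cases hy : y ∈ Hc
  · simp only [Pi.add_apply, Pi.mul_apply, dd_apply hy]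
    rw [fderivWithin_mul (uniq_Hc y hy) (hf y hy) (hg y hy)]
    simp; ring
  · simp [dd, hy]

lemma HS.intmul {f g : E3 → ℝ} {k l : ℕ} (hf : HS k f) (hg : HS l g) : Integrable (f * g) :=
  hf.mem.integrable_mul hg.mem

lemma ibp {f w : E3 → ℝ} (hf : HS 1 f) (hw : HS 1 w) {a : Fin 3} (hb : a ≠ 0 ∨ ZB w) :
    ∫ y, (dd a f * w) y = - ∫ y, (f * dd a w) y := by
  have hp := dd_mul' (i := a) hf.diff hw.diff
  have i1 : Integrable (dd a f * w) := (hf.ddd a).intmul hw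
  have i2 : Integrable (f * dd a w) := hf.intmul (hw.ddd a)
  have hi : Integrable (dd a (f * w)) := by rw [hp]; exact i1.add i2
  have h := int_dd (z := f * w) (a := a) (fun y t => ftc_line (hf.cd.mul hw.cd) (hw.zo.mul f) ?_ y t)
    (hf.intmul hw) hi
  · rw [hp] at h
    have e : ∫ y, (dd a f * w + f * dd a w) y = (∫ y, (dd a f * w) y) + ∫ y, (f * dd a w) y :=
      integral_add i1 i2
    rw [e] at h
    linarith
  · rcases hb with hb | hb
    · exact Or.inl hb
    · exact Or.inr fun y hy => by simp [hb y hy]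

/-! ### Translations in tangential directions -/

def tau (a : Fin 3) (t : ℝ) (f : E3 → ℝ) : E3 → ℝ := fun y => f (y + t • ee a)

lemma tau_mem {f : E3 → ℝ} (hf : MemLp f 2 volume) (a : Fin 3) (t : ℝ) :
    MemLp (tau a t f) 2 volume := hf.comp_measurePreserving (mp_shift t a)

lemma cont_tau {F g : E3 → ℝ} (hF : MemLp F 2 volume) (hg : MemLp g 2 volume) (a : Fin 3) :
    Continuous fun t : ℝ => ∫ y, F y * g (y + t • ee a) := by
  have hc : Continuous fun t : ℝ => Lp.compMeasurePreserving (fun y : E3 => y + t • ee a)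
      (mp_shift t a) (hg.toLp g) := by
    have := Continuous.compMeasurePreservingLp (Z := ℝ) (μ := (volume : Measure E3))
      (ν := (volume : Measure E3)) (p := 2) (E := ℝ)
      (f := fun _ => hg.toLp g)
      (g := fun t : ℝ => (⟨fun y : E3 => y + t • ee a, by fun_prop⟩ : C(E3, E3)))
      continuous_const ?_ (fun t => mp_shift t a) (by norm_num)
    · exact this
    · refine ContinuousMap.continuous_of_continuous_uncurry _ ?_
      simp only [Function.uncurry_def, ContinuousMap.coe_mk]
      fun_prop
  have h2 : Continuous fun t : ℝ => inner ℝ (hF.toLp F) (Lp.compMeasurePreserving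
      (fun y : E3 => y + t • ee a) (mp_shift t a) (hg.toLp g)) := continuous_const.inner hc
  convert h2 using 2 with t
  rw [L2.inner_def]
  refine integral_congr_ae ?_
  rw [Lp.toLp_compMeasurePreserving hg (mp_shift t a)]
  filter_upwards [hF.coeFn_toLp, (tau_mem hg a t).coeFn_toLp] with y h1 h2
  simp only [h1]
  have : ((hg.comp_measurePreserving (mp_shift t a)).toLp (g ∘ fun y : E3 => y + t • ee a)) y
    = g (y + t • ee a) := h2
  rw [this]
  simp [mul_comm]

lemma deriv_tau {F z g : E3 → ℝ} (hF : MemLp F 2 volume) (hg : MemLp g 2 volume) {a : Fin 3}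
    (hz : ∀ y t, ∫ s in (0:ℝ)..t, g (y + s • ee a) = z (y + t • ee a) - z y) :
    Tendsto (fun t : ℝ => t⁻¹ * ∫ y, F y * (z (y + t • ee a) - z y)) (nhdsWithin 0 {0}ᶜ)
      (nhds (∫ y, F y * g y)) := by
  have hc := cont_tau hF hg a
  have hd := intervalIntegral.integral_hasDerivAt_right (hc.intervalIntegrable 0 0)
    (hc.stronglyMeasurableAtFilter _ _) hc.continuousAt
  have h0 := hd.tendsto_slope_zero
  simp only [zero_smul, add_zero, zero_add, intervalIntegral.integral_same, sub_zero,
    smul_eq_mul] at h0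
  refine h0.congr fun t => ?_
  rw [shift_formula hz]
  have i1 : Integrable (fun q : ℝ × E3 => F q.2 ^ 2) ((volume.restrict (uIoc 0 t)).prod volume) :=
    hF.integrable_sq.comp_snd _
  have i2 : Integrable (fun q : ℝ × E3 => g (q.2 + q.1 • ee a) ^ 2)
      ((volume.restrict (uIoc 0 t)).prod volume) :=
    (mp_skew (volume.restrict (uIoc (0:ℝ) t)) a).integrable_comp_of_integrable
      (hg.integrable_sq.comp_snd (volume.restrict (uIoc (0:ℝ) t)))
  refine (i1.add i2).mono' ?_ (Eventually.of_forall fun q => ?_)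
  · refine AEStronglyMeasurable.mul hF.1.comp_snd ?_
    exact hg.1.comp_snd.comp_measurePreserving (mp_skew (volume.restrict (uIoc (0:ℝ) t)) a)
  · simp only [Pi.add_apply, norm_eq_abs, abs_mul]
    nlinarith [sq_abs (F q.2), sq_abs (g (q.2 + q.1 • ee a)), sq_nonneg (|F q.2| - |g (q.2 + q.1 • ee a)|),
      sq_nonneg (|F q.2|), sq_nonneg (|g (q.2 + q.1 • ee a)|)]

lemma mem_shift {a : Fin 3} (ha : a ≠ 0) (t : ℝ) (y : E3) : y + t • ee a ∈ Hc ↔ y ∈ Hc := by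
  have hc : (y + t • ee a) 0 = y 0 := by simp [ee_zero_of_ne ha]
  change 0 ≤ (y + t • ee a) 0 ↔ 0 ≤ y 0
  rw [hc]

open scoped Pointwise in
lemma dd_tau {a : Fin 3} (ha : a ≠ 0) (t : ℝ) (i : Fin 3) (f : E3 → ℝ) :
    dd i (tau a t f) = tau a t (dd i f) := by
  have hs : (t • ee a) +ᵥ Hc = Hc := by
    ext y
    rw [mem_vadd_set_iff_neg_vadd_mem]
    have := mem_shift ha (-t) y
    rw [neg_smul, add_comm] at this
    exact this
  funext y
  by_cases hy : y ∈ Hc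
  · have hy' := (mem_shift ha t y).2 hy
    rw [tau, dd_apply hy, dd_apply hy']
    unfold tau
    rw [fderivWithin_comp_add_right, hs]
  · have hy' := mt (mem_shift ha t y).1 hy
    rw [tau, dd_out _ hy, dd_out _ hy']

lemma HS.tau {a : Fin 3} (ha : a ≠ 0) (t : ℝ) {f : E3 → ℝ} (hf : HS 1 f) : HS 1 (tau a t f) := by
  refine ⟨?_, fun y hy => hf.zo _ (mt (mem_shift ha t y).1 hy), tau_mem hf.mem a t, fun i => ?_⟩
  · refine hf.cd.comp (t := Hc) ?_ fun y hy => (mem_shift ha t y).2 hy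
    fun_prop
  · rw [dd_tau ha]; exact tau_mem (hf.ddd i).mem a t

lemma ZB.tau {a : Fin 3} (ha : a ≠ 0) (t : ℝ) {f : E3 → ℝ} (hf : ZB f) : ZB (tau a t f) := by
  intro y hy
  apply hf
  simp [ee_zero_of_ne ha, hy]

/-- exchange of derivatives -/
lemma lemX {f z : E3 → ℝ} (hf : HS 1 f) (hz : HS 1 z) (hb : ZB z) {a j : Fin 3} (hj : j ≠ 0) :
    ∫ y, (dd a f * dd j z) y = ∫ y, (dd j f * dd a z) y := by
  have t1 := deriv_tau (F := dd a f) (z := z) (g := dd j z) (a := j) (hf.ddd a).mem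
    (hz.ddd j).mem (fun y t => ftc_line hz.cd hz.zo (Or.inl hj) y t)
  have t2 := deriv_tau (F := dd a z) (z := f) (g := dd j f) (a := j)
    (hz.ddd a).mem (hf.ddd j).mem (fun y t => ftc_line hf.cd hf.zo (Or.inl hj) y t)
  have hneg : Tendsto (fun t : ℝ => -t) (nhdsWithin 0 {0}ᶜ) (nhdsWithin 0 {0}ᶜ) := by
    refine tendsto_nhdsWithin_iff.2 ⟨?_, ?_⟩
    · have : Tendsto (fun t : ℝ => -t) (nhds 0) (nhds (-0)) := tendsto_id.neg
      rw [neg_zero] at this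
      exact this.mono_left nhdsWithin_le_nhds
    · filter_upwards [self_mem_nhdsWithin] with t ht
      simpa using ht
  have t3 := t2.comp hneg
  have e : ∀ t : ℝ, t⁻¹ * ∫ y, dd a f y * (z (y + t • ee j) - z y) =
      (-t)⁻¹ * ∫ y, dd a z y * (f (y + (-t) • ee j) - f y) := by
    intro t
    have b1 := ibp hf (hz.tau hj t) (a := a) (Or.inr (hb.tau hj t))
    have b2 := ibp hf hz (a := a) (Or.inr hb)
    rw [dd_tau hj] at b1
    have c1 : ∫ y, dd a f y * (z (y + t • ee j) - z y) =
        (∫ y, (dd a f * tau j t z) y) - ∫ y, (dd a f * z) y := by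
      rw [← integral_sub ((hf.ddd a).intmul (hz.tau hj t)) ((hf.ddd a).intmul hz)]
      congr 1; funext y; simp only [Pi.mul_apply, tau]; ring
    have c2 : ∫ y, dd a z y * (f (y + (-t) • ee j) - f y) =
        (∫ y, (tau j (-t) f * dd a z) y) - ∫ y, (f * dd a z) y := by
      rw [← integral_sub ((hf.tau hj (-t)).intmul (hz.ddd a)) (hf.intmul (hz.ddd a))]
      congr 1; funext y; simp only [Pi.mul_apply, tau]; ring
    have c3 : ∫ y, (tau j (-t) f * dd a z) y = ∫ y, (f * tau j t (dd a z)) y := by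
      rw [← integral_add_right_eq_self (tau j (-t) f * dd a z) (t • ee j)]
      congr 1; funext y; simp only [Pi.mul_apply, tau]
      rw [add_assoc, ← add_smul]; simp
    rw [c1, c2, c3, b1, b2, inv_neg]
    ring
  have t4 := t3.congr (fun t => (e t).symm)
  have h := tendsto_nhds_unique t1 t4
  simp only [Pi.mul_apply]
  rw [h]
  congr 1; funext y; ring

/-! ### Versions with the twisted derivatives -/

variable {m : Fin 3 → E3 → ℝ}

lemma ibpD (hm : Co m) {f w : E3 → ℝ} (hf : HS 1 f) (hw : HS 1 w) {i : Fin 3} (hb : ZB w) :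
    ∫ y, (DD m i f * w) y = - ∫ y, (f * DD m i w) y := by
  have b1 := ibp hf hw (a := i) (Or.inr hb)
  have hc : BC 1 (m i) := hm.bcn i (by norm_num)
  have b2 := ibp hf (HS.coef hc hw) (a := 0) (Or.inr fun y hy => by simp [hb y hy])
  rw [dd_mul hc.diff hw.diff hw.zo, hm.ind, zero_mul, zero_add] at b2
  have e1 : ∫ y, (DD m i f * w) y = (∫ y, (dd i f * w) y) - ∫ y, (dd 0 f * (m i * w)) y := by
    rw [← integral_sub ((hf.ddd i).intmul hw) ((hf.ddd 0).intmul (HS.coef hc hw))]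
    congr 1; funext y; simp only [DD, Pi.mul_apply, Pi.sub_apply]; ring
  have hw0 : HS 0 (m i * dd 0 w) := HS.coef (hm.bcn i (by norm_num)) (hw.ddd 0)
  have e2 : ∫ y, (f * DD m i w) y = (∫ y, (f * dd i w) y) - ∫ y, (f * (m i * dd 0 w)) y := by
    rw [← integral_sub (hf.intmul (hw.ddd i)) (hf.intmul hw0)]
    congr 1; funext y; simp only [DD, Pi.mul_apply, Pi.sub_apply]; ring
  rw [e1, e2, b1, b2]
  ring

lemma lemXD (hm : Co m) {f z : E3 → ℝ} (hf : HS 1 f) (hz : HS 1 z) (hb : ZB z) {i j : Fin 3}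
    (hj : j ≠ 0) :
    ∫ y, (DD m i f * dd j z) y = (∫ y, (dd j f * DD m i z) y) +
      ∫ y, (dd 0 f * (pd j (m i) * z)) y := by
  have b1 := lemX hf hz hb (a := i) hj
  have hc : BC 1 (m i) := hm.bcn i (by norm_num)
  have hc' : BC 1 (pd j (m i)) := (hm.bcn (n := 2) i (by norm_num)).pd j
  have hc0 : BC 0 (m i) := hm.bcn i (by norm_num)
  have hmz := HS.coef hc hz
  have hmz' := HS.coef hc' hz
  have b2 := lemX hf hmz (fun y hy => by simp [hb y hy]) (a := 0) hj
  rw [dd_mul hc.diff hz.diff hz.zo, dd_mul hc.diff hz.diff hz.zo, hm.ind, zero_mul, zero_add] at b2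
  have hz0 : HS 0 (m i * dd 0 z) := HS.coef hc0 (hz.ddd 0)
  have hzj : HS 0 (m i * dd j z) := HS.coef hc0 (hz.ddd j)
  have b3 : ∫ y, (dd 0 f * (pd j (m i) * z + m i * dd j z)) y =
      (∫ y, (dd 0 f * (pd j (m i) * z)) y) + ∫ y, (dd 0 f * (m i * dd j z)) y := by
    rw [← integral_add ((hf.ddd 0).intmul hmz') ((hf.ddd 0).intmul hzj)]
    congr 1; funext y; simp only [Pi.mul_apply, Pi.add_apply]; ring
  have e1 : ∫ y, (DD m i f * dd j z) y =
      (∫ y, (dd i f * dd j z) y) - ∫ y, (dd 0 f * (m i * dd j z)) y := by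
    rw [← integral_sub ((hf.ddd i).intmul (hz.ddd j)) ((hf.ddd 0).intmul hzj)]
    congr 1; funext y; simp only [DD, Pi.mul_apply, Pi.sub_apply]; ring
  have e2 : ∫ y, (dd j f * DD m i z) y =
      (∫ y, (dd j f * dd i z) y) - ∫ y, (dd j f * (m i * dd 0 z)) y := by
    rw [← integral_sub ((hf.ddd j).intmul (hz.ddd i)) ((hf.ddd j).intmul hz0)]
    congr 1; funext y; simp only [DD, Pi.mul_apply, Pi.sub_apply]; ring
  rw [e1, e2]
  linarith

end

section

/-! ### Solving `φ - κ Δ φ = θ` in the Schwartz class -/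

open scoped SchwartzMap LineDeriv Laplacian

def kap : ℝ := ((2 * π) ^ 2)⁻¹

lemma kap_pos : 0 < kap := by unfold kap; positivity

lemma lineDeriv_postcomp {F G : Type*} [NormedAddCommGroup F] [NormedSpace ℝ F]
    [NormedAddCommGroup G] [NormedSpace ℝ G] (L : F →L[ℝ] G) (φ : 𝓢(E3, F)) (v : E3) :
    ∂_{v} (φ.postcompCLM L) = (∂_{v} φ).postcompCLM L := by
  ext x
  rw [SchwartzMap.postcompCLM_apply, SchwartzMap.lineDerivOp_apply_eq_fderiv,
    SchwartzMap.lineDerivOp_apply_eq_fderiv]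
  have : (φ.postcompCLM L : E3 → G) = L ∘ φ := rfl
  rw [this, fderiv_comp x L.differentiableAt φ.differentiableAt, L.fderiv]
  rfl

lemma exists_resolvent_C (θ : 𝓢(E3, ℂ)) : ∃ φ : 𝓢(E3, ℂ),
    φ - kap • ∑ i : Fin 3, ∂_{ee i} (∂_{ee i} φ) = θ := by
  let g : E3 → ℝ := fun x => (1 + ‖x‖ ^ 2) ^ (-1 : ℝ)
  have hg : g.HasTemperateGrowth := Function.hasTemperateGrowth_one_add_norm_sq_rpow E3 (-1)
  have hn : (fun x : E3 => ‖x‖ ^ 2).HasTemperateGrowth := by fun_prop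
  refine ⟨SchwartzMap.fourierMultiplierCLM ℂ g θ, ?_⟩
  have h1 := SchwartzMap.laplacian_eq_fourierMultiplierCLM (SchwartzMap.fourierMultiplierCLM ℂ g θ)
  rw [SchwartzMap.laplacian_eq_sum (EuclideanSpace.basisFun (Fin 3) ℝ)] at h1
  have hb : ∀ i, EuclideanSpace.basisFun (Fin 3) ℝ i = ee i := fun i => by simp [ee]
  simp only [hb] at h1
  have hn' : ((fun x : E3 => ‖x‖) ^ 2).HasTemperateGrowth := hn
  have hk : kap * (2 * π) ^ 2 = 1 := by unfold kap; field_simp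
  rw [h1, SchwartzMap.fourierMultiplierCLM_fourierMultiplierCLM_apply hn hg, neg_smul, smul_neg,
    sub_neg_eq_add, smul_smul, hk, one_smul]
  have hs := SchwartzMap.fourierMultiplierCLM_sum ℂ (g := ![g, (fun x : E3 => ‖x‖ ^ 2) * g])
    (s := Finset.univ) (𝕜 := ℝ) ?_
  · have hs' := congrArg (fun L => L θ) hs
    simp only [Fin.sum_univ_two, Matrix.cons_val_zero, Matrix.cons_val_one] at hs'
    have hc : (fun x : E3 => g x + ((fun x : E3 => ‖x‖ ^ 2) * g) x) = fun _ => (1:ℝ) := by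
      funext x
      have : (1 + ‖x‖ ^ 2 : ℝ) ≠ 0 := by positivity
      simp only [Pi.mul_apply, g, rpow_neg_one]
      field_simp
    rw [hc, SchwartzMap.fourierMultiplierCLM_const] at hs'
    simpa using hs'.symm
  · intro i _
    fin_cases i
    · exact hg
    · exact hn.mul hg

lemma exists_resolvent (θ : 𝓢(E3, ℝ)) : ∃ φ : 𝓢(E3, ℝ),
    φ - kap • ∑ i : Fin 3, ∂_{ee i} (∂_{ee i} φ) = θ := by
  obtain ⟨φ, hφ⟩ := exists_resolvent_C (θ.postcompCLM Complex.ofRealCLM)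
  refine ⟨φ.postcompCLM Complex.reCLM, ?_⟩
  simp only [lineDeriv_postcomp]
  rw [← map_sum, ← map_smul, ← map_sub, hφ]
  ext x
  simp [SchwartzMap.postcompCLM_apply]

lemma pd_comm {f : E3 → ℝ} (hf : ContDiff ℝ (⊤ : ℕ∞) f) (i j : Fin 3) :
    pd i (pd j f) = pd j (pd i f) := by
  have hd : Differentiable ℝ (fderiv ℝ f) :=
    (hf.fderiv_right (m := 1) (by norm_cast)).differentiable (by norm_num)
  have key : ∀ i j y, pd i (pd j f) y = fderiv ℝ (fderiv ℝ f) y (ee i) (ee j) := by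
    intro i j y
    change fderiv ℝ (fun x => fderiv ℝ f x (ee j)) y (ee i) = _
    rw [fderiv_clm_apply (hd y) (by fun_prop)]
    simp
  funext y
  rw [key, key]
  have hs : IsSymmSndFDerivAt ℝ f y := by
    refine (hf.contDiffAt).isSymmSndFDerivAt ?_
    simp only [minSmoothness_of_isRCLikeNormedField]
    norm_cast

  exact hs.eq _ _

def sn (ψ : 𝓢(E3, ℝ)) : ℝ := ∫ y, ψ y ^ 2

lemma sch_int (f g : 𝓢(E3, ℝ)) : Integrable (fun y => f y * g y) :=
  (f.memLp 2).integrable_mul (g.memLp 2)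

lemma sch_ibp (f g : 𝓢(E3, ℝ)) (v : E3) :
    ∫ y, f y * (∂_{v} g) y = - ∫ y, (∂_{v} f) y * g y :=
  SchwartzMap.integral_mul_lineDerivOp_right_eq_neg_left f g v

lemma sch_comm (f : 𝓢(E3, ℝ)) (i j : Fin 3) :
    ∂_{ee i} (∂_{ee j} f) = ∂_{ee j} (∂_{ee i} f) := by
  ext y
  exact congrFun (pd_comm (f.smooth ⊤) i j) y

lemma resolvent_alg {κ a t : ℝ} {b : Fin 3 → ℝ} {c : Fin 3 → Fin 3 → ℝ} (hκ : 0 < κ)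
    (ha : 0 ≤ a) (hb : ∀ i, 0 ≤ b i) (hc : ∀ i j, 0 ≤ c i j)
    (e : t = a - (2 * κ * ∑ i, - b i) + κ ^ 2 * ∑ i, ∑ j, c i j) :
    a ≤ t ∧ (∀ i, 2 * κ * b i ≤ t) ∧ ∀ i j, κ ^ 2 * c i j ≤ t := by
  rw [Finset.sum_neg_distrib] at e
  have s1 : 0 ≤ ∑ i, b i := Finset.sum_nonneg fun i _ => hb i
  have s2 : ∀ i, 0 ≤ ∑ j, c i j := fun i => Finset.sum_nonneg fun j _ => hc i j
  have s3 : 0 ≤ ∑ i, ∑ j, c i j := Finset.sum_nonneg fun i _ => s2 i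
  have q1 : 0 ≤ 2 * κ * ∑ i, b i := by positivity
  have q2 : 0 ≤ κ ^ 2 * ∑ i, ∑ j, c i j := by positivity
  refine ⟨by linarith, fun i => ?_, fun i j => ?_⟩
  · have := Finset.single_le_sum (f := b) (fun i _ => hb i) (Finset.mem_univ i)
    have := mul_le_mul_of_nonneg_left this (by positivity : 0 ≤ 2 * κ)
    linarith
  · have a1 := Finset.single_le_sum (f := fun i => ∑ j, c i j)
      (fun i _ => s2 i) (Finset.mem_univ i)
    have a2 := Finset.single_le_sum (f := fun j => c i j)
      (fun j _ => hc i j) (Finset.mem_univ j)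
    have := mul_le_mul_of_nonneg_left (a2.trans a1) (by positivity : 0 ≤ κ ^ 2)
    linarith

lemma resolvent_bounds {θ φ : 𝓢(E3, ℝ)} (h : φ - kap • ∑ i : Fin 3, ∂_{ee i} (∂_{ee i} φ) = θ) :
    sn φ ≤ sn θ ∧ (∀ i : Fin 3, 2 * kap * sn (∂_{ee i} φ) ≤ sn θ) ∧
      ∀ i j : Fin 3, kap ^ 2 * sn (∂_{ee i} (∂_{ee j} φ)) ≤ sn θ := by
  have e1 : ∀ i : Fin 3, ∫ y, φ y * (∂_{ee i} (∂_{ee i} φ)) y = - sn (∂_{ee i} φ) := by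
    intro i
    rw [sch_ibp, sn]; congr 2; funext y; ring
  have e2 : ∀ i j : Fin 3, ∫ y, (∂_{ee i} (∂_{ee i} φ)) y * (∂_{ee j} (∂_{ee j} φ)) y =
      sn (∂_{ee i} (∂_{ee j} φ)) := by
    intro i j
    rw [sch_ibp, sch_comm _ j i, sch_comm _ j i]
    have := sch_ibp (∂_{ee j} φ) (∂_{ee i} (∂_{ee j} φ)) (ee i)
    have h3 : ∀ a b : 𝓢(E3, ℝ), ∫ y, a y * b y = ∫ y, b y * a y := fun a b => by
      congr 1; funext y; ring
    rw [h3, this, neg_neg, sn]; congr 1; funext y; ring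
  have e3 : sn θ = sn φ - (2 * kap * ∑ i : Fin 3, ∫ y, φ y * (∂_{ee i} (∂_{ee i} φ)) y)
      + kap ^ 2 * ∑ i : Fin 3, ∑ j : Fin 3,
        ∫ y, (∂_{ee i} (∂_{ee i} φ)) y * (∂_{ee j} (∂_{ee j} φ)) y := by
    have i1 : Integrable (fun y => φ y ^ 2) := (φ.memLp 2).integrable_sq
    have i2 : Integrable (fun y => 2 * kap * ∑ i : Fin 3, φ y * (∂_{ee i} (∂_{ee i} φ)) y) :=
      (integrable_finsetSum _ fun i _ => sch_int φ (∂_{ee i} (∂_{ee i} φ))).const_mul _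
    have i3 : Integrable (fun y => kap ^ 2 * ∑ i : Fin 3, ∑ j : Fin 3,
        (∂_{ee i} (∂_{ee i} φ)) y * (∂_{ee j} (∂_{ee j} φ)) y) :=
      (integrable_finsetSum _ fun i _ => integrable_finsetSum _ fun j _ => sch_int _ _).const_mul _
    have hIntg : sn θ = ∫ y, ((φ y ^ 2 - (2 * kap * ∑ i : Fin 3, φ y * (∂_{ee i} (∂_{ee i} φ)) y))
        + kap ^ 2 * ∑ i : Fin 3, ∑ j : Fin 3,
          (∂_{ee i} (∂_{ee i} φ)) y * (∂_{ee j} (∂_{ee j} φ)) y) := by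
      rw [sn, ← h]
      congr 1; funext y
      simp only [sub_apply, smul_apply, Fin.sum_univ_three,
        add_apply, smul_eq_mul]
      ring
    have i12 : Integrable (fun y => φ y ^ 2 -
        (2 * kap * ∑ i : Fin 3, φ y * (∂_{ee i} (∂_{ee i} φ)) y)) := i1.sub i2
    rw [hIntg, integral_add i12 i3, integral_sub i1 i2, integral_const_mul,
      integral_const_mul, integral_finsetSum _ fun i _ => sch_int φ (∂_{ee i} (∂_{ee i} φ)),
      integral_finsetSum _ fun i _ => integrable_finsetSum _ fun j _ => sch_int _ _]
    congr 2
    congr 1; funext i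
    rw [integral_finsetSum _ fun j _ => sch_int _ _]
  simp only [e1, e2] at e3
  have hk := kap_pos
  have n0 : ∀ ψ, 0 ≤ sn ψ := fun ψ => integral_nonneg fun y => sq_nonneg _
  exact resolvent_alg hk (n0 _) (fun i => n0 (∂_{ee i} φ)) (fun i j => n0 (∂_{ee i} (∂_{ee j} φ))) e3

end

section

open scoped SchwartzMap LineDeriv Laplacian

/-! ### Reflection operators -/

/-- scaling of the normal variable -/
def Rs (s : ℝ) : E3 →L[ℝ] E3 :=
  ContinuousLinearMap.id ℝ E3 + (s - 1) • (EuclideanSpace.proj (0 : Fin 3) : E3 →L[ℝ] ℝ).smulRight (ee 0)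

lemma Rs_apply (s : ℝ) (y : E3) : Rs s y = y + ((s - 1) * y 0) • ee 0 := by
  simp [Rs, smul_smul]

lemma Rs_zero (s : ℝ) (y : E3) : (Rs s y) 0 = s * y 0 := by
  rw [Rs_apply]; simp [ee]; ring

lemma Rs_ee0 (s : ℝ) : Rs s (ee 0) = s • ee 0 := by
  rw [Rs_apply, ee_zero_zero]
  module

lemma Rs_eej (s : ℝ) {j : Fin 3} (hj : j ≠ 0) : Rs s (ee j) = ee j := by
  rw [Rs_apply, ee_zero_of_ne hj]; simp

lemma Rs_bdry (s : ℝ) {y : E3} (hy : y 0 = 0) : Rs s y = y := by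
  rw [Rs_apply, hy]; simp

lemma Rs_det {s : ℝ} (hs : s ≠ 0) : LinearMap.det (Rs s : E3 →ₗ[ℝ] E3) ≠ 0 := by
  have h : (Rs s : E3 →ₗ[ℝ] E3) ∘ₗ (Rs s⁻¹ : E3 →ₗ[ℝ] E3) = LinearMap.id := by
    ext1 y
    change Rs s (Rs s⁻¹ y) = y
    rw [Rs_apply, Rs_zero, Rs_apply]
    have : ((s⁻¹ - 1) * y 0) + ((s - 1) * (s⁻¹ * y 0)) = 0 := by field_simp; ring
    rw [add_assoc, ← add_smul, this]; simp
  intro h0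
  have := congrArg LinearMap.det h
  rw [LinearMap.det_comp, h0] at this
  simp at this

lemma Rs_L2 {s : ℝ} (hs : s ≠ 0) : ∃ C, 0 ≤ C ∧ ∀ ψ : E3 → ℝ, MemLp ψ 2 volume →
    MemLp (fun y => ψ (Rs s y)) 2 volume ∧ ∫ y, ψ (Rs s y) ^ 2 ≤ C * ∫ y, ψ y ^ 2 := by
  have hmap := Measure.map_linearMap_addHaar_eq_smul_addHaar (volume : Measure E3) (Rs_det hs)
  set c := |(LinearMap.det (Rs s : E3 →ₗ[ℝ] E3))⁻¹| with hc
  have hmap' : Measure.map (Rs s) (volume : Measure E3) = ENNReal.ofReal c • volume := hmap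
  refine ⟨c, abs_nonneg _, fun ψ hψ => ?_⟩
  have h1 : MemLp ψ 2 (Measure.map (Rs s) (volume : Measure E3)) := by
    rw [hmap']; exact hψ.smul_measure ENNReal.ofReal_ne_top
  have hm : AEMeasurable (Rs s) (volume : Measure E3) := (Rs s).continuous.measurable.aemeasurable
  refine ⟨(memLp_map_measure_iff h1.1 hm).1 h1, ?_⟩
  rw [← integral_map (f := fun y => ψ y ^ 2) hm (h1.1.pow 2), hmap', integral_smul_measure,
    ENNReal.toReal_ofReal (abs_nonneg _)]
  rfl

/-- reflection operator -/
def EE (a b : ℝ) (ψ : E3 → ℝ) : E3 → ℝ := fun y => ψ y + a * ψ (Rs (-1) y) + b * ψ (Rs (-2) y)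

lemma EE_L2 (a b : ℝ) : ∃ C, 0 ≤ C ∧ ∀ ψ : E3 → ℝ, MemLp ψ 2 volume →
    MemLp (EE a b ψ) 2 volume ∧ ∫ y, EE a b ψ y ^ 2 ≤ C * ∫ y, ψ y ^ 2 := by
  obtain ⟨C, hC, h⟩ := Rs_L2 (s := -1) (by norm_num)
  obtain ⟨D, hD, k⟩ := Rs_L2 (s := -2) (by norm_num)
  refine ⟨3 * (1 + a ^ 2 * C + b ^ 2 * D), by positivity, fun ψ hψ => ?_⟩
  obtain ⟨h1, h2⟩ := h ψ hψ
  obtain ⟨k1, k2⟩ := k ψ hψ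
  have hm : MemLp (EE a b ψ) 2 volume := (hψ.add (h1.const_mul a)).add (k1.const_mul b)
  refine ⟨hm, ?_⟩
  have i0 := hψ.integrable_sq
  have i1 := h1.integrable_sq
  have i2 := k1.integrable_sq
  have : ∫ y, EE a b ψ y ^ 2 ≤ ∫ y, (3 * (ψ y ^ 2) + (3 * a ^ 2) * ψ (Rs (-1) y) ^ 2
      + (3 * b ^ 2) * ψ (Rs (-2) y) ^ 2) := by
    refine integral_mono hm.integrable_sq
      (((i0.const_mul _).add (i1.const_mul _)).add (i2.const_mul _)) fun y => ?_
    simp only [EE]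
    nlinarith [sq_nonneg (ψ y - a * ψ (Rs (-1) y)), sq_nonneg (ψ y - b * ψ (Rs (-2) y)),
      sq_nonneg (a * ψ (Rs (-1) y) - b * ψ (Rs (-2) y))]
  have e1 := integral_add ((i0.const_mul 3).add (i1.const_mul (3 * a ^ 2))) (i2.const_mul (3 * b ^ 2))
  have e2 := integral_add (i0.const_mul 3) (i1.const_mul (3 * a ^ 2))
  simp only [Pi.add_apply, integral_const_mul] at e1 e2
  rw [e1, e2] at this
  nlinarith [mul_le_mul_of_nonneg_left h2 (by positivity : 0 ≤ 3 * a ^ 2),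
    mul_le_mul_of_nonneg_left k2 (by positivity : 0 ≤ 3 * b ^ 2)]

lemma pd_comp_Rs {ψ : E3 → ℝ} (hψ : Differentiable ℝ ψ) (s : ℝ) (i : Fin 3) (y : E3) :
    fderiv ℝ (fun y => ψ (Rs s y)) y (ee i) = fderiv ℝ ψ (Rs s y) (Rs s (ee i)) := by
  have : fderiv ℝ (ψ ∘ Rs s) y = _ := fderiv_comp y (hψ _) (Rs s).differentiableAt
  change fderiv ℝ (ψ ∘ Rs s) y (ee i) = _
  rw [this, ContinuousLinearMap.fderiv]; rfl

lemma pd_EE_aux {ψ : E3 → ℝ} (hψ : Differentiable ℝ ψ) (a b : ℝ) (i : Fin 3) (y : E3) :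
    pd i (EE a b ψ) y = fderiv ℝ ψ y (ee i) + a * fderiv ℝ ψ (Rs (-1) y) (Rs (-1) (ee i))
      + b * fderiv ℝ ψ (Rs (-2) y) (Rs (-2) (ee i)) := by
  have h1 : Differentiable ℝ (fun y => ψ (Rs (-1) y)) := hψ.comp (Rs (-1)).differentiable
  have h2 : Differentiable ℝ (fun y => ψ (Rs (-2) y)) := hψ.comp (Rs (-2)).differentiable
  rw [← pd_comp_Rs hψ, ← pd_comp_Rs hψ]
  have := (((hψ y).hasFDerivAt.add ((h1 y).hasFDerivAt.const_mul a)).add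
    ((h2 y).hasFDerivAt.const_mul b)).fderiv
  change fderiv ℝ (EE a b ψ) y (ee i) = _
  have e : EE a b ψ = ((ψ + fun y => a * ψ (Rs (-1) y)) + fun y => b * ψ (Rs (-2) y)) := rfl
  rw [e, this]
  simp

lemma pd0_EE {ψ : E3 → ℝ} (hψ : Differentiable ℝ ψ) (a b : ℝ) :
    pd 0 (EE a b ψ) = EE (-a) (-2 * b) (pd 0 ψ) := by
  funext y
  rw [pd_EE_aux hψ, Rs_ee0, Rs_ee0, map_smul, map_smul, EE]
  simp only [smul_eq_mul, pd_def]
  ring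

lemma pdj_EE {ψ : E3 → ℝ} (hψ : Differentiable ℝ ψ) (a b : ℝ) {j : Fin 3} (hj : j ≠ 0) :
    pd j (EE a b ψ) = EE a b (pd j ψ) := by
  funext y
  rw [pd_EE_aux hψ, Rs_eej _ hj, Rs_eej _ hj, EE]
  simp only [pd_def]

lemma EE_cd {ψ : E3 → ℝ} {n : ℕ∞} (hψ : ContDiff ℝ n ψ) (a b : ℝ) : ContDiff ℝ n (EE a b ψ) :=
  (hψ.add (contDiff_const.mul (hψ.comp (Rs (-1)).contDiff))).add
    (contDiff_const.mul (hψ.comp (Rs (-2)).contDiff))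

lemma dd_ind {ψ : E3 → ℝ} (hψ : Differentiable ℝ ψ) (i : Fin 3) :
    dd i (Hc.indicator ψ) = Hc.indicator (pd i ψ) := by
  refine ZO.ext dd_out (fun y hy => by simp [hy]) fun y hy => ?_
  rw [dd_apply hy, indicator_of_mem hy, pd_def,
    ← (hψ y).fderivWithin (uniq_Hc y hy)]
  congr 1
  exact fderivWithin_congr (fun z hz => indicator_of_mem hz _) (indicator_of_mem hy _)

lemma SS0_ind {f : E3 → ℝ} (hf : MemLp f 2 volume) : SS 0 (Hc.indicator f) ≤ ∫ y, f y ^ 2 := by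
  rw [SS_zero]
  refine integral_mono (hf.indicator isClosed_Hc.measurableSet).integrable_sq hf.integrable_sq
    fun y => ?_
  by_cases hy : y ∈ Hc
  · simp [hy]
  · simp [hy, sq_nonneg]

lemma HS1_ind {ψ : E3 → ℝ} (hψ : ContDiff ℝ 1 ψ) (h0 : MemLp ψ 2 volume)
    (h1 : ∀ i, MemLp (pd i ψ) 2 volume) : HS 1 (Hc.indicator ψ) := by
  refine ⟨?_, fun y hy => by simp [hy], h0.indicator isClosed_Hc.measurableSet, fun i => ?_⟩
  · exact (hψ.contDiffOn.congr (fun z hz => indicator_of_mem hz _)).of_le (by norm_num)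
  · rw [dd_ind (hψ.differentiable (by norm_num))]
    exact (h1 i).indicator isClosed_Hc.measurableSet

lemma SS1_ind {ψ : E3 → ℝ} (hψ : ContDiff ℝ 1 ψ) (h0 : MemLp ψ 2 volume)
    (h1 : ∀ i, MemLp (pd i ψ) 2 volume) {B : ℝ} (hB0 : ∫ y, ψ y ^ 2 ≤ B)
    (hB1 : ∀ i, ∫ y, pd i ψ y ^ 2 ≤ B) : SS 1 (Hc.indicator ψ) ≤ 4 * B := by
  rw [SS_succ, Fin.sum_univ_three]
  simp only [dd_ind (hψ.differentiable (by norm_num))]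
  linarith [SS0_ind h0, SS0_ind (h1 0), SS0_ind (h1 1), SS0_ind (h1 2), hB1 0, hB1 1, hB1 2]

end

section

open scoped SchwartzMap LineDeriv Laplacian

lemma sch_pd (ψ : 𝓢(E3, ℝ)) (i : Fin 3) : pd i ψ = ∂_{ee i} ψ := by
  funext y; rfl

lemma blk (a b : ℝ) (hab : 1 + a + b = 0) : ∃ C, 0 ≤ C ∧ ∀ (ψ : 𝓢(E3, ℝ)) (B : ℝ), sn ψ ≤ B →
    (∀ i : Fin 3, sn (∂_{ee i} ψ) ≤ B) →
    HS 1 (Hc.indicator (EE a b ψ)) ∧ ZB (Hc.indicator (EE a b ψ)) ∧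
      SS 1 (Hc.indicator (EE a b ψ)) ≤ C * B := by
  obtain ⟨C, hC, h⟩ := EE_L2 a b
  obtain ⟨D, hD, k⟩ := EE_L2 (-a) (-2 * b)
  refine ⟨4 * (C + D), by positivity, fun ψ B hB hB' => ?_⟩
  have hB0 : 0 ≤ B := le_trans (integral_nonneg fun y => sq_nonneg _) hB
  have hd : Differentiable ℝ ψ := ψ.differentiable
  have hcd : ContDiff ℝ 1 (EE a b ψ) := EE_cd (n := 1) (ψ.smooth 1) a b
  have h0 := h ψ (ψ.memLp 2)
  have hp : ∀ i, MemLp (pd i (EE a b ψ)) 2 volume ∧ ∫ y, pd i (EE a b ψ) y ^ 2 ≤ (C + D) * B := by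
    intro i
    by_cases hi : i = 0
    · subst hi
      rw [pd0_EE hd, sch_pd]
      obtain ⟨q1, q2⟩ := k _ ((∂_{ee 0} ψ).memLp 2)
      refine ⟨q1, q2.trans ?_⟩
      have := mul_le_mul_of_nonneg_left (hB' 0) hD
      simp only [sn] at this
      nlinarith [mul_nonneg hC hB0]
    · rw [pdj_EE hd _ _ hi, sch_pd]
      obtain ⟨q1, q2⟩ := h _ ((∂_{ee i} ψ).memLp 2)
      refine ⟨q1, q2.trans ?_⟩
      have := mul_le_mul_of_nonneg_left (hB' i) hC
      simp only [sn] at this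
      nlinarith [mul_nonneg hD hB0]
  refine ⟨HS1_ind hcd h0.1 fun i => (hp i).1, ?_, ?_⟩
  · intro y hy
    rw [indicator_of_mem (show y ∈ Hc from hy.ge), EE, Rs_bdry _ hy, Rs_bdry _ hy]
    linear_combination ψ y * hab
  · rw [mul_assoc]
    refine SS1_ind hcd h0.1 (fun i => (hp i).1) ?_ fun i => (hp i).2
    refine h0.2.trans ?_
    have := mul_le_mul_of_nonneg_left hB hC
    simp only [sn] at this
    nlinarith [mul_nonneg hD hB0]

lemma EE_sub (a b : ℝ) (f g : E3 → ℝ) : EE a b (f - g) = EE a b f - EE a b g := by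
  funext y; simp only [EE, Pi.sub_apply]; ring

lemma null_bdry : ∀ᵐ y : E3, y 0 ≠ 0 := by
  have h : (volume : Measure E3) {y : E3 | y 0 = 0} = 0 := by
    have := Measure.addHaar_submodule (volume : Measure E3)
      (LinearMap.ker ((EuclideanSpace.proj (0 : Fin 3) : E3 →L[ℝ] ℝ) : E3 →ₗ[ℝ] ℝ)) ?_
    · exact this
    · intro hT
      have : ee 0 ∈ LinearMap.ker ((EuclideanSpace.proj (0 : Fin 3) : E3 →L[ℝ] ℝ) : E3 →ₗ[ℝ] ℝ) := by
        rw [hT]; trivial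
      have h2 : (ee 0) 0 = 0 := this
      rw [ee_zero_zero] at h2
      norm_num at h2
  rw [ae_iff]
  simpa using h

/-- density with squared norms -/
lemma exists_schwartz {F : E3 → ℝ} (hF : MemLp F 2 volume) {ε : ℝ} (hε : 0 < ε) :
    ∃ θ : 𝓢(E3, ℝ), ∫ y, (θ y - F y) ^ 2 ≤ ε := by
  obtain ⟨g, hg1, hg2, hg3⟩ := hF.exist_eLpNorm_sub_le (by norm_num) (by norm_num)
    (ε := Real.sqrt ε) (Real.sqrt_pos.2 hε)
  refine ⟨hg1.toSchwartzMap hg2, ?_⟩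
  have hgL : MemLp g 2 volume := (hg2.continuous).memLp_of_hasCompactSupport hg1
  have hm : MemLp (F - g) 2 volume := hF.sub hgL
  have e := hm.eLpNorm_eq_integral_rpow_norm (by norm_num) (by norm_num)
  rw [e, ENNReal.ofReal_le_ofReal_iff (Real.sqrt_nonneg _)] at hg3
  have e2 : ∫ y, ‖(F - g) y‖ ^ (ENNReal.toReal 2) = ∫ y, (g y - F y) ^ 2 := by
    congr 1; funext y
    simp only [ENNReal.toReal_ofNat, Real.rpow_ofNat, Pi.sub_apply, Real.norm_eq_abs, sq_abs]
    ring
  rw [e2] at hg3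
  have hn : 0 ≤ ∫ y, (g y - F y) ^ 2 := integral_nonneg fun y => sq_nonneg _
  have h3 : Real.sqrt (∫ y, (g y - F y) ^ 2) ≤ Real.sqrt ε := by
    rw [Real.sqrt_eq_rpow]
    simpa using hg3
  exact (Real.sqrt_le_sqrt_iff hε.le).1 h3

lemma sch_bounds : ∃ b, 0 ≤ b ∧ ∀ θ φ : 𝓢(E3, ℝ),
    φ - kap • ∑ i : Fin 3, ∂_{ee i} (∂_{ee i} φ) = θ → sn φ ≤ b * sn θ ∧
    (∀ i : Fin 3, sn (∂_{ee i} φ) ≤ b * sn θ) ∧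
      ∀ i j : Fin 3, sn (∂_{ee i} (∂_{ee j} φ)) ≤ b * sn θ := by
  have hk := kap_pos
  have key : ∀ t s c : ℝ, 0 < c → 0 ≤ s → c * t ≤ s → c⁻¹ ≤ 1 + 1 / (2 * kap) + 1 / kap ^ 2 →
      t ≤ (1 + 1 / (2 * kap) + 1 / kap ^ 2) * s := by
    intro t s c hc hs h h2
    have : t ≤ c⁻¹ * s := by
      rw [inv_mul_eq_div, le_div_iff₀ hc]; linarith
    exact this.trans (mul_le_mul_of_nonneg_right h2 hs)
  have z1 : 0 ≤ 1 / (2 * kap) := by positivity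
  have z2 : 0 ≤ 1 / kap ^ 2 := by positivity
  refine ⟨1 + 1 / (2 * kap) + 1 / kap ^ 2, by positivity, fun θ φ h => ?_⟩
  obtain ⟨r1, r2, r3⟩ := resolvent_bounds h
  have n0 : 0 ≤ sn θ := integral_nonneg fun y => sq_nonneg _
  refine ⟨key _ _ 1 one_pos n0 (by linarith) (by rw [inv_one]; linarith),
    fun i => key _ _ (2 * kap) (by positivity) n0 (r2 i) (by rw [← one_div]; linarith),
    fun i j => key _ _ (kap ^ 2) (by positivity) n0 (r3 i j) (by rw [← one_div]; linarith)⟩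

def VV (φ : 𝓢(E3, ℝ)) (a : Fin 3) : E3 → ℝ :=
  if a = 0 then Hc.indicator (EE (-3) 2 (∂_{ee a} φ : 𝓢(E3, ℝ)))
    else Hc.indicator (EE 3 (-4) (∂_{ee a} φ : 𝓢(E3, ℝ)))

lemma dd_VV (φ : 𝓢(E3, ℝ)) (a : Fin 3) : dd a (VV φ a) =
    Hc.indicator (EE 3 (-4) (∂_{ee a} (∂_{ee a} φ) : 𝓢(E3, ℝ))) := by
  by_cases ha : a = 0
  · subst ha
    rw [VV, if_pos rfl]
    rw [dd_ind ((EE_cd (n := 1) (SchwartzMap.smooth _ 1) _ _).differentiable (by norm_num)),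
      pd0_EE (SchwartzMap.differentiable _), sch_pd]
    norm_num
  · rw [VV, if_neg ha]
    rw [dd_ind ((EE_cd (n := 1) (SchwartzMap.smooth _ 1) _ _).differentiable (by norm_num)),
      pdj_EE (SchwartzMap.differentiable _) _ _ ha, sch_pd]

lemma VV_bounds : ∃ C, 0 ≤ C ∧ ∀ θ φ : 𝓢(E3, ℝ),
    φ - kap • ∑ i : Fin 3, ∂_{ee i} (∂_{ee i} φ) = θ →
    (∀ a, HS 1 (VV φ a) ∧ ZB (VV φ a) ∧ SS 1 (VV φ a) ≤ C * sn θ) ∧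
      HS 1 (Hc.indicator (EE 3 (-4) φ)) ∧ ZB (Hc.indicator (EE 3 (-4) φ)) ∧
      SS 1 (Hc.indicator (EE 3 (-4) φ)) ≤ C * sn θ := by
  obtain ⟨C1, hC1, b1⟩ := blk 3 (-4) (by norm_num)
  obtain ⟨C2, hC2, b2⟩ := blk (-3) 2 (by norm_num)
  obtain ⟨b, hb, hbb⟩ := sch_bounds
  refine ⟨(C1 + C2) * b, by positivity, fun θ φ h => ?_⟩
  obtain ⟨q0, q1, q2⟩ := hbb θ φ h
  have n0 : 0 ≤ sn θ := integral_nonneg fun y => sq_nonneg _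
  have m1 : C1 * (b * sn θ) ≤ (C1 + C2) * b * sn θ := by
    rw [mul_assoc]; gcongr; linarith
  have m2 : C2 * (b * sn θ) ≤ (C1 + C2) * b * sn θ := by
    rw [mul_assoc]; gcongr; linarith
  obtain ⟨p1, p2, p3⟩ := b1 φ _ q0 q1
  refine ⟨fun a => ?_, p1, p2, p3.trans m1⟩
  by_cases ha : a = 0
  · rw [VV, if_pos ha]
    obtain ⟨p1, p2, p3⟩ := b2 (∂_{ee a} φ) _ (q1 a) fun i => q2 i a
    exact ⟨p1, p2, p3.trans m2⟩
  · rw [VV, if_neg ha]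
    obtain ⟨p1, p2, p3⟩ := b1 (∂_{ee a} φ) _ (q1 a) fun i => q2 i a
    exact ⟨p1, p2, p3.trans m1⟩

lemma VV_eq {θ φ : 𝓢(E3, ℝ)} (hφ : φ - kap • ∑ i : Fin 3, ∂_{ee i} (∂_{ee i} φ) = θ)
    {F : E3 → ℝ} (hz : ZO F) :
    (fun y => (∑ a, (-kap) • dd a (VV φ a) + Hc.indicator (EE 3 (-4) φ) - F) y ^ 2) =ᵐ[volume]
        fun y => (Hc.indicator (EE 3 (-4) (⇑θ - F))) y ^ 2 := by
  filter_upwards [null_bdry] with y hy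
  congr 1
  by_cases hyH : y ∈ Hc
  · have hpos : 0 < y 0 := lt_of_le_of_ne hyH (Ne.symm hy)
    have F1 : F (Rs (-1) y) = 0 := hz _ (by
      intro h; have h' : 0 ≤ (Rs (-1) y) 0 := h
      rw [Rs_zero] at h'; linarith)
    have F2 : F (Rs (-2) y) = 0 := hz _ (by
      intro h; have h' : 0 ≤ (Rs (-2) y) 0 := h
      rw [Rs_zero] at h'; linarith)
    have hθ : ∀ x, θ x = φ x - kap * ((∂_{ee 0} (∂_{ee 0} φ)) x + (∂_{ee 1} (∂_{ee 1} φ)) x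
        + (∂_{ee 2} (∂_{ee 2} φ)) x) := by
      intro x
      rw [← hφ]
      simp only [sub_apply, smul_apply, add_apply, Fin.sum_univ_three, smul_eq_mul]
    simp only [dd_VV, Fin.sum_univ_three, Pi.add_apply, Pi.sub_apply, Pi.smul_apply,
      indicator_of_mem hyH, EE_sub, smul_eq_mul]
    simp only [EE, F1, F2, hθ]
    ring
  · simp [dd_VV, hyH, hz y hyH, Fin.sum_univ_three]

lemma necas : ∃ C, 0 ≤ C ∧ ∀ F : E3 → ℝ, MemLp F 2 volume → ZO F → 0 < SS 0 F →
    ∃ (W : Fin 3 → E3 → ℝ) (r : E3 → ℝ), (∀ a, HS 1 (W a) ∧ ZB (W a) ∧ SS 1 (W a) ≤ C * SS 0 F) ∧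
      HS 1 r ∧ ZB r ∧ SS 1 r ≤ C * SS 0 F ∧ SS 0 (∑ a, dd a (W a) + r - F) ≤ SS 0 F / 4 := by
  obtain ⟨C1, hC1, b1⟩ := VV_bounds
  obtain ⟨C3, hC3, b3⟩ := EE_L2 3 (-4)
  let δ : ℝ := min 1 (1 / (4 * (C3 + 1)))
  have hδ : 0 < δ := lt_min one_pos (by positivity)
  have hδ1 : δ ≤ 1 := min_le_left _ _
  have hδ2 : C3 * δ ≤ 1 / 4 := by
    have : δ ≤ 1 / (4 * (C3 + 1)) := min_le_right _ _
    calc C3 * δ ≤ C3 * (1 / (4 * (C3 + 1))) := by gcongr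
      _ ≤ 1 / 4 := by rw [mul_one_div, div_le_div_iff₀ (by positivity) (by norm_num)]; linarith
  obtain ⟨K, hK, hKc⟩ := SS_coef_le (m := 1) (c := fun _ => -kap) (BC.const (-kap))
  refine ⟨(1 + K) * (C1 * 4), by positivity, fun F hF hz hS => ?_⟩
  obtain ⟨θ, hθ⟩ := exists_schwartz hF (ε := δ * SS 0 F) (by positivity)
  obtain ⟨φ, hφ⟩ := exists_resolvent θ
  have hθF : MemLp (⇑θ - F) 2 volume := (θ.memLp 2).sub hF
  have hsn : sn θ ≤ 4 * SS 0 F := by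
    have : sn θ ≤ ∫ y, (2 * (θ y - F y) ^ 2 + 2 * F y ^ 2) := by
      refine integral_mono (θ.memLp 2).integrable_sq
        ((hθF.integrable_sq.const_mul 2).add (hF.integrable_sq.const_mul 2)) fun y => ?_
      simp only
      nlinarith [sq_nonneg (θ y - 2 * F y)]
    have e2 := integral_add (hθF.integrable_sq.const_mul 2) (hF.integrable_sq.const_mul 2)
    simp only [Pi.sub_apply, integral_const_mul] at e2
    rw [e2] at this
    have : δ * SS 0 F ≤ 1 * SS 0 F := by gcongr
    rw [SS_zero] at *
    linarith
  obtain ⟨hV, p1, p2, p3⟩ := b1 θ φ hφ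
  have hC1n : C1 * sn θ ≤ C1 * 4 * SS 0 F := by
    rw [mul_assoc]; gcongr
  have hpos : 0 ≤ C1 * 4 * SS 0 F := by positivity
  refine ⟨fun a => (-kap) • VV φ a, Hc.indicator (EE 3 (-4) φ), fun a => ⟨(hV a).1.smul _, ?_, ?_⟩,
    p1, p2, ?_, ?_⟩
  · intro y hy
    simp [(hV a).2.1 y hy]
  · refine (hKc _ (hV a).1).trans ?_
    have := mul_le_mul_of_nonneg_left ((hV a).2.2.trans hC1n) hK
    nlinarith
  · refine (p3.trans hC1n).trans ?_
    have h2 := mul_nonneg hK hpos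
    nlinarith
  · have hsm : ∀ a, dd a ((-kap) • VV φ a) = (-kap) • dd a (VV φ a) :=
      fun a => dd_smul _ (hV a).1.diff
    simp only [hsm]
    rw [SS_zero, integral_congr_ae (VV_eq hφ hz)]
    have := SS0_ind (b3 _ hθF).1
    rw [SS_zero] at this
    refine this.trans ((b3 _ hθF).2.trans ?_)
    have h5 := mul_le_mul_of_nonneg_left hθ hC3
    have h6 : C3 * (δ * SS 0 F) ≤ SS 0 F / 4 := by nlinarith
    exact h5.trans h6

end

section

/-! ### Bilinear bounds -/

lemma cs_int {f g : E3 → ℝ} (hf : MemLp f 2 volume) (hg : MemLp g 2 volume) :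
    |∫ y, (f * g) y| ≤ √(SS 0 f) * √(SS 0 g) := by
  have h := integral_mul_norm_le_Lp_mul_Lq (μ := (volume : Measure E3)) (f := f) (g := g)
    Real.HolderConjugate.two_two (by simpa using hf) (by simpa using hg)
  have h1 : |∫ y, (f * g) y| ≤ ∫ y, ‖f y‖ * ‖g y‖ := by
    refine (norm_integral_le_integral_norm (fun y => (f * g) y)).trans_eq ?_
    congr 1; funext y; simp [abs_mul]
  refine h1.trans (h.trans_eq ?_)
  simp [SS_zero, Real.sqrt_eq_rpow]

/-- bilinear bound -/
def PB {α : Type*} (P : α → Prop) (A B : α → ℝ) (I : α → ℝ) : Prop :=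
  ∃ C, 0 ≤ C ∧ ∀ d, P d → |I d| ≤ C * (√(A d) * √(B d))

namespace PB
variable {α : Type*} {P : α → Prop} {A B : α → ℝ} {I J : α → ℝ} {F G : α → E3 → ℝ}

lemma mul {k l : ℕ} (hF : BD P A k F) (hG : BD P B l G) : PB P A B (fun d => ∫ y, (F d * G d) y) := by
  obtain ⟨C, hC, h⟩ := hF
  obtain ⟨D, hD, k⟩ := hG
  refine ⟨√C * √D, by positivity, fun d hd => ?_⟩
  refine (cs_int (h d hd).1.mem (k d hd).1.mem).trans ?_
  have h1 : √(SS 0 (F d)) ≤ √C * √(A d) := by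
    rw [← Real.sqrt_mul hC]; exact Real.sqrt_le_sqrt ((SS_mono (Nat.zero_le _) _).trans (h d hd).2)
  have h2 : √(SS 0 (G d)) ≤ √D * √(B d) := by
    rw [← Real.sqrt_mul hD]; exact Real.sqrt_le_sqrt ((SS_mono (Nat.zero_le _) _).trans (k d hd).2)
  calc _ ≤ (√C * √(A d)) * (√D * √(B d)) := by gcongr
    _ = _ := by ring

lemma add (hI : PB P A B I) (hJ : PB P A B J) : PB P A B (fun d => I d + J d) := by
  obtain ⟨C, hC, h⟩ := hI
  obtain ⟨D, hD, k⟩ := hJ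
  refine ⟨C + D, by positivity, fun d hd => (abs_add_le _ _).trans ?_⟩
  rw [add_mul]; exact add_le_add (h d hd) (k d hd)

lemma smul (c : ℝ) (hI : PB P A B I) : PB P A B (fun d => c * I d) := by
  obtain ⟨C, hC, h⟩ := hI
  refine ⟨|c| * C, by positivity, fun d hd => ?_⟩
  rw [abs_mul, mul_assoc]; exact mul_le_mul_of_nonneg_left (h d hd) (abs_nonneg _)

lemma neg (hI : PB P A B I) : PB P A B (fun d => - I d) := by
  simpa using hI.smul (-1)

lemma sub (hI : PB P A B I) (hJ : PB P A B J) : PB P A B (fun d => I d - J d) := by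
  simpa [sub_eq_add_neg] using hI.add hJ.neg

lemma sum3 {I : Fin 3 → α → ℝ} (h : ∀ i, PB P A B (I i)) : PB P A B (fun d => ∑ i, I i d) := by
  have := ((h 0).add (h 1)).add (h 2)
  simpa [Fin.sum_univ_three] using this

lemma congr (hI : PB P A B I) (h : ∀ d, P d → J d = I d) : PB P A B J := by
  obtain ⟨C, hC, k⟩ := hI
  exact ⟨C, hC, fun d hd => by rw [h d hd]; exact k d hd⟩

lemma mono {A' B' : α → ℝ} (hI : PB P A B I) (hA : ∀ d, P d → A d ≤ A' d)
    (hB : ∀ d, P d → B d ≤ B' d) : PB P A' B' I := by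
  obtain ⟨C, hC, k⟩ := hI
  refine ⟨C, hC, fun d hd => (k d hd).trans ?_⟩
  have h1 := Real.sqrt_le_sqrt (hA d hd)
  have h2 := Real.sqrt_le_sqrt (hB d hd)
  gcongr

end PB

lemma BD.pull {α β : Type*} {P : α → Prop} {R : α → ℝ} {n : ℕ} {F : α → E3 → ℝ} (h : BD P R n F)
    (pr : β → α) {P' : β → Prop} (hP : ∀ e, P' e → P (pr e)) :
    BD P' (fun e => R (pr e)) n (fun e => F (pr e)) := by
  obtain ⟨C, hC, k⟩ := h
  exact ⟨C, hC, fun d hd => k _ (hP d hd)⟩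

end

section

variable {m : Fin 3 → E3 → ℝ} {μ ph : ℝ}

def XX (m : Fin 3 → E3 → ℝ) (d : Dat) : ℝ :=
  ∑ j, ∑ i, ∑ l, (if j = 0 then 0 else SS 0 (DD m l (dd j (d.1 i))))

def R1 (μ ph : ℝ) (m : Fin 3 → E3 → ℝ) (d : Dat) : ℝ := RR μ ph m 0 d + XX m d

lemma XX_le (d : Dat) : 0 ≤ XX m d ∧ ∀ j ≠ 0, ∀ i l, SS 0 (DD m l (dd j (d.1 i))) ≤ XX m d := by
  let t : Fin 3 → Fin 3 → Fin 3 → ℝ := fun j i l => if j = 0 then 0 else SS 0 (DD m l (dd j (d.1 i)))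
  have h0 : ∀ j i l, 0 ≤ t j i l := by
    intro j i l
    simp only [t]
    split_ifs
    · exact le_rfl
    · exact SS_nonneg _ _
  have h1 : ∀ j i, 0 ≤ ∑ l, t j i l := fun j i => Finset.sum_nonneg fun l _ => h0 j i l
  have h2 : ∀ j, 0 ≤ ∑ i, ∑ l, t j i l := fun j => Finset.sum_nonneg fun i _ => h1 j i
  have h3 : 0 ≤ ∑ j, ∑ i, ∑ l, t j i l := Finset.sum_nonneg fun j _ => h2 j
  refine ⟨h3, fun j hj i l => ?_⟩
  have e : t j i l = SS 0 (DD m l (dd j (d.1 i))) := by simp only [t, if_neg hj]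
  rw [← e]
  calc t j i l ≤ ∑ l, t j i l := Finset.single_le_sum (fun l _ => h0 j i l) (Finset.mem_univ l)
    _ ≤ ∑ i, ∑ l, t j i l := Finset.single_le_sum (f := fun i => ∑ l, t j i l) (fun i _ => h1 j i) (Finset.mem_univ i)
    _ ≤ _ := Finset.single_le_sum (f := fun j => ∑ i, ∑ l, t j i l) (fun j _ => h2 j) (Finset.mem_univ j)

lemma BD.toR1 {n : ℕ} {F : Dat → E3 → ℝ} (h : BD (PP 0) (RR μ ph m 0) n F) :
    BD (PP 0) (R1 μ ph m) n F :=
  h.trans ⟨1, zero_le_one, fun d _ => by rw [one_mul, R1]; linarith [(XX_le (m := m) d).1]⟩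

lemma dd_eq_DD (hm : Co m) (a : Fin 3) (f : E3 → ℝ) : dd a f = DD m a f + m a * DD m 0 f := by
  unfold DD; rw [hm.zero]; ring

lemma BD.DDz (hm : Co m) {j : Fin 3} (hj : j ≠ 0) (i l : Fin 3) :
    BD (PP 0) (R1 μ ph m) 0 (fun d => _root_.DD m l (dd j (d.1 i))) := by
  refine BD.of_le (fun d hd => HS.DD hm l (by norm_num) ((hd.1 i).ddd j)) fun d _ => ?_
  have := (XX_le (m := m) d).2 j hj i l
  have h2 := (RR_terms (μ := μ) (ph := ph) (m := m) 0 d).1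
  rw [R1]; linarith

lemma BD.z1 (hm : Co m) {j : Fin 3} (hj : j ≠ 0) (i : Fin 3) :
    BD (PP 0) (R1 μ ph m) 1 (fun d => dd j (d.1 i)) := by
  refine BD.succ (BD.v0 i j).toR1 (fun a => ?_) fun d hd => (hd.1 i).ddd j
  refine BD.congr ?_ fun d _ => dd_eq_DD hm a _
  exact (BD.DDz hm hj i a).add ((BD.DDz hm hj i 0).coef (hm.bcn a (by norm_num)))

lemma BD.f0 (hm : Co m) (i l : Fin 3) :
    BD (PP 0) (RR μ ph m 0) 0 (fun d => _root_.DD m l (d.1 i)) :=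
  (BD.v0 i l).sub ((BD.v0 i 0).coef (hm.bcn l (by norm_num)))

lemma BD.djf (hm : Co m) {j : Fin 3} (hj : j ≠ 0) (i l : Fin 3) :
    BD (PP 0) (R1 μ ph m) 0 (fun d => dd j (_root_.DD m l (d.1 i))) := by
  refine BD.congr ?_ fun d hd => dd_DD hm (hd.1 i) j l
  exact (BD.DDz hm hj i l).sub ((BD.v0 i 0).toR1.coef (((hm.bc l).mono (by norm_num : 0 + 1 ≤ 6)).pd j))

/-- the momentum equation tested -/
lemma test_eq (hm : Co m) {d : Dat} (hd : PP 0 d) (i : Fin 3) {w : E3 → ℝ} (hw : HS 0 w) :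
    ph * ∫ y, (DD m i d.2 * w) y = (∫ y, (GF μ ph m i d * w) y) +
      μ * ∑ l, ∫ y, (DD m l (DD m l (d.1 i)) * w) y := by
  have hG := (HS_G (μ := μ) (ph := ph) hm i (k := 0) (by norm_num) hd).intmul hw
  have hL : ∀ l, Integrable (DD m l (DD m l (d.1 i)) * w) := fun l =>
    (HS.DD (n := 0) hm l (by norm_num) (HS.DD hm l (by norm_num) (hd.1 i))).intmul hw
  rw [← integral_finsetSum _ fun l _ => hL l, ← integral_const_mul, ← integral_const_mul,
    ← integral_add hG ((integrable_finsetSum _ fun l _ => hL l).const_mul μ)]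
  congr 1; funext y
  simp only [GF, Pi.add_apply, Pi.mul_apply, Pi.neg_apply, Pi.smul_apply, smul_eq_mul,
    Fin.sum_univ_three]
  ring

/-- admissible test functions -/
def PW (e : Dat × (E3 → ℝ)) : Prop := PP 0 e.1 ∧ HS 1 e.2 ∧ ZB e.2

lemma BD.w1 : BD PW (fun e => SS 1 e.2) 1 (fun e => e.2) :=
  BD.of_le (fun _ h => h.2.1) fun _ _ => le_rfl

lemma PB.testw (hm : Co m) (hp : 0 < ph) (i : Fin 3) :
    PB PW (fun e => R1 μ ph m e.1) (fun e => SS 1 e.2) (fun e => ∫ y, (DD m i e.1.2 * e.2) y) := by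
  have key : PB PW (fun e => R1 μ ph m e.1) (fun e => SS 1 e.2) (fun e => ph⁻¹ *
      ((∫ y, (GF μ ph m i e.1 * e.2) y) + μ * ∑ l, - ∫ y, (DD m l (e.1.1 i) * DD m l e.2) y)) := by
    refine PB.smul _ (PB.add ?_ (PB.smul _ (PB.sum3 fun l => PB.neg ?_)))
    · exact PB.mul ((BD.G hm i (by norm_num)).toR1.pull Prod.fst fun e h => h.1) BD.w1
    · exact PB.mul ((BD.f0 hm i l).toR1.pull Prod.fst fun e h => h.1) (BD.DD hm l (by norm_num) BD.w1)
  refine key.congr fun e he => ?_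
  rw [eq_inv_mul_iff_mul_eq₀ hp.ne', test_eq (μ := μ) hm he.1 i (he.2.1.mono (by norm_num))]
  simp only [ibpD hm (HS.DD hm _ (by norm_num) (he.1.1 i)) he.2.1 he.2.2]

lemma PB.testdw (hm : Co m) (hp : 0 < ph) (i : Fin 3) {j : Fin 3} (hj : j ≠ 0) :
    PB PW (fun e => R1 μ ph m e.1) (fun e => SS 1 e.2)
      (fun e => ∫ y, (DD m i e.1.2 * dd j e.2) y) := by
  have key : PB PW (fun e => R1 μ ph m e.1) (fun e => SS 1 e.2) (fun e => ph⁻¹ *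
      ((∫ y, (GF μ ph m i e.1 * dd j e.2) y) + μ * ∑ l,
        ((∫ y, (dd j (DD m l (e.1.1 i)) * DD m l e.2) y) +
          -∫ y, (DD m l (e.1.1 i) * dd 0 (pd j (m l) * e.2)) y))) := by
    refine PB.smul _ (PB.add ?_ (PB.smul _ (PB.sum3 fun l => PB.add ?_ (PB.neg ?_))))
    · exact PB.mul ((BD.G hm i (by norm_num)).toR1.pull Prod.fst fun e h => h.1) BD.w1.ddd
    · exact PB.mul ((BD.djf hm hj i l).pull Prod.fst fun e h => h.1) (BD.DD hm l (by norm_num) BD.w1)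
    · exact PB.mul ((BD.f0 hm i l).toR1.pull Prod.fst fun e h => h.1)
        (BD.ddd (BD.w1.coef (((hm.bc l).mono (by norm_num : 1 + 1 ≤ 6)).pd j)))
  refine key.congr fun e he => ?_
  rw [eq_inv_mul_iff_mul_eq₀ hp.ne', test_eq (μ := μ) hm he.1 i (he.2.1.ddd j)]
  have hb : ∀ l, BC 1 (pd j (m l)) := fun l => ((hm.bc l).mono (by norm_num : 1 + 1 ≤ 6)).pd j
  congr 3; funext l
  have hf : HS 1 (DD m l (e.1.1 i)) := HS.DD hm l (by norm_num) (he.1.1 i)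
  rw [lemXD hm hf he.2.1 he.2.2 hj, ibp hf (HS.coef (hb l) he.2.1) (a := 0)
    (Or.inr fun y hy => by simp [he.2.2 y hy])]

end

section

variable {m : Fin 3 → E3 → ℝ} {μ ph : ℝ}

lemma PB.coefw {A : Dat → ℝ} {I : Dat × (E3 → ℝ) → ℝ} {c : E3 → ℝ} (hc : BC 1 c)
    (h : PB PW (fun e => A e.1) (fun e => SS 1 e.2) I) :
    PB PW (fun e => A e.1) (fun e => SS 1 e.2) (fun e => I (e.1, c * e.2)) := by
  obtain ⟨C, hC, h⟩ := h
  obtain ⟨D, hD, k⟩ := SS_coef_le hc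
  refine ⟨C * √D, by positivity, fun e he => ?_⟩
  refine (h (e.1, c * e.2) ⟨he.1, HS.coef hc he.2.1, fun y hy => by simp [he.2.2 y hy]⟩).trans ?_
  have h1 : √(SS 1 (c * e.2)) ≤ √D * √(SS 1 e.2) := by
    rw [← Real.sqrt_mul hD]; exact Real.sqrt_le_sqrt (k _ he.2.1)
  calc _ ≤ C * (√(A e.1) * (√D * √(SS 1 e.2))) := by simp only; gcongr
    _ = _ := by ring

lemma PB.tq (hm : Co m) (hp : 0 < ph) (j : Fin 3) :
    PB PW (fun e => R1 μ ph m e.1) (fun e => SS 1 e.2) (fun e => ∫ y, (dd j e.1.2 * e.2) y) := by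
  have key := (PB.testw (μ := μ) hm hp j).add
    (PB.coefw (hm.bcn j (by norm_num)) (PB.testw (μ := μ) hm hp 0))
  refine key.congr fun e he => ?_
  have hq : ∀ i, HS 0 (DD m i e.1.2) := fun i => HS.DD hm i (by norm_num) he.1.2.1
  rw [← integral_add' ((hq j).intmul he.2.1)
    ((hq 0).intmul (HS.coef (hm.bcn j (by norm_num : 1 ≤ 6)) he.2.1))]
  congr 1; funext y
  rw [dd_eq_DD hm j]
  simp only [Pi.add_apply, Pi.mul_apply, Pi.sub_apply]; ring

lemma PB.tdq (hm : Co m) (hp : 0 < ph) (a : Fin 3) {j : Fin 3} (hj : j ≠ 0) :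
    PB PW (fun e => R1 μ ph m e.1) (fun e => SS 1 e.2)
      (fun e => ∫ y, (dd j e.1.2 * dd a e.2) y) := by
  have hb : BC 1 (pd j (m a)) := ((hm.bc a).mono (by norm_num : 1 + 1 ≤ 6)).pd j
  have hb' : BC 1 (m a) := hm.bcn a (by norm_num)
  have key := ((PB.testdw (μ := μ) hm hp a hj).add
    (PB.coefw hb' (PB.testdw (μ := μ) hm hp 0 hj))).sub (PB.coefw hb (PB.testw (μ := μ) hm hp 0))
  refine key.congr fun e he => ?_
  have hq : ∀ i, HS 0 (DD m i e.1.2) := fun i => HS.DD hm i (by norm_num) he.1.2.1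
  have i1 := (hq a).intmul (he.2.1.ddd j)
  have i2 := (hq 0).intmul ((HS.coef hb' he.2.1).ddd j)
  have i3 := (hq 0).intmul (HS.coef hb he.2.1)
  rw [← lemX he.1.2.1 he.2.1 he.2.2 hj, ← integral_add' i1 i2, ← integral_sub' (i1.add i2) i3]
  congr 1; funext y
  rw [dd_eq_DD hm a, dd_mul hb'.diff he.2.1.diff he.2.1.zo]
  simp only [Pi.add_apply, Pi.mul_apply, Pi.sub_apply]; ring

lemma R1_nonneg (d : Dat) : 0 ≤ R1 μ ph m d := by
  rw [R1]; linarith [(XX_le (m := m) d).1, (RR_terms (μ := μ) (ph := ph) (m := m) 0 d).1]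

lemma pressure (hm : Co m) (hp : 0 < ph) {j : Fin 3} (hj : j ≠ 0) :
    BD (PP 0) (R1 μ ph m) 0 (fun d => dd j d.2) := by
  obtain ⟨C, hC, hN⟩ := necas
  choose D hD hDb using fun a => PB.tdq (μ := μ) hm hp a hj
  obtain ⟨E, hE, hEb⟩ := PB.tq (μ := μ) hm hp j
  set L := (∑ a, D a + E) * √C with hL
  have hL0 : 0 ≤ L := mul_nonneg (add_nonneg (Finset.sum_nonneg fun a _ => hD a) hE) (Real.sqrt_nonneg _)
  refine ⟨4 * L ^ 2, by positivity, fun d hd => ⟨hd.2.1.ddd j, ?_⟩⟩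
  have hR := R1_nonneg (μ := μ) (ph := ph) (m := m) d
  have hF : HS 0 (dd j d.2) := hd.2.1.ddd j
  set F := dd j d.2 with hFdef
  rcases (SS_nonneg 0 F).eq_or_lt with h0 | h0
  · rw [← h0]; positivity
  obtain ⟨W, r, hW, hr1, hr2, hr3, hη⟩ := hN F hF.mem hF.zo h0
  set S := SS 0 F with hS
  set η := ∑ a, dd a (W a) + r - F with hηdef
  have hηH : HS 0 η := ((HS.sum3 fun a => (hW a).1.ddd a).add (hr1.mono (by norm_num))).sub hF
  have bW : ∀ a, |∫ y, (F * dd a (W a)) y| ≤ D a * (√(R1 μ ph m d) * (√C * √S)) := by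
    intro a
    refine (hDb a (d, W a) ⟨hd, (hW a).1, (hW a).2.1⟩).trans ?_
    have := hD a
    have h1 : √(SS 1 (W a)) ≤ √C * √S := by
      rw [← Real.sqrt_mul hC]; exact Real.sqrt_le_sqrt (hW a).2.2
    simp only; gcongr
  have br : |∫ y, (F * r) y| ≤ E * (√(R1 μ ph m d) * (√C * √S)) := by
    refine (hEb (d, r) ⟨hd, hr1, hr2⟩).trans ?_
    have h1 : √(SS 1 r) ≤ √C * √S := by
      rw [← Real.sqrt_mul hC]; exact Real.sqrt_le_sqrt hr3
    simp only; gcongr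
  have bη : |∫ y, (F * η) y| ≤ S / 2 := by
    refine (cs_int hF.mem hηH.mem).trans ?_
    have h1 : √(SS 0 η) ≤ √S / 2 := by
      rw [show √S / 2 = √(S / 4) by
        rw [Real.sqrt_div' _ (by norm_num), show (4:ℝ) = 2 ^ 2 by norm_num, Real.sqrt_sq (by norm_num)]]
      exact Real.sqrt_le_sqrt hη
    calc √S * √(SS 0 η) ≤ √S * (√S / 2) := by gcongr
      _ = S / 2 := by rw [← mul_div_assoc, Real.mul_self_sqrt h0.le]
  have eS : S = ∑ a, (∫ y, (F * dd a (W a)) y) + (∫ y, (F * r) y) - ∫ y, (F * η) y := by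
    have i1 : ∀ a, Integrable (F * dd a (W a)) := fun a => hF.intmul ((hW a).1.ddd a)
    have i2 : Integrable (F * r) := hF.intmul hr1
    have i3 : Integrable (F * η) := hF.intmul hηH
    rw [Fin.sum_univ_three, ← integral_add' (i1 0) (i1 1), ← integral_add' ((i1 0).add (i1 1)) (i1 2),
      ← integral_add' (((i1 0).add (i1 1)).add (i1 2)) i2,
      ← integral_sub' ((((i1 0).add (i1 1)).add (i1 2)).add i2) i3, hS, SS_zero]
    congr 1; funext y
    simp only [hηdef, Pi.add_apply, Pi.mul_apply, Pi.sub_apply, Fin.sum_univ_three]; ring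
  have hmain : S ≤ 2 * (L * (√(R1 μ ph m d) * √S)) := by
    have h1 := abs_le.1 (bW 0)
    have h2 := abs_le.1 (bW 1)
    have h3 := abs_le.1 (bW 2)
    have h4 := abs_le.1 br
    have h5 := abs_le.1 bη
    rw [Fin.sum_univ_three] at eS
    have e : L * (√(R1 μ ph m d) * √S) = D 0 * (√(R1 μ ph m d) * (√C * √S))
      + D 1 * (√(R1 μ ph m d) * (√C * √S)) + D 2 * (√(R1 μ ph m d) * (√C * √S))
      + E * (√(R1 μ ph m d) * (√C * √S)) := by
      rw [hL, Fin.sum_univ_three]; ring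
    rw [e]; linarith [h1.2, h2.2, h3.2, h4.2, h5.1]
  have hsS : 0 < √S := Real.sqrt_pos.2 h0
  have h6 : √S ≤ 2 * L * √(R1 μ ph m d) := by
    have : √S * √S ≤ (2 * L * √(R1 μ ph m d)) * √S := by
      rw [Real.mul_self_sqrt h0.le]; linarith
    exact le_of_mul_le_mul_right this hsS
  calc S = √S * √S := (Real.mul_self_sqrt h0.le).symm
    _ ≤ (2 * L * √(R1 μ ph m d)) * (2 * L * √(R1 μ ph m d)) := by gcongr
    _ = 4 * L ^ 2 * (√(R1 μ ph m d) * √(R1 μ ph m d)) := by ring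
    _ = _ := by rw [Real.mul_self_sqrt hR]

/-- everything at level zero controlled by `R1` -/
lemma allR1 (hm : Co m) (hμ : 0 < μ) (hp : 0 < ph) :
    (∀ a i b, BD (PP 0) (R1 μ ph m) 0 (fun d => dd b (dd a (d.1 i)))) ∧
      ∀ a, BD (PP 0) (R1 μ ph m) 0 (fun d => dd a d.2) := by
  have hq : ∀ j ≠ 0, BD (PP 0) (R1 μ ph m) 0 (fun d => dd j d.2) := fun j hj => pressure hm hp hj
  have hz : ∀ j ≠ 0, ∀ a i, BD (PP 0) (R1 μ ph m) 0 (fun d => dd a (dd j (d.1 i))) :=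
    fun j hj a i => (BD.z1 hm hj i).ddd
  have hz' : ∀ j ≠ 0, ∀ a i, BD (PP 0) (R1 μ ph m) 0 (fun d => dd j (dd a (d.1 i))) :=
    fun j hj a i => (hz j hj a i).congr fun d hd => (hd.1 i).comm j a
  have := alg_lemma hm hμ hp (k := 0) (by norm_num) (P := PP 0) (R := R1 μ ph m) (fun d h => h)
    (fun i => (BD.G hm i (by norm_num)).toR1) (BD.hh hm (by norm_num)).toR1.ddd hz' hq
    (fun a i => (BD.v0 i a).toR1)
  refine ⟨fun a i b => ?_, fun a => ?_⟩
  · by_cases ha : a = 0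
    · by_cases hb : b = 0
      · subst ha hb; exact this.1 i
      · exact hz' b hb a i
    · exact hz a ha b i
  · by_cases ha : a = 0
    · subst ha; exact this.2
    · exact hq a ha

end

section

variable {m : Fin 3 → E3 → ℝ} {μ ph : ℝ}

lemma BD.divz (hm : Co m) (j : Fin 3) :
    BD (PP 0) (RR μ ph m 0) 0 (fun d => ∑ i, _root_.DD m i (dd j (d.1 i))) := by
  have key : BD (PP 0) (RR μ ph m 0) 0
      (fun d => dd j (hhF m d) + ∑ i, pd j (m i) * dd 0 (d.1 i)) :=
    (BD.hh hm (by norm_num)).ddd.add (BD.sum3 fun i => (BD.v0 i 0).coef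
      (((hm.bc i).mono (by norm_num : 0 + 1 ≤ 6)).pd j))
  refine key.congr fun d hd => ?_
  unfold hhF
  rw [dd_sum3 fun l => (HS.DD (n := 1) hm l (by norm_num) (hd.1 l)).diff]
  simp only [dd_DD hm (hd.1 _), Fin.sum_univ_three]
  ring

lemma energy_i (hm : Co m) {d : Dat} (hd : PP 0 d) (i : Fin 3) {j : Fin 3} (hj : j ≠ 0) :
    μ * ∑ l, SS 0 (DD m l (dd j (d.1 i))) =
      ph * ((∫ y, (dd j d.2 * DD m i (dd j (d.1 i))) y) +
        ∫ y, ((pd j (m i) * dd j (d.1 i)) * dd 0 d.2) y)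
      - (∫ y, (GF μ ph m i d * dd j (dd j (d.1 i))) y)
      + μ * ∑ l, ((∫ y, ((pd j (m l) * dd 0 (d.1 i)) * DD m l (dd j (d.1 i))) y) +
        ∫ y, (DD m l (d.1 i) * dd 0 (pd j (m l) * dd j (d.1 i))) y) := by
  have hz : HS 1 (dd j (d.1 i)) := (hd.1 i).ddd j
  have hzb : ZB (dd j (d.1 i)) := fun y hy => dd_bdry (hd.1 i).diff (hd.2.2 i) hj y hy
  have t := test_eq (μ := μ) (ph := ph) hm hd i (hz.ddd j)
  have hb : ∀ l, BC 1 (pd j (m l)) := fun l => ((hm.bc l).mono (by norm_num : 1 + 1 ≤ 6)).pd j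
  have e : ∀ l, ∫ y, (DD m l (DD m l (d.1 i)) * dd j (dd j (d.1 i))) y =
      SS 0 (DD m l (dd j (d.1 i))) -
      ((∫ y, ((pd j (m l) * dd 0 (d.1 i)) * DD m l (dd j (d.1 i))) y) +
        ∫ y, (DD m l (d.1 i) * dd 0 (pd j (m l) * dd j (d.1 i))) y) := by
    intro l
    have hf : HS 1 (DD m l (d.1 i)) := HS.DD hm l (by norm_num) (hd.1 i)
    rw [lemXD hm hf hz hzb hj, ibp hf (HS.coef (hb l) hz) (a := 0)
      (Or.inr fun y hy => by simp [hzb y hy]), dd_DD hm (hd.1 i) j l, sub_mul]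
    have hD : HS 0 (DD m l (dd j (d.1 i))) := HS.DD hm l (by norm_num) hz
    have h0 : HS 0 (pd j (m l) * dd 0 (d.1 i)) :=
      HS.coef ((hb l).mono (by norm_num)) (((hd.1 i).ddd 0).mono (by norm_num))
    rw [integral_sub' (hD.intmul hD) (h0.intmul hD), SS_zero]
    have : ∫ y, (DD m l (dd j (d.1 i)) * DD m l (dd j (d.1 i))) y =
        ∫ y, DD m l (dd j (d.1 i)) y ^ 2 := by
      congr 1; funext y; simp only [Pi.mul_apply]; ring
    rw [this]; ring
  have q := lemXD hm hd.2.1 hz hzb (i := i) hj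
  have q2 : ∫ y, (dd 0 d.2 * (pd j (m i) * dd j (d.1 i))) y =
      ∫ y, ((pd j (m i) * dd j (d.1 i)) * dd 0 d.2) y := by rw [mul_comm]
  rw [q2] at q
  simp only [e] at t
  rw [Finset.sum_sub_distrib, q] at t
  linear_combination (-1 : ℝ) * t

lemma energy_j (hm : Co m) (hμ : 0 < μ) (hp : 0 < ph) {j : Fin 3} (hj : j ≠ 0) :
    PB (PP 0) (RR μ ph m 0) (R1 μ ph m)
      (fun d => ∑ i, ∑ l, SS 0 (DD m l (dd j (d.1 i)))) := by
  have hb : ∀ l, BC 1 (pd j (m l)) := fun l => ((hm.bc l).mono (by norm_num : 1 + 1 ≤ 6)).pd j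
  have hb0 : ∀ l, BC 0 (pd j (m l)) := fun l => (hb l).mono (by norm_num)
  have hq := (allR1 hm hμ hp).2
  have key : PB (PP 0) (RR μ ph m 0) (R1 μ ph m) (fun d => μ⁻¹ *
      (ph * ((∫ y, ((∑ i, DD m i (dd j (d.1 i))) * dd j d.2) y) +
        ∑ i, ∫ y, ((pd j (m i) * dd j (d.1 i)) * dd 0 d.2) y)
      - (∑ i, ∫ y, (GF μ ph m i d * dd j (dd j (d.1 i))) y)
      + μ * ∑ i, ∑ l, ((∫ y, ((pd j (m l) * dd 0 (d.1 i)) * DD m l (dd j (d.1 i))) y) +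
        ∫ y, (DD m l (d.1 i) * dd 0 (pd j (m l) * dd j (d.1 i))) y))) := by
    refine PB.smul _ (PB.add (PB.sub (PB.smul _ (PB.add ?_ (PB.sum3 fun i => ?_)))
      (PB.sum3 fun i => ?_)) (PB.smul _ (PB.sum3 fun i => PB.sum3 fun l => PB.add ?_ ?_)))
    · exact PB.mul (BD.divz hm j) (hq j)
    · exact PB.mul ((BD.v0 i j).coef (hb0 i)) (hq 0)
    · exact PB.mul (BD.G hm i (by norm_num)) (BD.z1 hm hj i).ddd
    · exact PB.mul ((BD.v0 i 0).coef (hb0 l)) (BD.DDz hm hj i l)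
    · exact PB.mul (BD.f0 hm i l) ((BD.z1 hm hj i).coef (hb l)).ddd
  refine key.congr fun d hd => ?_
  rw [eq_inv_mul_iff_mul_eq₀ hμ.ne', Finset.mul_sum]
  simp only [energy_i (ph := ph) hm hd _ hj]
  have i1 : ∀ i, Integrable (dd j d.2 * DD m i (dd j (d.1 i))) := fun i =>
    (hd.2.1.ddd j).intmul (HS.DD (n := 0) hm i (by norm_num) ((hd.1 i).ddd j))
  have e : ∫ y, ((∑ i, DD m i (dd j (d.1 i))) * dd j d.2) y =
      ∑ i, ∫ y, (dd j d.2 * DD m i (dd j (d.1 i))) y := by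
    rw [← integral_finsetSum _ fun i _ => i1 i]
    congr 1; funext y
    simp only [Pi.mul_apply, Pi.add_apply, Fin.sum_univ_three]; ring
  rw [e]
  simp only [Finset.sum_add_distrib, Finset.sum_sub_distrib, ← Finset.mul_sum, mul_add]

lemma XX_bound (hm : Co m) (hμ : 0 < μ) (hp : 0 < ph) :
    ∃ C, 0 ≤ C ∧ ∀ d, PP 0 d → R1 μ ph m d ≤ C * RR μ ph m 0 d := by
  have key : PB (PP 0) (RR μ ph m 0) (R1 μ ph m) (fun d => XX m d) := by
    refine PB.sum3 fun j => ?_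
    by_cases hj : j = 0
    · refine ⟨0, le_rfl, fun d _ => by simp [hj]⟩
    · simpa only [if_neg hj] using energy_j hm hμ hp hj
  obtain ⟨C, hC, h⟩ := key
  refine ⟨C ^ 2 + 2, by positivity, fun d hd => ?_⟩
  have hK := (RR_terms (μ := μ) (ph := ph) (m := m) 0 d).1
  have hX := (XX_le (m := m) d).1
  have hR := R1_nonneg (μ := μ) (ph := ph) (m := m) d
  have h1 := h d hd
  rw [abs_of_nonneg hX] at h1
  have e1 := Real.sq_sqrt hK
  have e2 := Real.sq_sqrt hR
  have n1 := Real.sqrt_nonneg (RR μ ph m 0 d)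
  have n2 := Real.sqrt_nonneg (R1 μ ph m d)
  have h2 : XX m d ^ 2 ≤ C ^ 2 * (RR μ ph m 0 d * R1 μ ph m d) := by
    calc XX m d ^ 2 ≤ (C * (√(RR μ ph m 0 d) * √(R1 μ ph m d))) ^ 2 := by gcongr
      _ = C ^ 2 * (√(RR μ ph m 0 d) ^ 2 * √(R1 μ ph m d) ^ 2) := by ring
      _ = _ := by rw [e1, e2]
  have hdef : R1 μ ph m d = RR μ ph m 0 d + XX m d := rfl
  rw [hdef] at h2 ⊢
  generalize RR μ ph m 0 d = K at *
  generalize XX m d = X at *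
  by_contra hcon
  push Not at hcon
  have h3 : (C ^ 2 + 1) * K < X := by linarith
  have hXp : 0 < X := lt_of_le_of_lt (by positivity) h3
  nlinarith [mul_lt_mul_of_pos_right h3 hXp, mul_nonneg hK hX, mul_nonneg (sq_nonneg C) hK,
    mul_le_mul_of_nonneg_left h3.le (mul_nonneg (sq_nonneg C) hK), mul_nonneg hK (sub_nonneg.2 h3.le),
    mul_nonneg (mul_nonneg (sq_nonneg C) hK) hK, mul_nonneg hK hK]

lemma main_base (hm : Co m) (hμ : 0 < μ) (hp : 0 < ph) : Main μ ph m 0 := by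
  obtain ⟨h1, h2⟩ := allR1 (m := m) hm hμ hp
  have hX := XX_bound (m := m) hm hμ hp
  refine ⟨fun i a => ?_, fun a => (h2 a).trans hX⟩
  exact BD.succ (BD.v0 i a) (fun b => (h1 a i b).trans hX) fun d hd => (hd.1 i).ddd a

theorem main_all (hm : Co m) (hμ : 0 < μ) (hp : 0 < ph) {k : ℕ} (hk : k ≤ 4) : Main μ ph m k := by
  induction k with
  | zero => exact main_base hm hμ hp
  | succ k ih => exact main_step hm hμ hp hk (ih (by omega))

end

section

/-! ### Flattening -/

def PM (M : E2 → ℝ) (y : E3) : ℝ := M (proj2 y)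
def Fl (M : E2 → ℝ) (y : E3) : E3 := y + PM M y • ee 0
def Fi (M : E2 → ℝ) (y : E3) : E3 := y - PM M y • ee 0
def mm (M : E2 → ℝ) (i : Fin 3) : E3 → ℝ := pd i (PM M)

def pL : E3 →L[ℝ] E2 :=
  (EuclideanSpace.proj (1 : Fin 3)).smulRight (EuclideanSpace.single (0 : Fin 2) (1:ℝ)) +
  (EuclideanSpace.proj (2 : Fin 3)).smulRight (EuclideanSpace.single (1 : Fin 2) (1:ℝ))

lemma proj2_eq : proj2 = pL := by
  funext x
  ext i
  fin_cases i <;> simp [proj2, pL]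

lemma proj2_add_ee (y : E3) (t : ℝ) : proj2 (y + t • ee 0) = proj2 y := by
  ext i
  fin_cases i <;> simp [proj2, ee]

variable {M : E2 → ℝ}

lemma PM_add_ee (y : E3) (t : ℝ) : PM M (y + t • ee 0) = PM M y := by
  simp [PM, proj2_add_ee]

lemma Fi_Fl (y : E3) : Fi M (Fl M y) = y := by
  unfold Fi Fl; rw [PM_add_ee]; simp

lemma Fl_Fi (y : E3) : Fl M (Fi M y) = y := by
  unfold Fi Fl
  rw [sub_eq_add_neg, ← neg_smul, PM_add_ee]; simp

lemma PM_smooth (hM : ContDiff ℝ (⊤ : ℕ∞) M) : ContDiff ℝ (⊤ : ℕ∞) (PM M) := by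
  have : PM M = M ∘ pL := by funext y; simp [PM, proj2_eq]
  rw [this]; exact hM.comp pL.contDiff

lemma Fl_smooth (hM : ContDiff ℝ (⊤ : ℕ∞) M) : ContDiff ℝ (⊤ : ℕ∞) (Fl M) :=
  contDiff_id.add ((PM_smooth hM).smul contDiff_const)

lemma Fi_smooth (hM : ContDiff ℝ (⊤ : ℕ∞) M) : ContDiff ℝ (⊤ : ℕ∞) (Fi M) :=
  contDiff_id.sub ((PM_smooth hM).smul contDiff_const)

lemma Fl_zero (y : E3) : Fl M y 0 = y 0 + PM M y := by simp [Fl, ee]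
lemma Fi_zero (y : E3) : Fi M y 0 = y 0 - PM M y := by simp [Fi, ee]
lemma PM_Fl (y : E3) : PM M (Fl M y) = PM M y := PM_add_ee _ _

lemma mem_Omg {x : E3} : x ∈ Omg M ↔ PM M x < x 0 := Iff.rfl

lemma Fl_mem (y : E3) : Fl M y ∈ Omg M ↔ 0 < y 0 := by
  rw [mem_Omg, PM_Fl, Fl_zero]; constructor <;> intro h <;> linarith

lemma Fi_pos (x : E3) : 0 < Fi M x 0 ↔ x ∈ Omg M := by
  rw [mem_Omg, Fi_zero, sub_pos]

lemma Fl_Hc (hM : ContDiff ℝ (⊤ : ℕ∞) M) : MapsTo (Fl M) Hc (closure (Omg M)) := by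
  intro y hy
  have h := Hc_subset_closure hy
  exact map_mem_closure (Fl_smooth hM).continuous h fun z hz => (Fl_mem z).2 hz

lemma Fl_bdry {y : E3} (hy : y 0 = 0) : Fl M y = gph M (proj2 y) := by
  ext i
  fin_cases i <;> simp [Fl, gph, ee, PM, proj2, hy]

lemma isOpen_Omg (hM : ContDiff ℝ (⊤ : ℕ∞) M) : IsOpen (Omg M) :=
  isOpen_lt (PM_smooth hM).continuous (cont_coord 0)

lemma mm_zero (hM : ContDiff ℝ (⊤ : ℕ∞) M) : mm M 0 = 0 := by
  funext y
  have h1 : HasFDerivAt (PM M) (fderiv ℝ (PM M) y) y := (smooth_diff (PM_smooth hM) y).hasFDerivAt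
  have h2 := h1.hasLineDerivAt (ee 0)
  have h3 : HasLineDerivAt ℝ (PM M) 0 y (ee 0) := by
    unfold HasLineDerivAt
    simp only [PM_add_ee]
    exact hasDerivAt_const _ _
  exact h2.lineDeriv.symm.trans h3.lineDeriv

lemma mm_ind (hM : ContDiff ℝ (⊤ : ℕ∞) M) (i : Fin 3) : pd 0 (mm M i) = 0 := by
  have hs := PM_smooth hM
  funext y
  have : pd 0 (pd i (PM M)) y = pd i (pd 0 (PM M)) y := by
    have h2 : ∀ i j : Fin 3, pd j (pd i (PM M)) y = fderiv ℝ (fderiv ℝ (PM M)) y (ee j) (ee i) := by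
      intro i j
      have hd : DifferentiableAt ℝ (fderiv ℝ (PM M)) y :=
        (hs.fderiv_right (m := (⊤ : ℕ∞)) (by norm_cast)).differentiable (by norm_num) y
      have : pd i (PM M) = fun z => fderiv ℝ (PM M) z (ee i) := rfl
      rw [pd_def, this, fderiv_clm_apply hd (differentiableAt_const _)]
      simp
    rw [h2, h2]
    exact (hs.contDiffAt.isSymmSndFDerivAt (by simp; norm_cast)).eq _ _
  change pd 0 (pd i (PM M)) y = 0
  have h0 : pd 0 (PM M) = fun _ => 0 := mm_zero hM
  rw [this, h0, pd_const]

/-! measure preservation -/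
lemma Fl_mp (hM : ContDiff ℝ (⊤ : ℕ∞) M) : MeasurePreserving (Fl M) volume volume := by
  have e1 := (EuclideanSpace.volume_preserving_symm_measurableEquiv_toLp (Fin 3))
  have e2 := volume_preserving_piFinSuccAbove (fun _ : Fin 3 => ℝ) 0
  have e3 : MeasurePreserving (Prod.swap : ℝ × (Fin 2 → ℝ) → _)
    (volume.prod volume) (volume.prod volume) := Measure.measurePreserving_swap
  have hg : Continuous fun w : Fin 2 → ℝ => M (WithLp.toLp 2 w) := by
    have := hM.continuous; fun_prop
  have e4 : MeasurePreserving (fun q : (Fin 2 → ℝ) × ℝ => (q.1, q.2 + M (WithLp.toLp 2 q.1)))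
      (volume.prod volume) (volume.prod volume) := by
    refine MeasurePreserving.skew_product (g := fun w t => t + M (WithLp.toLp 2 w)) (.id _) ?_ ?_
    · exact (measurable_snd.add (hg.measurable.comp measurable_fst))
    · exact Eventually.of_forall fun w => (measurePreserving_add_right volume _).map_eq
  have e5 : MeasurePreserving (Prod.swap : (Fin 2 → ℝ) × ℝ → _)
    (volume.prod volume) (volume.prod volume) := Measure.measurePreserving_swap
  have := e1.symm.comp (e2.symm.comp (e5.comp (e4.comp (e3.comp (e2.comp e1)))))
  have hfl : Fl M = (fun y => (MeasurableEquiv.toLp 2 (Fin 3 → ℝ)).symm.symm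
      ((MeasurableEquiv.piFinSuccAbove (fun _ : Fin 3 => ℝ) 0).symm (Prod.swap
        ((fun q : (Fin 2 → ℝ) × ℝ => (q.1, q.2 + M (WithLp.toLp 2 q.1)))
          (Prod.swap (MeasurableEquiv.piFinSuccAbove (fun _ : Fin 3 => ℝ) 0
            ((MeasurableEquiv.toLp 2 (Fin 3 → ℝ)).symm y))))))) := by
    funext y
    have hp : proj2 y = WithLp.toLp 2 (fun i : Fin 2 => y i.succ) := by
      ext i; fin_cases i <;> simp [proj2]
    ext i
    fin_cases i
    · simp [Fl, ee, PM, hp, MeasurableEquiv.piFinSuccAbove]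
      rfl
    · simp [Fl, ee, MeasurableEquiv.piFinSuccAbove]
      rfl
    · simp [Fl, ee, MeasurableEquiv.piFinSuccAbove]
      rfl
  rw [hfl]
  exact this

end

section

variable {M : E2 → ℝ}

/-- `F` on the closed half space represents `f` on `Ω` -/
structure RpS (M : E2 → ℝ) (n : ℕ) (F f : E3 → ℝ) : Prop where
  cd : ContDiffOn ℝ n F Hc
  zo : ZO F
  eq : ∀ y : E3, 0 < y 0 → F y = f (Fl M y)

lemma RpS.cdOn {n : ℕ} {F f : E3 → ℝ} (hM : ContDiff ℝ (⊤ : ℕ∞) M) (h : RpS M n F f) :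
    ContDiffOn ℝ n f (Omg M) := by
  have h1 : ContDiffOn ℝ n (F ∘ Fi M) (Omg M) :=
    h.cd.comp ((Fi_smooth hM).of_le (by norm_cast; exact le_top)).contDiffOn fun x hx =>
      H_subset_Hc ((Fi_pos x).2 hx)
  refine h1.congr fun x hx => ?_
  rw [Function.comp_apply, h.eq _ ((Fi_pos x).2 hx), Fl_Fi]

lemma RpS.cdAt {n : ℕ} {F f : E3 → ℝ} (hM : ContDiff ℝ (⊤ : ℕ∞) M) (h : RpS M n F f) {x : E3}
    (hx : x ∈ Omg M) : ContDiffAt ℝ n f x :=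
  (h.cdOn hM).contDiffAt ((isOpen_Omg hM).mem_nhds hx)

lemma Fl_fderiv (hM : ContDiff ℝ (⊤ : ℕ∞) M) (y : E3) (i : Fin 3) :
    fderiv ℝ (Fl M) y (ee i) = ee i + mm M i y • ee 0 := by
  have h1 : HasFDerivAt (PM M) (fderiv ℝ (PM M) y) y := (smooth_diff (PM_smooth hM) y).hasFDerivAt
  have h2 : HasFDerivAt (Fl M) _ y := (hasFDerivAt_id y).add (h1.smul_const (ee 0))
  rw [h2.fderiv]
  rfl

lemma RpS.pd {n : ℕ} {F f : E3 → ℝ} (hM : ContDiff ℝ (⊤ : ℕ∞) M) (h : RpS M (n + 1) F f)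
    (i : Fin 3) : RpS M n (DD (mm M) i F) (_root_.pd i f) := by
  refine ⟨?_, ?_, ?_⟩
  · refine (h.cd.dd i).sub (ContDiffOn.mul ?_ (h.cd.dd 0))
    exact ((smooth_pd (PM_smooth hM) i).of_le (by norm_cast; exact le_top)).contDiffOn
  · intro y hy
    simp [DD, dd_out y hy]
  · intro y hy
    have hf : DifferentiableAt ℝ f (Fl M y) :=
      (h.cdAt hM ((Fl_mem y).2 hy)).differentiableAt (by norm_cast)
    have hF : F =ᶠ[nhds y] f ∘ Fl M := by
      filter_upwards [isOpen_H.mem_nhds hy] with z hz using h.eq z hz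
    have key : ∀ j, dd j F y = _root_.pd j f (Fl M y) + mm M j y * _root_.pd 0 f (Fl M y) := by
      intro j
      rw [dd_interior hy, hF.fderiv_eq, fderiv_comp _ hf
        ((Fl_smooth hM).differentiable (by norm_num) y)]
      simp [Fl_fderiv hM, pd_def]
    simp only [DD, Pi.sub_apply, Pi.mul_apply, key, mm_zero hM]
    simp

lemma RpS.add {n : ℕ} {F f G g : E3 → ℝ} (h : RpS M n F f) (k : RpS M n G g) :
    RpS M n (F + G) (fun x => f x + g x) :=
  ⟨h.cd.add k.cd, h.zo.add k.zo, fun y hy => by simp [h.eq y hy, k.eq y hy]⟩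

lemma RpS.smul {n : ℕ} {F f : E3 → ℝ} (h : RpS M n F f) (a : ℝ) :
    RpS M n (a • F) (fun x => a * f x) :=
  ⟨h.cd.const_smul a, fun y hy => by simp [h.zo y hy], fun y hy => by simp [h.eq y hy]⟩

lemma RpS.mono {n m : ℕ} (hmn : m ≤ n) {F f : E3 → ℝ} (h : RpS M n F f) : RpS M m F f :=
  ⟨h.cd.of_le (by norm_cast), h.zo, h.eq⟩

lemma RpS.sum3 {n : ℕ} {F f : Fin 3 → E3 → ℝ} (h : ∀ i, RpS M n (F i) (f i)) :
    RpS M n (∑ i, F i) (fun x => ∑ i, f i x) := by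
  simp only [Fin.sum_univ_three]
  exact ((h 0).add (h 1)).add (h 2)

def tr (M : E2 → ℝ) (f : E3 → ℝ) : E3 → ℝ := Hc.indicator (f ∘ Fl M)

lemma RpS.tr {n : ℕ} (hM : ContDiff ℝ (⊤ : ℕ∞) M) {f : E3 → ℝ}
    (hf : ContDiffOn ℝ n f (closure (Omg M))) : RpS M n (tr M f) f := by
  refine ⟨?_, ?_, ?_⟩
  · have := hf.comp ((Fl_smooth hM).of_le (by norm_cast; exact le_top)).contDiffOn (Fl_Hc hM)
    exact this.congr fun y hy => by simp [_root_.tr, hy]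
  · intro y hy; simp [_root_.tr, hy]
  · intro y hy
    have : y ∈ Hc := H_subset_Hc hy
    simp [_root_.tr, this]

/-! integrals -/

lemma RpS.ae {n : ℕ} {F f : E3 → ℝ} (h : RpS M n F f) :
    F =ᵐ[volume] fun y => (Omg M).indicator f (Fl M y) := by
  filter_upwards [null_bdry] with y hy
  rcases lt_or_gt_of_ne hy with h1 | h1
  · rw [h.zo y (by simpa [Hc] using h1), indicator_of_notMem]
    rw [Fl_mem]; exact not_lt.2 h1.le
  · rw [h.eq y h1, indicator_of_mem ((Fl_mem y).2 h1)]

lemma Fl_emb (hM : ContDiff ℝ (⊤ : ℕ∞) M) : MeasurableEmbedding (Fl M) :=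
  (MeasurableEquiv.mk ⟨Fl M, Fi M, Fi_Fl, Fl_Fi⟩ (Fl_smooth hM).continuous.measurable
    (Fi_smooth hM).continuous.measurable).measurableEmbedding

lemma RpS.SS0 {n : ℕ} {F f : E3 → ℝ} (hM : ContDiff ℝ (⊤ : ℕ∞) M) (h : RpS M n F f) :
    SS 0 F = ∫ x in Omg M, f x ^ 2 := by
  rw [SS_zero, ← integral_indicator (isOpen_Omg hM).measurableSet,
    ← (Fl_mp hM).integral_comp (Fl_emb hM) ((Omg M).indicator fun x => f x ^ 2)]
  refine integral_congr_ae ?_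
  filter_upwards [h.ae] with y hy
  rw [hy]
  by_cases hx : Fl M y ∈ Omg M <;> simp [hx]

lemma RpS.mem {n : ℕ} {F f : E3 → ℝ} (hM : ContDiff ℝ (⊤ : ℕ∞) M) (h : RpS M n F f)
    (hi : IntegrableOn (fun x => f x ^ 2) (Omg M)) : MemLp F 2 volume := by
  have h1 : MemLp ((Omg M).indicator f) 2 volume := by
    rw [memLp_indicator_iff_restrict (isOpen_Omg hM).measurableSet, memLp_two_iff_integrable_sq]
    · exact hi
    · exact (h.cdOn hM).continuousOn.aestronglyMeasurable (isOpen_Omg hM).measurableSet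
  exact (memLp_congr_ae h.ae).2 (h1.comp_measurePreserving (Fl_mp hM))

lemma RpS.int {n : ℕ} {F f : E3 → ℝ} (hM : ContDiff ℝ (⊤ : ℕ∞) M) (h : RpS M n F f)
    (hF : MemLp F 2 volume) : IntegrableOn (fun x => f x ^ 2) (Omg M) := by
  rw [← integrable_indicator_iff (isOpen_Omg hM).measurableSet,
    ← (Fl_mp hM).integrable_comp_emb (Fl_emb hM)]
  refine hF.integrable_sq.congr ?_
  filter_upwards [h.ae] with y hy
  rw [hy]
  by_cases hx : Fl M y ∈ Omg M <;> simp [hx]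

/-! pointwise norms -/

lemma norm_pd_le {n : ℕ} {f : E3 → ℝ} {x : E3} (hf : ContDiffAt ℝ (n + 1 : ℕ) f x) (i : Fin 3) :
    ‖iteratedFDeriv ℝ n (pd i f) x‖ ≤ ‖iteratedFDeriv ℝ (n + 1) f x‖ := by
  have h1 : ContDiffAt ℝ n (fderiv ℝ f) x := hf.fderiv_right (by norm_cast)
  have h2 := (ContinuousLinearMap.apply ℝ ℝ (ee i)).norm_iteratedFDeriv_comp_left h1 le_rfl
  rw [norm_iteratedFDeriv_fderiv] at h2
  have h3 : ‖(ContinuousLinearMap.apply ℝ ℝ (ee i) : (E3 →L[ℝ] ℝ) →L[ℝ] ℝ)‖ ≤ 1 := by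
    refine ContinuousLinearMap.opNorm_le_bound _ zero_le_one fun L => ?_
    have := L.le_opNorm (ee i)
    simpa [ee] using this
  exact h2.trans (mul_le_of_le_one_left (norm_nonneg _) h3)

lemma norm_comb_le {G : Type*} [NormedAddCommGroup G] [NormedSpace ℝ G] {n : ℕ}
    {φ : Fin 3 → E3 → ℝ} {x : E3} (hφ : ∀ i, ContDiffAt ℝ n (φ i) x) (b : Fin 3 → G)
    (hb : ∀ i, ‖b i‖ ≤ 1) {g : E3 → G} (hg : g =ᶠ[nhds x] fun y => ∑ i, φ i y • b i) :
    ‖iteratedFDeriv ℝ n g x‖ ^ 2 ≤ 3 * ∑ i, ‖iteratedFDeriv ℝ n (φ i) x‖ ^ 2 := by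
  rw [(hg.iteratedFDeriv (𝕜 := ℝ) n).eq_of_nhds]
  have e : (fun y => ∑ i, φ i y • b i) =
      ∑ i, ((ContinuousLinearMap.id ℝ ℝ).smulRight (b i)) ∘ (φ i) := by
    funext y; simp
  rw [e, iteratedFDeriv_sum_apply fun i _ => (ContinuousLinearMap.contDiff _).contDiffAt.comp x (hφ i)]
  have h1 : ∀ i, ‖iteratedFDeriv ℝ n (((ContinuousLinearMap.id ℝ ℝ).smulRight (b i)) ∘ (φ i)) x‖ ≤
      ‖iteratedFDeriv ℝ n (φ i) x‖ := by
    intro i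
    refine (ContinuousLinearMap.norm_iteratedFDeriv_comp_left _ (hφ i) le_rfl).trans ?_
    refine mul_le_of_le_one_left (norm_nonneg _) ?_
    refine ContinuousLinearMap.opNorm_le_bound _ zero_le_one fun t => ?_
    simp only [ContinuousLinearMap.smulRight_apply, ContinuousLinearMap.id_apply, norm_smul, one_mul]
    exact mul_le_of_le_one_right (norm_nonneg _) (hb i)
  have h2 := _root_.norm_sum_le (Finset.univ : Finset (Fin 3))
    (fun i => iteratedFDeriv ℝ n (((ContinuousLinearMap.id ℝ ℝ).smulRight (b i)) ∘ (φ i)) x)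
  have h3 := h2.trans (Finset.sum_le_sum fun i _ => h1 i)
  refine (pow_le_pow_left₀ (norm_nonneg _) h3 2).trans ?_
  simp only [Fin.sum_univ_three]
  generalize ‖iteratedFDeriv ℝ n (φ 0) x‖ = a
  generalize ‖iteratedFDeriv ℝ n (φ 1) x‖ = b
  generalize ‖iteratedFDeriv ℝ n (φ 2) x‖ = c
  nlinarith [sq_nonneg (a - b), sq_nonneg (b - c), sq_nonneg (a - c)]

lemma norm_succ_le {n : ℕ} {f : E3 → ℝ} {x : E3} (hf : ContDiffAt ℝ (n + 1 : ℕ) f x) :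
    ‖iteratedFDeriv ℝ (n + 1) f x‖ ^ 2 ≤ 3 * ∑ i, ‖iteratedFDeriv ℝ n (pd i f) x‖ ^ 2 := by
  rw [← norm_iteratedFDeriv_fderiv]
  have h1 : ContDiffAt ℝ n (fderiv ℝ f) x := hf.fderiv_right (by norm_cast)
  refine norm_comb_le (b := fun i => (EuclideanSpace.proj i : E3 →L[ℝ] ℝ))
    (φ := fun i => pd i f) (fun i => h1.clm_apply contDiffAt_const) ?_ (Eventually.of_forall fun y => ?_)
  · intro i
    refine ContinuousLinearMap.opNorm_le_bound _ zero_le_one fun v => ?_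
    simpa using PiLp.norm_apply_le v i
  · ext v
    have hv : v = ∑ i, v i • ee i := by
      ext j; simp [ee, Fin.sum_univ_three]; fin_cases j <;> simp
    conv_lhs => rw [hv]
    simp [map_sum, map_smul, mul_comm, pd_def]

end

section

variable {M : E2 → ℝ}

lemma cont_iter {G : Type*} [NormedAddCommGroup G] [NormedSpace ℝ G] {U : Set E3} (hU : IsOpen U)
    {f : E3 → G} {n j : ℕ} (hj : j ≤ n) (hf : ContDiffOn ℝ n f U) :
    ContinuousOn (fun x => ‖iteratedFDeriv ℝ j f x‖ ^ 2) U := by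
  have h := hf.continuousOn_iteratedFDerivWithin (m := j) (by norm_cast) hU.uniqueDiffOn
  refine ((h.congr fun x hx => ?_).norm).pow 2
  exact (iteratedFDerivWithin_of_isOpen j hU hx).symm

lemma int_dom {U : Set E3} (hU : IsOpen U) {φ ψ : E3 → ℝ} (hφ : ContinuousOn φ U)
    (h0 : ∀ x, 0 ≤ φ x) (h : ∀ x ∈ U, φ x ≤ ψ x) (hψ : IntegrableOn ψ U) :
    IntegrableOn φ U ∧ ∫ x in U, φ x ≤ ∫ x in U, ψ x := by
  have h1 : IntegrableOn φ U := by
    refine Integrable.mono' hψ (hφ.aestronglyMeasurable hU.measurableSet) ?_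
    filter_upwards [ae_restrict_mem hU.measurableSet] with x hx
    rw [Real.norm_of_nonneg (h0 x)]; exact h x hx
  exact ⟨h1, setIntegral_mono_on h1 hψ hU.measurableSet h⟩

lemma transfer_up (hM : ContDiff ℝ (⊤ : ℕ∞) M) (hm : Co (mm M)) {n : ℕ} (hn : n ≤ 6) :
    ∃ C, 0 ≤ C ∧ ∀ F f, RpS M n F f →
      (∀ j ≤ n, IntegrableOn (fun x => ‖iteratedFDeriv ℝ j f x‖ ^ 2) (Omg M)) →
      HS n F ∧ SS n F ≤ C * ∑ j ∈ Finset.range (n + 1),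
        ∫ x in Omg M, ‖iteratedFDeriv ℝ j f x‖ ^ 2 := by
  have hU := isOpen_Omg hM
  induction n with
  | zero =>
    refine ⟨1, zero_le_one, fun F f h hi => ?_⟩
    have h0 := hi 0 le_rfl
    simp only [norm_iteratedFDeriv_zero, Real.norm_eq_abs, sq_abs] at h0
    refine ⟨⟨h.cd, h.zo, h.mem hM h0⟩, ?_⟩
    simp [h.SS0 hM]
  | succ n ih =>
    obtain ⟨C, hC, ih⟩ := ih (by omega)
    choose D hD hDD using fun i => SS_coef_le (hm.bcn i (show n ≤ 6 by omega))
    have hS : 0 ≤ ∑ i, 2 * (C + D i * C) :=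
      Finset.sum_nonneg fun i _ => by have := hD i; positivity
    refine ⟨1 + ∑ i, 2 * (C + D i * C), by positivity, fun F f h hi => ?_⟩
    set W := ∑ j ∈ Finset.range (n + 1 + 1), ∫ x in Omg M, ‖iteratedFDeriv ℝ j f x‖ ^ 2 with hW
    have hnn : ∀ j, 0 ≤ ∫ x in Omg M, ‖iteratedFDeriv ℝ j f x‖ ^ 2 := fun j =>
      integral_nonneg fun x => by positivity
    have h0 := hi 0 (by omega)
    simp only [norm_iteratedFDeriv_zero, Real.norm_eq_abs, sq_abs] at h0
    have hW0 : 0 ≤ W := Finset.sum_nonneg fun j _ => hnn j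
    have key : ∀ i, HS n (DD (mm M) i F) ∧ SS n (DD (mm M) i F) ≤ C * W := by
      intro i
      have hp := h.pd hM i
      have hd : ∀ j ≤ n, IntegrableOn (fun x => ‖iteratedFDeriv ℝ j (pd i f) x‖ ^ 2) (Omg M) ∧
          ∫ x in Omg M, ‖iteratedFDeriv ℝ j (pd i f) x‖ ^ 2 ≤
            ∫ x in Omg M, ‖iteratedFDeriv ℝ (j + 1) f x‖ ^ 2 := by
        intro j hj
        refine int_dom hU (cont_iter hU hj (hp.cdOn hM)) (fun x => by positivity) (fun x hx => ?_)
          (hi (j + 1) (by omega))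
        exact pow_le_pow_left₀ (norm_nonneg _) (norm_pd_le
          ((h.cdAt hM hx).of_le (by norm_cast; omega)) i) 2
      obtain ⟨h1, h2⟩ := ih _ _ hp fun j hj => (hd j hj).1
      refine ⟨h1, h2.trans (mul_le_mul_of_nonneg_left ?_ hC)⟩
      rw [hW, Finset.sum_range_succ' _ (n + 1)]
      refine (Finset.sum_le_sum fun j hj => (hd j ?_).2).trans (le_add_of_nonneg_right (hnn 0))
      have := Finset.mem_range.1 hj; omega
    have kd : ∀ i, HS n (dd i F) ∧ SS n (dd i F) ≤ 2 * (C + D i * C) * W := by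
      intro i
      have hc := HS.coef (hm.bcn i (show n ≤ 6 by omega)) (key 0).1
      rw [dd_eq_DD hm i F]
      refine ⟨(key i).1.add hc, (SS_add_le (key i).1 hc).trans ?_⟩
      have h1 := (key i).2
      have h2 := hDD i _ (key 0).1
      have h3 := mul_le_mul_of_nonneg_left (key 0).2 (hD i)
      linarith
    refine ⟨HS.mk_succ h.cd h.zo (h.mem hM h0) fun i => (kd i).1, ?_⟩
    rw [SS_succ, add_mul, Finset.sum_mul, one_mul]
    refine add_le_add ?_ (Finset.sum_le_sum fun i _ => (kd i).2)
    rw [h.SS0 hM, hW, Finset.sum_range_succ']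
    simp only [norm_iteratedFDeriv_zero, Real.norm_eq_abs, sq_abs]
    exact le_add_of_nonneg_left (Finset.sum_nonneg fun j _ => hnn _)

lemma transfer_down (hM : ContDiff ℝ (⊤ : ℕ∞) M) (hm : Co (mm M)) {n : ℕ} (hn : n ≤ 6) :
    ∃ C, 0 ≤ C ∧ ∀ F f, RpS M n F f → HS n F →
      IntegrableOn (fun x => ‖iteratedFDeriv ℝ n f x‖ ^ 2) (Omg M) ∧
      ∫ x in Omg M, ‖iteratedFDeriv ℝ n f x‖ ^ 2 ≤ C * SS n F := by
  have hU := isOpen_Omg hM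
  induction n with
  | zero =>
    refine ⟨1, zero_le_one, fun F f h hF => ?_⟩
    simp only [norm_iteratedFDeriv_zero, Real.norm_eq_abs, sq_abs]
    exact ⟨h.int hM hF.mem, by rw [h.SS0 hM, one_mul]⟩
  | succ n ih =>
    obtain ⟨C, hC, ih⟩ := ih (by omega)
    have hid : BD (fun F => HS (n + 1) F) (fun F => SS (n + 1) F) (n + 1) (fun F => F) :=
      ⟨1, zero_le_one, fun F hF => ⟨hF, by rw [one_mul]⟩⟩
    choose D hD hDD using fun i => BD.DD hm i (by omega) hid
    refine ⟨3 * ∑ i, C * D i, mul_nonneg (by norm_num)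
      (Finset.sum_nonneg fun i _ => mul_nonneg hC (hD i)), fun F f h hF => ?_⟩
    have hk := fun i => ih _ _ (h.pd hM i) (hDD i F hF).1
    have h2 : IntegrableOn (fun x => 3 * ∑ i, ‖iteratedFDeriv ℝ n (pd i f) x‖ ^ 2) (Omg M) :=
      (integrable_finsetSum _ fun i _ => (hk i).1).const_mul 3
    obtain ⟨h3, h4⟩ := int_dom hU (cont_iter hU le_rfl (h.cdOn hM)) (fun x => by positivity)
      (fun x hx => norm_succ_le (h.cdAt hM hx)) h2
    refine ⟨h3, h4.trans ?_⟩
    rw [integral_const_mul, integral_finsetSum _ fun i _ => (hk i).1, mul_assoc, Finset.sum_mul]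
    refine mul_le_mul_of_nonneg_left (Finset.sum_le_sum fun i _ => ?_) (by norm_num)
    have h5 := (hk i).2
    have h6 := mul_le_mul_of_nonneg_left (hDD i F hF).2 hC
    linarith

end

section

variable {M : E2 → ℝ}

lemma norm_cmp_le {n : ℕ} {u : E3 → E3} {x : E3} (hu : ContDiffAt ℝ n u x) (l : Fin 3) :
    ‖iteratedFDeriv ℝ n (fun y => u y l) x‖ ≤ ‖iteratedFDeriv ℝ n u x‖ := by
  have h2 := (EuclideanSpace.proj l : E3 →L[ℝ] ℝ).norm_iteratedFDeriv_comp_left hu le_rfl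
  have h3 : ‖(EuclideanSpace.proj l : E3 →L[ℝ] ℝ)‖ ≤ 1 := by
    refine ContinuousLinearMap.opNorm_le_bound _ zero_le_one fun v => ?_
    simpa using PiLp.norm_apply_le v l
  exact h2.trans (mul_le_of_le_one_left (norm_nonneg _) h3)

lemma norm_vec_le {n : ℕ} {u : E3 → E3} {x : E3} (hu : ContDiffAt ℝ n u x) :
    ‖iteratedFDeriv ℝ n u x‖ ^ 2 ≤ 3 * ∑ l, ‖iteratedFDeriv ℝ n (fun y => u y l) x‖ ^ 2 := by
  refine norm_comb_le (φ := fun l y => u y l) (b := ee) (fun l => ?_) (fun l => by simp [ee])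
    (Eventually.of_forall fun y => ?_)
  · exact (EuclideanSpace.proj l : E3 →L[ℝ] ℝ).contDiff.contDiffAt.comp x hu
  · ext j; simp [ee, Fin.sum_univ_three]; fin_cases j <;> simp

lemma cmp_int (hM : ContDiff ℝ (⊤ : ℕ∞) M) {n : ℕ} {u : E3 → E3} (hu : ContDiffOn ℝ n u (Omg M))
    (hi : ∀ j ≤ n, IntegrableOn (fun x => ‖iteratedFDeriv ℝ j u x‖ ^ 2) (Omg M)) (l : Fin 3) :
    ∀ j ≤ n, IntegrableOn (fun x => ‖iteratedFDeriv ℝ j (fun y => u y l) x‖ ^ 2) (Omg M) ∧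
      ∫ x in Omg M, ‖iteratedFDeriv ℝ j (fun y => u y l) x‖ ^ 2 ≤
        ∫ x in Omg M, ‖iteratedFDeriv ℝ j u x‖ ^ 2 := by
  have hU := isOpen_Omg hM
  intro j hj
  refine int_dom hU (cont_iter hU hj ?_) (fun x => by positivity) (fun x hx => ?_) (hi j hj)
  · exact contDiffOn_euclidean.1 hu l
  · exact pow_le_pow_left₀ (norm_nonneg _) (norm_cmp_le
      ((hu.contDiffAt (hU.mem_nhds hx)).of_le (by norm_cast)) l) 2

def dat (M : E2 → ℝ) (u : E3 → E3) (p : E3 → ℝ) : Dat := (fun l => tr M (fun y => u y l), tr M p)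

lemma rep_h (hM : ContDiff ℝ (⊤ : ℕ∞) M) {n : ℕ} {u : E3 → E3} {p : E3 → ℝ}
    (hu : ContDiffOn ℝ (n + 1 : ℕ) u (closure (Omg M))) :
    RpS M n (hhF (mm M) (dat M u p)) (vdiv u) :=
  RpS.sum3 (f := fun i => pd i fun y => u y i)
    fun i => (RpS.tr hM (contDiffOn_euclidean.1 hu i)).pd hM i

lemma rep_G (hM : ContDiff ℝ (⊤ : ℕ∞) M) {n : ℕ} {u : E3 → E3} {p : E3 → ℝ} (μ ph : ℝ)
    (hu : ContDiffOn ℝ (n + 2 : ℕ) u (closure (Omg M)))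
    (hp : ContDiffOn ℝ (n + 1 : ℕ) p (closure (Omg M))) (i : Fin 3) :
    RpS M n (GF μ ph (mm M) i (dat M u p))
      (fun y => (-μ • vlap u y + ph • grad p y) i) := by
  have h1 : RpS M n _ (fun x => ∑ j, pd j (pd j fun y => u y i) x) :=
    RpS.sum3 (f := fun j => pd j (pd j fun y => u y i))
      fun j => ((RpS.tr hM (contDiffOn_euclidean.1 hu i)).pd hM j).pd hM j
  have h2 := (RpS.tr hM hp).pd hM i
  have h3 := (h1.smul (-μ)).add (h2.smul ph)
  convert h3 using 1
  · unfold GF dat; rw [neg_smul]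
  · funext y; simp [vlap, grad, vecE3]

lemma RR_le (hM : ContDiff ℝ (⊤ : ℕ∞) M) (hm : Co (mm M)) {ρb μ ph : ℝ} (hρ : 0 < ρb)
    {k : ℕ} (hk : k ≤ 4) :
    ∃ C, 0 ≤ C ∧ ∀ (u : E3 → E3) (p : E3 → ℝ),
        ContDiffOn ℝ (k + 2 : ℕ) u (closure (Omg M)) →
        ContDiffOn ℝ (k + 1 : ℕ) p (closure (Omg M)) →
        (∀ j ≤ k + 2, IntegrableOn (fun x => ‖iteratedFDeriv ℝ j u x‖ ^ 2) (Omg M)) →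
        (∀ j ≤ k + 1, IntegrableOn
          (fun x => ‖iteratedFDeriv ℝ j (fun y => ρb * vdiv u y) x‖ ^ 2) (Omg M)) →
        (∀ j ≤ k, IntegrableOn
          (fun x => ‖iteratedFDeriv ℝ j (fun y => -μ • vlap u y + ph • grad p y) x‖ ^ 2)
          (Omg M)) → RR μ ph (mm M) k (dat M u p) ≤
          C * ((∑ j ∈ Finset.range (k + 2),
              ∫ x in Omg M, ‖iteratedFDeriv ℝ j (fun y => ρb * vdiv u y) x‖ ^ 2) +
            (∑ j ∈ Finset.range (k + 1),
              ∫ x in Omg M, ‖iteratedFDeriv ℝ j (fun y => -μ • vlap u y + ph • grad p y) x‖ ^ 2) +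
            ∫ x in Omg M, ‖iteratedFDeriv ℝ 1 u x‖ ^ 2) := by
  have hU := isOpen_Omg hM
  obtain ⟨C1, hC1, H1⟩ := transfer_up hM hm (show k + 1 ≤ 6 by omega)
  obtain ⟨C2, hC2, H2⟩ := transfer_up hM hm (show k ≤ 6 by omega)
  obtain ⟨C3, hC3, H3⟩ := SS_coef_le (BC.const (m := k + 1) ρb⁻¹)
  choose D hD hDD using fun i => SS_coef_le (hm.bcn i (show 0 ≤ 6 by omega))
  refine ⟨C3 * C1 + 3 * C2 + ∑ l : Fin 3, ∑ a, 2 * (1 + D a), ?_, fun u p hu hp hui hhi hgi => ?_⟩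
  · have : 0 ≤ ∑ l : Fin 3, ∑ a, 2 * (1 + D a) :=
      Finset.sum_nonneg fun l _ => Finset.sum_nonneg fun a _ => by have := hD a; positivity
    positivity
  set W1 := ∑ j ∈ Finset.range (k + 2),
    ∫ x in Omg M, ‖iteratedFDeriv ℝ j (fun y => ρb * vdiv u y) x‖ ^ 2 with hW1
  set W2 := ∑ j ∈ Finset.range (k + 1),
    ∫ x in Omg M, ‖iteratedFDeriv ℝ j (fun y => -μ • vlap u y + ph • grad p y) x‖ ^ 2 with hW2
  set W3 := ∫ x in Omg M, ‖iteratedFDeriv ℝ 1 u x‖ ^ 2 with hW3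
  have p1 : 0 ≤ W1 := Finset.sum_nonneg fun j _ => integral_nonneg fun x => by positivity
  have p2 : 0 ≤ W2 := Finset.sum_nonneg fun j _ => integral_nonneg fun x => by positivity
  have p3 : 0 ≤ W3 := integral_nonneg fun x => by positivity
  have huO := hu.mono subset_closure
  -- divergence
  have b1 : SS (k + 1) (hhF (mm M) (dat M u p)) ≤ C3 * C1 * W1 := by
    obtain ⟨h1, h2⟩ := H1 _ _ ((rep_h (p := p) hM hu).smul ρb) hhi
    have h3 := H3 _ h1
    have e : (fun _ : E3 => ρb⁻¹) * (ρb • hhF (mm M) (dat M u p)) = hhF (mm M) (dat M u p) := by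
      funext y; simp; field_simp
    rw [e] at h3
    have h4 := mul_le_mul_of_nonneg_left h2 hC3
    linarith
  -- force
  have hgc : ContDiffOn ℝ k (fun y => -μ • vlap u y + ph • grad p y) (Omg M) :=
    contDiffOn_euclidean.2 fun i => (rep_G hM μ ph hu hp i).cdOn hM
  have b2 : ∀ i, SS k (GF μ ph (mm M) i (dat M u p)) ≤ C2 * W2 := by
    intro i
    have hc := cmp_int hM hgc hgi i
    refine (H2 _ _ (rep_G hM μ ph hu hp i) fun j hj => (hc j hj).1).2.trans ?_
    refine mul_le_mul_of_nonneg_left (Finset.sum_le_sum fun j hj => (hc j ?_).2) hC2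
    have := Finset.mem_range.1 hj; omega
  -- gradient
  have b3 : ∀ l a, SS 0 (dd a ((dat M u p).1 l)) ≤ 2 * (1 + D a) * W3 := by
    intro l a
    have hr : RpS M (k + 2) (tr M fun y => u y l) (fun y => u y l) :=
      RpS.tr hM (contDiffOn_euclidean.1 hu l)
    have hr1 : RpS M 1 (tr M fun y => u y l) (fun y => u y l) := hr.mono (by omega)
    have hc := cmp_int hM (huO.of_le (m := (1 : ℕ)) (by norm_cast; omega))
      (fun j hj => hui j (by omega)) l
    have hq : ∀ b, HS 0 (DD (mm M) b (tr M fun y => u y l)) ∧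
        SS 0 (DD (mm M) b (tr M fun y => u y l)) ≤ W3 := by
      intro b
      have hrp : RpS M 0 _ _ := hr1.pd hM b
      have hdom : ∀ x ∈ Omg M, pd b (fun y => u y l) x ^ 2 ≤
          ‖iteratedFDeriv ℝ 1 (fun y => u y l) x‖ ^ 2 := by
        intro x hx
        have := norm_pd_le (n := 0) (hr1.cdAt hM hx) b
        rw [norm_iteratedFDeriv_zero, Real.norm_eq_abs] at this
        rw [← sq_abs]
        exact pow_le_pow_left₀ (abs_nonneg _) this 2
      obtain ⟨i1, i2⟩ := int_dom hU
        ((hrp.cdOn hM).continuousOn.pow 2) (fun x => sq_nonneg _) hdom (hc 1 le_rfl).1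
      refine ⟨⟨hrp.cd, hrp.zo, hrp.mem hM i1⟩, ?_⟩
      rw [hrp.SS0 hM]
      exact i2.trans (hc 1 le_rfl).2
    have hcf := HS.coef (hm.bcn a (show 0 ≤ 6 by omega)) (hq 0).1
    change SS 0 (dd a (tr M fun y => u y l)) ≤ _
    rw [dd_eq_DD hm a _]
    refine (SS_add_le (hq a).1 hcf).trans ?_
    have h1 := (hq a).2
    have h2 := hDD a _ (hq 0).1
    have h3 := mul_le_mul_of_nonneg_left (hq 0).2 (hD a)
    linarith
  have b2' := Finset.sum_le_sum fun i (_ : i ∈ Finset.univ) => b2 i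
  have b3' := Finset.sum_le_sum fun l (_ : l ∈ Finset.univ) =>
    Finset.sum_le_sum fun a (_ : a ∈ Finset.univ) => b3 l a
  simp only [← Finset.sum_mul] at b3'
  rw [Finset.sum_const, Finset.card_univ, Fintype.card_fin, nsmul_eq_mul] at b2'
  have hS : 0 ≤ ∑ l : Fin 3, ∑ a, 2 * (1 + D a) :=
    Finset.sum_nonneg fun l _ => Finset.sum_nonneg fun a _ => by have := hD a; positivity
  unfold RR
  refine (add_le_add (add_le_add b1 b2') b3').trans ?_
  generalize (∑ l : Fin 3, ∑ a, 2 * (1 + D a)) = S at hS ⊢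
  have q1 : 0 ≤ C3 * C1 := mul_nonneg hC3 hC1
  push_cast
  nlinarith [mul_nonneg q1 p2, mul_nonneg q1 p3, mul_nonneg hC2 p1, mul_nonneg hC2 p3,
    mul_nonneg hS p1, mul_nonneg hS p2]

lemma transfer_main (hM : ContDiff ℝ (⊤ : ℕ∞) M) (hm : Co (mm M)) {ρb μ ph : ℝ} (hρ : 0 < ρb)
    (hμ : 0 < μ) (hph : 0 < ph) {k : ℕ} (hk : k ≤ 4) :
    ∃ C, 0 < C ∧ ∀ (u : E3 → E3) (p : E3 → ℝ),
        ContDiffOn ℝ (k + 2 : ℕ) u (closure (Omg M)) →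
        ContDiffOn ℝ (k + 1 : ℕ) p (closure (Omg M)) →
        (∀ j ≤ k + 2, IntegrableOn (fun x => ‖iteratedFDeriv ℝ j u x‖ ^ 2) (Omg M)) →
        (∀ j ≤ k + 1, IntegrableOn (fun x => ‖iteratedFDeriv ℝ j p x‖ ^ 2) (Omg M)) →
        (∀ j ≤ k + 1, IntegrableOn
          (fun x => ‖iteratedFDeriv ℝ j (fun y => ρb * vdiv u y) x‖ ^ 2) (Omg M)) →
        (∀ j ≤ k, IntegrableOn
          (fun x => ‖iteratedFDeriv ℝ j (fun y => -μ • vlap u y + ph • grad p y) x‖ ^ 2)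
          (Omg M)) → (∀ x' : E2, u (gph M x') = 0) →
        (∫ x in Omg M, ‖iteratedFDeriv ℝ (k + 2) u x‖ ^ 2) +
            (∫ x in Omg M, ‖iteratedFDeriv ℝ (k + 1) p x‖ ^ 2) ≤
          C * ((∑ j ∈ Finset.range (k + 2),
              ∫ x in Omg M, ‖iteratedFDeriv ℝ j (fun y => ρb * vdiv u y) x‖ ^ 2) +
            (∑ j ∈ Finset.range (k + 1),
              ∫ x in Omg M, ‖iteratedFDeriv ℝ j (fun y => -μ • vlap u y + ph • grad p y) x‖ ^ 2) +
            ∫ x in Omg M, ‖iteratedFDeriv ℝ 1 u x‖ ^ 2) := by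
  have hU := isOpen_Omg hM
  obtain ⟨C0, hC0, H0⟩ := RR_le (μ := μ) (ph := ph) hM hm hρ hk
  obtain ⟨_, _, U1⟩ := transfer_up hM hm (show k + 2 ≤ 6 by omega)
  obtain ⟨_, _, U2⟩ := transfer_up hM hm (show k + 1 ≤ 6 by omega)
  obtain ⟨C1, hC1, L1⟩ := transfer_down hM hm (show k + 1 ≤ 6 by omega)
  obtain ⟨C2, hC2, L2⟩ := transfer_down hM hm (show k ≤ 6 by omega)
  obtain ⟨m1, m2⟩ := main_all (μ := μ) (ph := ph) hm hμ hph hk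
  have n1 : ∀ l i, BD (PP k) (RR μ ph (mm M) k) (k + 1) (fun d => DD (mm M) i (d.1 l)) :=
    fun l i => (m1 l i).sub ((m1 l 0).coef (hm.bcn i (by omega)))
  have n2 : ∀ i, BD (PP k) (RR μ ph (mm M) k) k (fun d => DD (mm M) i d.2) :=
    fun i => (m2 i).sub ((m2 0).coef (hm.bcn i (by omega)))
  choose D1 hD1 N1 using n1
  choose D2 hD2 N2 using n2
  have q1 : 0 ≤ ∑ l, ∑ i, C1 * D1 l i :=
    Finset.sum_nonneg fun l _ => Finset.sum_nonneg fun i _ => mul_nonneg hC1 (hD1 l i)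
  have q2 : 0 ≤ ∑ i, C2 * D2 i := Finset.sum_nonneg fun i _ => mul_nonneg hC2 (hD2 i)
  refine ⟨(9 * (∑ l, ∑ i, C1 * D1 l i) + 3 * ∑ i, C2 * D2 i) * C0 + 1, by positivity,
    fun u p hu hp hui hpi hhi hgi hb => ?_⟩
  have hR := H0 u p hu hp hui hhi hgi
  set W := (∑ j ∈ Finset.range (k + 2),
              ∫ x in Omg M, ‖iteratedFDeriv ℝ j (fun y => ρb * vdiv u y) x‖ ^ 2) +
            (∑ j ∈ Finset.range (k + 1),
              ∫ x in Omg M, ‖iteratedFDeriv ℝ j (fun y => -μ • vlap u y + ph • grad p y) x‖ ^ 2) +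
            ∫ x in Omg M, ‖iteratedFDeriv ℝ 1 u x‖ ^ 2 with hW
  have hW0 : 0 ≤ W := add_nonneg (add_nonneg
    (Finset.sum_nonneg fun j _ => integral_nonneg fun x => by positivity)
    (Finset.sum_nonneg fun j _ => integral_nonneg fun x => by positivity))
    (integral_nonneg fun x => by positivity)
  have huO := hu.mono subset_closure
  have hru : ∀ l, RpS M (k + 2) (tr M fun y => u y l) (fun y => u y l) := fun l =>
    RpS.tr hM (contDiffOn_euclidean.1 hu l)
  have hrp : RpS M (k + 1) (tr M p) p := RpS.tr hM hp
  have hP : PP k (dat M u p) := by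
    refine ⟨fun l => (U1 _ _ (hru l) fun j hj => (cmp_int hM huO hui l j hj).1).1,
      (U2 _ _ hrp hpi).1, fun l y hy => ?_⟩
    have : y ∈ Hc := by change 0 ≤ y 0; rw [hy]
    simp [dat, tr, this, Fl_bdry hy, hb]
  have e1 : ∀ l, ∀ i, IntegrableOn (fun x => ‖iteratedFDeriv ℝ (k + 1) (pd i fun y => u y l) x‖ ^ 2) (Omg M) ∧
      ∫ x in Omg M, ‖iteratedFDeriv ℝ (k + 1) (pd i fun y => u y l) x‖ ^ 2 ≤
        C1 * D1 l i * RR μ ph (mm M) k (dat M u p) := by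
    intro l i
    obtain ⟨a1, a2⟩ := N1 l i _ hP
    obtain ⟨a3, a4⟩ := L1 _ _ ((hru l).pd hM i) a1
    refine ⟨a3, a4.trans ?_⟩
    rw [mul_assoc]; exact mul_le_mul_of_nonneg_left a2 hC1
  have e2 : ∀ i, IntegrableOn (fun x => ‖iteratedFDeriv ℝ k (pd i p) x‖ ^ 2) (Omg M) ∧
      ∫ x in Omg M, ‖iteratedFDeriv ℝ k (pd i p) x‖ ^ 2 ≤
        C2 * D2 i * RR μ ph (mm M) k (dat M u p) := by
    intro i
    obtain ⟨a1, a2⟩ := N2 i _ hP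
    obtain ⟨a3, a4⟩ := L2 _ _ (hrp.pd hM i) a1
    refine ⟨a3, a4.trans ?_⟩
    rw [mul_assoc]; exact mul_le_mul_of_nonneg_left a2 hC2
  have g1 : ∫ x in Omg M, ‖iteratedFDeriv ℝ (k + 2) u x‖ ^ 2 ≤
      9 * (∑ l, ∑ i, C1 * D1 l i) * RR μ ph (mm M) k (dat M u p) := by
    have hIntg : ∀ l, IntegrableOn (fun x => ∑ i, ‖iteratedFDeriv ℝ (k + 1) (pd i fun y => u y l) x‖ ^ 2) (Omg M) :=
      fun l => integrable_finsetSum _ fun i _ => (e1 l i).1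
    have h1 := (int_dom (ψ := fun x => 9 * ∑ l, ∑ i, ‖iteratedFDeriv ℝ (k + 1) (pd i fun y => u y l) x‖ ^ 2)
      hU (cont_iter hU le_rfl huO) (fun x => by positivity) (fun x hx => ?_)
      ((integrable_finsetSum _ fun l _ => hIntg l).const_mul 9)).2
    · refine h1.trans ?_
      rw [integral_const_mul, integral_finsetSum _ fun l _ => hIntg l, mul_assoc, Finset.sum_mul]
      refine mul_le_mul_of_nonneg_left (Finset.sum_le_sum fun l _ => ?_) (by norm_num)
      rw [integral_finsetSum _ fun i _ => (e1 l i).1, Finset.sum_mul]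
      exact Finset.sum_le_sum fun i _ => (e1 l i).2
    · have h2 := norm_vec_le (huO.contDiffAt (hU.mem_nhds hx))
      have h3 := Finset.sum_le_sum fun l (_ : l ∈ Finset.univ) =>
        norm_succ_le (n := k + 1) ((hru l).cdAt hM hx)
      rw [← Finset.mul_sum] at h3
      change _ ≤ 9 * _
      linarith
  have g2 : ∫ x in Omg M, ‖iteratedFDeriv ℝ (k + 1) p x‖ ^ 2 ≤
      3 * (∑ i, C2 * D2 i) * RR μ ph (mm M) k (dat M u p) := by
    have h1 := (int_dom (ψ := fun x => 3 * ∑ i, ‖iteratedFDeriv ℝ k (pd i p) x‖ ^ 2)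
      hU (cont_iter hU le_rfl (hrp.cdOn hM)) (fun x => by positivity)
      (fun x hx => norm_succ_le (hrp.cdAt hM hx))
      ((integrable_finsetSum _ fun i _ => (e2 i).1).const_mul 3)).2
    refine h1.trans ?_
    rw [integral_const_mul, mul_assoc, Finset.sum_mul, integral_finsetSum _ fun i _ => (e2 i).1]
    exact mul_le_mul_of_nonneg_left (Finset.sum_le_sum fun i _ => (e2 i).2) (by norm_num)
  have q3 : 0 ≤ 9 * (∑ l, ∑ i, C1 * D1 l i) + 3 * ∑ i, C2 * D2 i := by positivity
  have g3 := mul_le_mul_of_nonneg_left hR q3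
  nlinarith

end

section

lemma sob1 {f f' : ℝ → ℝ} (hf : ∀ x, HasDerivAt f (f' x) x) (hc : Continuous f') (x : ℝ) :
    f x ^ 2 ≤ 2 * ∫ t in x..(x + 1), (f t ^ 2 + f' t ^ 2) := by
  have hcf : Continuous f := continuous_iff_continuousAt.2 fun x => (hf x).continuousAt
  have hQ : Continuous fun t => f t ^ 2 + f' t ^ 2 := by fun_prop
  set J := ∫ t in x..(x + 1), (f t ^ 2 + f' t ^ 2) with hJ
  have key : ∀ t ∈ Icc x (x + 1), f x ^ 2 ≤ f t ^ 2 + J := by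
    intro t ht
    have h1 : ∫ s in x..t, (2 * f s * f' s) = f t ^ 2 - f x ^ 2 := by
      refine intervalIntegral.integral_eq_sub_of_hasDerivAt (f := fun s => f s ^ 2) (fun s _ => ?_) ?_
      · exact ((hf s).pow 2).congr_deriv (by simp)
      · exact (by fun_prop : Continuous fun s => 2 * f s * f' s).intervalIntegrable _ _
    have h2 : ∫ s in x..t, -(f s ^ 2 + f' s ^ 2) ≤ ∫ s in x..t, (2 * f s * f' s) := by
      refine intervalIntegral.integral_mono_on ht.1 (hQ.neg.intervalIntegrable _ _)
        ((by fun_prop : Continuous fun s => 2 * f s * f' s).intervalIntegrable _ _) fun s _ => ?_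
      nlinarith [sq_nonneg (f s + f' s)]
    have h3 : ∫ s in x..t, (f s ^ 2 + f' s ^ 2) ≤ J := by
      rw [hJ]
      exact intervalIntegral.integral_mono_interval le_rfl ht.1 ht.2
        (Eventually.of_forall fun s => by positivity) (hQ.intervalIntegrable _ _)
    rw [intervalIntegral.integral_neg] at h2
    linarith
  have h4 : ∫ t in x..(x + 1), f x ^ 2 ≤ ∫ t in x..(x + 1), (f t ^ 2 + J) := by
    refine intervalIntegral.integral_mono_on (by linarith) (by simp)
      ((by fun_prop : Continuous fun s => f s ^ 2 + J).intervalIntegrable _ _) key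
  have h5 : ∫ t in x..(x + 1), (f t ^ 2 + J) ≤ ∫ t in x..(x + 1), ((f t ^ 2 + f' t ^ 2) + J) := by
    refine intervalIntegral.integral_mono_on (by linarith)
      ((by fun_prop : Continuous fun s => f s ^ 2 + J).intervalIntegrable _ _)
      ((by fun_prop : Continuous fun s => (f s ^ 2 + f' s ^ 2) + J).intervalIntegrable _ _)
      fun t _ => ?_
    nlinarith [sq_nonneg (f' t)]
  rw [intervalIntegral.integral_add (hQ.intervalIntegrable _ _) (by simp)] at h5
  simp at h4 h5
  linarith

def zz (s t : ℝ) : E2 := s • EuclideanSpace.single 0 1 + t • EuclideanSpace.single 1 1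

lemma zz_cont : Continuous fun q : ℝ × ℝ => zz q.1 q.2 := by unfold zz; fun_prop

lemma zz_eq (y : E2) : zz (y 0) (y 1) = y := by
  ext i; fin_cases i <;> simp [zz]

lemma zz_mp : MeasurePreserving (fun q : ℝ × ℝ => zz q.1 q.2) volume volume := by
  have e1 := (EuclideanSpace.volume_preserving_symm_measurableEquiv_toLp (Fin 2)).symm
  have e2 := (volume_preserving_finTwoArrow ℝ).symm
  have := e1.comp e2
  have h : (fun q : ℝ × ℝ => zz q.1 q.2) = (fun q => (MeasurableEquiv.toLp 2 (Fin 2 → ℝ)).symm.symm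
      (MeasurableEquiv.finTwoArrow.symm q)) := by
    funext q; ext i
    fin_cases i <;> simp [zz, MeasurableEquiv.finTwoArrow]
  rw [h]; exact this

def dq (v : E2) (N : E2 → ℝ) (x : E2) : ℝ := fderiv ℝ N x v

lemma dq_smooth {N : E2 → ℝ} (hN : ContDiff ℝ (⊤ : ℕ∞) N) (v : E2) :
    ContDiff ℝ (⊤ : ℕ∞) (dq v N) :=
  (hN.fderiv_right (m := (⊤ : ℕ∞)) (by norm_cast)).clm_apply contDiff_const

lemma dq_norm {N : E2 → ℝ} (hN : ContDiff ℝ (⊤ : ℕ∞) N) (v : E2) (j : ℕ) (x : E2) :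
    ‖iteratedFDeriv ℝ j (dq v N) x‖ ≤ ‖v‖ * ‖iteratedFDeriv ℝ (j + 1) N x‖ := by
  have h1 : ContDiff ℝ (⊤ : ℕ∞) (fderiv ℝ N) := hN.fderiv_right (by norm_cast)
  have h2 := (ContinuousLinearMap.apply ℝ ℝ v).norm_iteratedFDeriv_comp_left (n := j)
    (h1.contDiffAt (x := x)) (by norm_cast; exact le_top)
  rw [norm_iteratedFDeriv_fderiv] at h2
  have h3 : ‖(ContinuousLinearMap.apply ℝ ℝ v : (E2 →L[ℝ] ℝ) →L[ℝ] ℝ)‖ ≤ ‖v‖ := by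
    refine ContinuousLinearMap.opNorm_le_bound _ (norm_nonneg _) fun L => ?_
    rw [mul_comm]
    exact L.le_opNorm v
  exact h2.trans (mul_le_mul_of_nonneg_right h3 (norm_nonneg _))

lemma dq_int {N : E2 → ℝ} (hN : ContDiff ℝ (⊤ : ℕ∞) N) (v : E2) {n : ℕ}
    (hi : ∀ j ≤ n + 1, Integrable fun x : E2 => ‖iteratedFDeriv ℝ j N x‖ ^ 2) :
    ∀ j ≤ n, Integrable fun x : E2 => ‖iteratedFDeriv ℝ j (dq v N) x‖ ^ 2 := by
  intro j hj
  refine Integrable.mono' ((hi (j + 1) (by omega)).const_mul (‖v‖ ^ 2)) ?_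
    (Eventually.of_forall fun x => ?_)
  · exact (((dq_smooth hN v).continuous_iteratedFDeriv (m := j)
      (by norm_cast; exact le_top)).norm.pow 2).aestronglyMeasurable
  · rw [Real.norm_of_nonneg (by positivity), ← mul_pow]
    exact pow_le_pow_left₀ (norm_nonneg _) (dq_norm hN v j x) 2

lemma zz_der {N : E2 → ℝ} (hN : ContDiff ℝ (⊤ : ℕ∞) N) (s t : ℝ) :
    HasDerivAt (fun s => N (zz s t)) (dq (EuclideanSpace.single 0 1) N (zz s t)) s ∧
    HasDerivAt (fun t => N (zz s t)) (dq (EuclideanSpace.single 1 1) N (zz s t)) t := by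
  have h : HasFDerivAt N (fderiv ℝ N (zz s t)) (zz s t) :=
    (hN.differentiable (by norm_num) _).hasFDerivAt
  constructor
  · have h1 : HasDerivAt (fun s => zz s t) (EuclideanSpace.single 0 1) s := by
      have := ((hasDerivAt_id s).smul_const (EuclideanSpace.single (0 : Fin 2) (1:ℝ))).add_const
        (t • EuclideanSpace.single (1 : Fin 2) (1:ℝ))
      simpa [zz] using this
    exact h.comp_hasDerivAt s h1
  · have h1 : HasDerivAt (fun t => zz s t) (EuclideanSpace.single 1 1) t := by
      have := ((hasDerivAt_id t).smul_const (EuclideanSpace.single (1 : Fin 2) (1:ℝ))).const_add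
        (s • EuclideanSpace.single (0 : Fin 2) (1:ℝ))
      simpa [zz] using this
    exact h.comp_hasDerivAt t h1

lemma sob2 {N : E2 → ℝ} (hN : ContDiff ℝ (⊤ : ℕ∞) N)
    (hi : ∀ j ≤ 2, Integrable fun x : E2 => ‖iteratedFDeriv ℝ j N x‖ ^ 2) :
    ∃ K, ∀ x, |N x| ≤ K := by
  let v0 : E2 := EuclideanSpace.single 0 1
  let v1 : E2 := EuclideanSpace.single 1 1
  let Q : E2 → ℝ := fun x => (N x ^ 2 + dq v1 N x ^ 2) + (dq v0 N x ^ 2 + dq v1 (dq v0 N) x ^ 2)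
  have c0 := hN.continuous
  have c1 := (dq_smooth hN v1).continuous
  have c2 := (dq_smooth hN v0).continuous
  have c3 := (dq_smooth (dq_smooth hN v0) v1).continuous
  have hz (s : ℝ) : Continuous fun t => zz s t := zz_cont.comp (by fun_prop : Continuous fun t : ℝ => (s, t))
  have hz' (t : ℝ) : Continuous fun s => zz s t := zz_cont.comp (by fun_prop : Continuous fun s : ℝ => (s, t))
  have hQc : Continuous Q := by fun_prop
  have z0 : ∀ g : E2 → ℝ, (∀ j ≤ 0, Integrable fun x : E2 => ‖iteratedFDeriv ℝ j g x‖ ^ 2) →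
      Integrable fun x => g x ^ 2 := by
    intro g hg
    simpa only [norm_iteratedFDeriv_zero, Real.norm_eq_abs, sq_abs] using hg 0 le_rfl
  have hQi : Integrable Q := by
    refine Integrable.add (Integrable.add (z0 _ fun j hj => hi j (by omega)) (z0 _ ?_))
      (Integrable.add (z0 _ ?_) (z0 _ ?_))
    · exact dq_int hN v1 fun j hj => hi j (by omega)
    · exact dq_int hN v0 fun j hj => hi j (by omega)
    · exact dq_int (dq_smooth hN v0) v1 (dq_int hN v0 fun j hj => hi j (by omega))
  have hQ0 : ∀ x, 0 ≤ Q x := fun x => by positivity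
  have main : ∀ a b, N (zz a b) ^ 2 ≤ 4 * ∫ x, Q x := by
    intro a b
    have h1 := sob1 (fun s => (zz_der hN s b).1) (c2.comp (hz' b)) a
    have h2 : ∀ s, N (zz s b) ^ 2 + dq v0 N (zz s b) ^ 2 ≤ 2 * ∫ t in b..(b + 1), Q (zz s t) := by
      intro s
      have g1 := sob1 (fun t => (zz_der hN s t).2) (c1.comp (hz s)) b
      have g2 := sob1 (fun t => (zz_der (dq_smooth hN v0) s t).2) (c3.comp (hz s)) b
      rw [intervalIntegral.integral_add]
      · linarith
      · exact (((c0.comp (hz s)).pow 2).add ((c1.comp (hz s)).pow 2)).intervalIntegrable _ _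
      · exact (((c2.comp (hz s)).pow 2).add ((c3.comp (hz s)).pow 2)).intervalIntegrable _ _
    have hQ2 : Continuous (Function.uncurry fun s t => Q (zz s t)) := hQc.comp zz_cont
    have hQI : Continuous fun s => ∫ t in b..(b + 1), Q (zz s t) :=
      intervalIntegral.continuous_parametric_intervalIntegral_of_continuous' hQ2 _ _
    have h3 : ∫ s in a..(a + 1), (N (zz s b) ^ 2 + dq v0 N (zz s b) ^ 2) ≤
        ∫ s in a..(a + 1), 2 * ∫ t in b..(b + 1), Q (zz s t) := by
      refine intervalIntegral.integral_mono_on (by linarith) ?_ ?_ fun s _ => h2 s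
      · exact (((c0.comp (hz' b)).pow 2).add ((c2.comp (hz' b)).pow 2)).intervalIntegrable _ _
      · exact (continuous_const.mul hQI).intervalIntegrable _ _
    rw [intervalIntegral.integral_const_mul] at h3
    have hQi2 : Integrable (fun q : ℝ × ℝ => Q (zz q.1 q.2)) :=
      zz_mp.integrable_comp_of_integrable hQi
    have h4 : ∫ s in a..(a + 1), ∫ t in b..(b + 1), Q (zz s t) ≤ ∫ x, Q x := by
      rw [intervalIntegral.integral_of_le (by linarith)]
      simp only [intervalIntegral.integral_of_le (show b ≤ b + 1 by linarith)]
      have := setIntegral_prod (μ := (volume : Measure ℝ)) (ν := (volume : Measure ℝ))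
        (s := Ioc a (a + 1)) (t := Ioc b (b + 1)) (fun q : ℝ × ℝ => Q (zz q.1 q.2)) hQi2.integrableOn
      rw [← this]
      refine (setIntegral_le_integral hQi2 (Eventually.of_forall fun q => hQ0 _)).trans ?_
      have e := integral_map (μ := (volume : Measure (ℝ × ℝ))) zz_mp.measurable.aemeasurable
        (f := Q) hQc.aestronglyMeasurable
      rw [zz_mp.map_eq] at e
      rw [e]
    linarith
  refine ⟨4 * (∫ x, Q x) + 1, fun x => ?_⟩
  have := main (x 0) (x 1)
  rw [zz_eq] at this
  rw [← sq_abs] at this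
  nlinarith [sq_nonneg (|N x| - 1), abs_nonneg (N x)]

lemma pd_pL {N : E2 → ℝ} (hN : ContDiff ℝ (⊤ : ℕ∞) N) (i : Fin 3) :
    pd i (N ∘ pL) = dq (pL (ee i)) N ∘ pL := by
  funext y
  rw [pd_def, fderiv_comp y (hN.differentiable (by norm_num) _) pL.differentiableAt]
  simp [dq]

lemma Bd_of {n : ℕ} : ∀ {N : E2 → ℝ}, ContDiff ℝ (⊤ : ℕ∞) N →
    (∀ j ≤ n + 2, Integrable fun x : E2 => ‖iteratedFDeriv ℝ j N x‖ ^ 2) → Bd n (N ∘ pL) := by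
  induction n with
  | zero =>
    intro N hN hi
    obtain ⟨K, hK⟩ := sob2 hN fun j hj => hi j (by omega)
    exact ⟨K, fun y => hK _⟩
  | succ n ih =>
    intro N hN hi
    obtain ⟨K, hK⟩ := sob2 hN fun j hj => hi j (by omega)
    refine ⟨⟨K, fun y => hK _⟩, fun i => ?_⟩
    rw [pd_pL hN]
    exact ih (dq_smooth hN _) (dq_int hN _ fun j hj => hi j (by omega))

lemma Co_mm {M : E2 → ℝ} (hM : ContDiff ℝ (⊤ : ℕ∞) M)
    (hi : ∀ j ≤ 9, Integrable fun x : E2 => ‖iteratedFDeriv ℝ j M x‖ ^ 2) : Co (mm M) := by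
  refine ⟨mm_zero hM, fun i => ⟨smooth_pd (PM_smooth hM) i, ?_⟩, mm_ind hM⟩
  have : PM M = M ∘ pL := by funext y; simp [PM, proj2_eq]
  unfold mm
  rw [this, pd_pL hM]
  exact Bd_of (dq_smooth hM _) (dq_int hM _ fun j hj => hi j (by omega))

end

theorem cattabriga_estimate (M : E2 → ℝ) (hM : ContDiff ℝ (⊤ : ℕ∞) M)
    (hMint : ∀ j ≤ 9, Integrable fun x' : E2 => ‖iteratedFDeriv ℝ j M x'‖ ^ 2)
    (ρb μh ph : ℝ) (hρb : 0 < ρb) (hμh : 0 < μh) (hph : 0 < ph)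
    (k : ℕ) (hk : k ≤ 4) :
    ∃ C₀ : ℝ, 0 < C₀ ∧
      ∀ (u : E3 → E3) (p : E3 → ℝ),
        ContDiffOn ℝ (k + 2) u (closure (Omg M)) →
        ContDiffOn ℝ (k + 1) p (closure (Omg M)) →
        (∀ j ≤ k + 2, IntegrableOn (fun x => ‖iteratedFDeriv ℝ j u x‖ ^ 2) (Omg M)) →
        (∀ j ≤ k + 1, IntegrableOn (fun x => ‖iteratedFDeriv ℝ j p x‖ ^ 2) (Omg M)) →
        (∀ j ≤ k + 1, IntegrableOn
          (fun x => ‖iteratedFDeriv ℝ j (fun y => ρb * vdiv u y) x‖ ^ 2) (Omg M)) →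
        (∀ j ≤ k, IntegrableOn
          (fun x => ‖iteratedFDeriv ℝ j (fun y => -μh • vlap u y + ph • grad p y) x‖ ^ 2)
          (Omg M)) →
        (∀ x' : E2, u (gph M x') = 0) →
        Filter.Tendsto u (Bornology.cobounded E3 ⊓ Filter.principal (closure (Omg M))) (nhds 0) →
        (∫ x in Omg M, ‖iteratedFDeriv ℝ (k + 2) u x‖ ^ 2) +
            (∫ x in Omg M, ‖iteratedFDeriv ℝ (k + 1) p x‖ ^ 2) ≤
          C₀ * ((∑ j ∈ Finset.range (k + 2),
              ∫ x in Omg M, ‖iteratedFDeriv ℝ j (fun y => ρb * vdiv u y) x‖ ^ 2) +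
            (∑ j ∈ Finset.range (k + 1),
              ∫ x in Omg M, ‖iteratedFDeriv ℝ j (fun y => -μh • vlap u y + ph • grad p y) x‖ ^ 2) +
            ∫ x in Omg M, ‖iteratedFDeriv ℝ 1 u x‖ ^ 2) := by
  obtain ⟨C, hC, h⟩ := transfer_main (ρb := ρb) (μ := μh) (ph := ph) hM (Co_mm hM hMint)
    hρb hμh hph hk
  refine ⟨C, hC, fun u p hu hp hui hpi hhi hgi hb _ => ?_⟩
  exact h u p (by exact_mod_cast hu) (by exact_mod_cast hp) hui hpi hhi hgi hb
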